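/- There exists a constant C > 0 such that for every prime q, all integers h, k with 1 ≤ h, k < q and gcd(h,k) = 1 and q ≥ 4hk, and each choice of sign ±, one has |M_±(h,k;q) − (1/2)·(q/(hk))^{1/2}·(log(q/(hk)) + γ − log(8π) ∓ π/2)| ≤ C·(h+k)^{1/2}·log q. -/

import Mathlib

open Complex Real Finset

open scoped Classical in
/-- `M_±(h,k;q)`: the doubly twisted second moment over primitive (= nontrivial, for
prime `q`) characters mod `q` of parity `χ(-1) = ε`. -/
noncomputable def Mpm (ε : ℤ) (h k : ℤ) (q : ℕ) [NeZero q] : ℂ :=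
  (Real.sqrt q / (Nat.totient q : ℝ)) *
    ∑ χ : DirichletCharacter ℂ q, if χ ≠ 1 ∧ χ (-1 : ZMod q) = (ε : ℂ) then
      (‖χ.LFunction (1/2)‖^2 : ℂ) * χ (h : ZMod q) * (starRingEnd ℂ) (χ (k : ZMod q))
    else 0

/-! Writing `L(1/2, χ) = q^{-1/2} ∑_{0 < n < q} χ(n) ζ(1/2, n/q)` with the Hurwitz zeta function
and using orthogonality of characters, `M_±(h, k; q)` becomes, up to `O(1)` from the trivial
character, `(2 √q)⁻¹` times `T₊ ± T₋`, where `T_±` is the sum over `n` of the product of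
`ζ(1/2, {± hn/q})` and `ζ(1/2, {kn/q})`.

These are Riemann sums for the product of the `1`-periodic functions `ζ(1/2, {± hx})` and
`ζ(1/2, {kx})`, which is built from functions monotone between consecutive fractions `a/h`, `b/k`
with inverse square root singularities at those fractions.  As `q ≥ 4hk`, distinct fractions are
several grid steps `1/q` apart, and the error is `O(√(q (h + k)) log q)`.

The distribution relation `∑_{j < k} ζ(1/2, (x + j)/k) = √k ζ(1/2, x)` reduces the integrals to
`h = k = 1`.  For opposite signs this is `∫₀¹ ζ(1/2, x) ζ(1/2, 1 - x) dx = -π/2`, a convolution of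
inverse square roots.  For equal signs the integrand has the non-integrable pole `(√(hk) x)⁻¹` at
`0`, whose Riemann sum is harmonic and yields the logarithm and `γ`; what remains is
`∫₀¹ (ζ(1/2, x)² - 1/x) dx = -log (8π)`, by Stirling's formula. -/

namespace TwistedMoment

open Filter Topology MeasureTheory intervalIntegral

section ZetaHalf

/-- The function `x ↦ x^{-1/2}` on the reals, extended by `0` to `x ≤ 0`. -/
noncomputable def invSqrt (x : ℝ) : ℝ := 1 / √x

lemma measurable_invSqrt : Measurable invSqrt := by unfold invSqrt; fun_prop

lemma invSqrt_nonneg (x : ℝ) : 0 ≤ invSqrt x := by unfold invSqrt; positivity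

lemma invSqrt_pos {x : ℝ} (hx : 0 < x) : 0 < invSqrt x := by unfold invSqrt; positivity

lemma invSqrt_one : invSqrt 1 = 1 := by simp [invSqrt]

lemma invSqrt_le_invSqrt {x y : ℝ} (hx : 0 < x) (hxy : x ≤ y) : invSqrt y ≤ invSqrt x := by
  unfold invSqrt
  gcongr

lemma one_le_invSqrt {x : ℝ} (hx : 0 < x) (hx1 : x ≤ 1) : 1 ≤ invSqrt x :=
  invSqrt_one.symm.trans_le (invSqrt_le_invSqrt hx hx1)

lemma tendsto_invSqrt_add_natCast (x : ℝ) :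
    Tendsto (fun n : ℕ => invSqrt (x + n)) atTop (𝓝 0) := by
  simp only [invSqrt, one_div]
  exact (Real.tendsto_sqrt_atTop.comp
    (tendsto_atTop_add_const_left _ _ tendsto_natCast_atTop_atTop)).inv_tendsto_atTop

/-- The error of the trapezoidal rule for `∫ t^{-1/2} dt` over `[y, y + 1]`. -/
noncomputable def trapezoidError (y : ℝ) : ℝ :=
  (invSqrt y + invSqrt (y + 1)) / 2 - 2 * (√(y + 1) - √y)

/-- The Hurwitz zeta value `ζ(1/2, x)` for `x > 0`, given by its Euler–Maclaurin expansion to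
second order. -/
noncomputable def zetaHalf (x : ℝ) : ℝ :=
  -2 * √x + invSqrt x / 2 + ∑' m : ℕ, trapezoidError (x + m)

lemma sqrt_add_one_sq {y : ℝ} (hy : 0 ≤ y) : √(y + 1) ^ 2 = √y ^ 2 + 1 := by
  rw [Real.sq_sqrt (by linarith), Real.sq_sqrt hy]

lemma invSqrt_sub_invSqrt_add_one {y : ℝ} (hy : 0 < y) :
    invSqrt y - invSqrt (y + 1) = 1 / (√y * √(y + 1) * (√y + √(y + 1))) := by
  have hsq := sqrt_add_one_sq hy.le
  have : 0 < √y := by positivity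
  have : 0 < √(y + 1) := by positivity
  unfold invSqrt
  field_simp
  linear_combination hsq

lemma trapezoidError_eq {y : ℝ} (hy : 0 < y) :
    trapezoidError y = 1 / (2 * √y * √(y + 1) * (√y + √(y + 1)) ^ 3) := by
  have hsq := sqrt_add_one_sq hy.le
  have : 0 < √y := by positivity
  have : 0 < √(y + 1) := by positivity
  have hsub : √(y + 1) - √y = 1 / (√y + √(y + 1)) := by
    field_simp
    linear_combination hsq
  have hfactor : trapezoidError y =
      (√(y + 1) - √y) ^ 2 / (2 * √y * √(y + 1) * (√y + √(y + 1))) := by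
    have htwo : 2 * (√(y + 1) - √y) = 2 / (√y + √(y + 1)) := by rw [hsub]; ring
    unfold trapezoidError invSqrt
    rw [htwo]
    field_simp
    ring
  rw [hfactor, hsub]
  field_simp

lemma trapezoidError_nonneg {y : ℝ} (hy : 0 < y) : 0 ≤ trapezoidError y := by
  rw [trapezoidError_eq hy]
  positivity

lemma trapezoidError_le {y : ℝ} (hy : 0 < y) :
    trapezoidError y ≤
      (invSqrt y - invSqrt (y + 1)) - (invSqrt (y + 1) - invSqrt (y + 1 + 1)) := by
  have hab := sqrt_add_one_sq hy.le
  have hbc := sqrt_add_one_sq (y := y + 1) (by linarith)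
  rw [trapezoidError_eq hy, invSqrt_sub_invSqrt_add_one hy,
    invSqrt_sub_invSqrt_add_one (by linarith : 0 < y + 1)]
  have ha : 0 < √y := by positivity
  have hab' : √y ≤ √(y + 1) := by gcongr; linarith
  have hbc' : √(y + 1) ≤ √(y + 1 + 1) := by gcongr; linarith
  set a := √y
  set b := √(y + 1)
  set c := √(y + 1 + 1)
  have hb : 0 < b := by linarith
  have hc : 0 < c := by linarith
  have hdiff : 1 / (a * b * (a + b)) - 1 / (b * c * (b + c)) =
      (c * (b + c) - a * (a + b)) / (a * b * c * (a + b) * (b + c)) := by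
    field_simp
  have hnum : 2 / (a * b * c * (a + b) * (b + c)) ≤
      (c * (b + c) - a * (a + b)) / (a * b * c * (a + b) * (b + c)) := by
    gcongr
    nlinarith
  have hden : c * (b + c) ≤ 4 * (a + b) ^ 2 := by nlinarith
  rw [hdiff]
  refine le_trans ?_ hnum
  rw [div_le_div_iff₀ (by positivity) (by positivity)]
  nlinarith [mul_le_mul_of_nonneg_left hden (by positivity : 0 ≤ a * b * (a + b))]

lemma sum_trapezoidError_le {x : ℝ} (hx : 0 < x) (n : ℕ) :
    ∑ m ∈ range n, trapezoidError (x + m) ≤ invSqrt x - invSqrt (x + 1) := by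
  have htelescope : ∑ m ∈ range n, trapezoidError (x + m) ≤
      (invSqrt x - invSqrt (x + 1)) - (invSqrt (x + n) - invSqrt (x + n + 1)) := by
    induction n with
    | zero => simp
    | succ n ih =>
      have hn := trapezoidError_le (y := x + n) (by positivity)
      rw [sum_range_succ]
      push_cast
      rw [← add_assoc]
      linarith
  have hlast := invSqrt_le_invSqrt (x := x + n) (by positivity) (le_add_of_nonneg_right zero_le_one)
  linarith

lemma summable_trapezoidError (x : ℝ) : Summable fun m : ℕ => trapezoidError (x + m) := by
  obtain ⟨N, hN⟩ := exists_nat_gt (-x)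
  have hpos : 0 < x + N := by linarith
  have hshift : Summable fun m : ℕ => trapezoidError (x + N + m) :=
    summable_of_sum_range_le (fun m => trapezoidError_nonneg (by positivity))
      (sum_trapezoidError_le hpos)
  rw [← summable_nat_add_iff N]
  refine hshift.congr fun m => ?_
  push_cast
  ring_nf

lemma tsum_trapezoidError_nonneg {x : ℝ} (hx : 0 < x) :
    0 ≤ ∑' m : ℕ, trapezoidError (x + m) :=
  tsum_nonneg fun m => trapezoidError_nonneg (by positivity)

lemma tsum_trapezoidError_le {x : ℝ} (hx : 0 < x) :
    ∑' m : ℕ, trapezoidError (x + m) ≤ invSqrt x - invSqrt (x + 1) :=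
  (summable_trapezoidError x).tsum_le_of_sum_range_le (sum_trapezoidError_le hx)

lemma measurable_tsum_trapezoidError :
    Measurable fun x : ℝ => ∑' m : ℕ, trapezoidError (x + m) := by
  have hmeas : Measurable trapezoidError := by
    unfold trapezoidError
    have := measurable_invSqrt
    fun_prop
  refine measurable_of_tendsto_metrizable
    (f := fun (n : ℕ) (x : ℝ) => ∑ m ∈ range n, trapezoidError (x + m)) (by fun_prop) ?_
  exact tendsto_pi_nhds.2 fun x => (summable_trapezoidError x).hasSum.tendsto_sum_nat

lemma measurable_zetaHalf : Measurable zetaHalf := by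
  have := measurable_tsum_trapezoidError
  have := measurable_invSqrt
  unfold zetaHalf
  fun_prop

lemma zetaHalf_eq_invSqrt_add (x : ℝ) : zetaHalf x = invSqrt x + zetaHalf (x + 1) := by
  have hstep : ∑' m : ℕ, trapezoidError (x + m) =
      trapezoidError x + ∑' m : ℕ, trapezoidError (x + 1 + m) := by
    rw [(summable_trapezoidError x).tsum_eq_zero_add]
    push_cast
    simp only [add_zero, add_comm, add_left_comm]
  unfold zetaHalf
  rw [hstep]
  unfold trapezoidError
  ring

lemma zetaHalf_eq_sum_add (x : ℝ) (N : ℕ) :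
    zetaHalf x = ∑ n ∈ range N, invSqrt (x + n) + zetaHalf (x + N) := by
  induction N with
  | zero => simp
  | succ N ih =>
    rw [ih, zetaHalf_eq_invSqrt_add (x + N), sum_range_succ]
    push_cast
    rw [← add_assoc, add_assoc x]

lemma zetaHalf_add_two_mul_sqrt_nonneg {y : ℝ} (hy : 0 < y) : 0 ≤ zetaHalf y + 2 * √y := by
  have := tsum_trapezoidError_nonneg hy
  have := invSqrt_nonneg y
  unfold zetaHalf
  linarith

lemma zetaHalf_add_two_mul_sqrt_le {y : ℝ} (hy : 0 < y) :
    zetaHalf y + 2 * √y ≤ 2 * invSqrt y := by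
  have := tsum_trapezoidError_le hy
  have := invSqrt_nonneg y
  have := invSqrt_nonneg (y + 1)
  unfold zetaHalf
  linarith

lemma abs_sqrt_sub_sqrt_le {x y : ℝ} (hx : 0 < x) (hy : 0 ≤ y) :
    |√y - √x| ≤ |y - x| * invSqrt x := by
  have : 0 < √x := by positivity
  have hfactor : (y - x) * invSqrt x = (√y - √x) * (1 + √y / √x) := by
    unfold invSqrt
    field_simp
    linear_combination Real.sq_sqrt hx.le - Real.sq_sqrt hy
  rw [← abs_of_nonneg (invSqrt_nonneg x), ← abs_mul, hfactor, abs_mul]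
  refine le_mul_of_one_le_right (abs_nonneg _) ?_
  rw [abs_of_nonneg (by positivity)]
  exact le_add_of_nonneg_right (by positivity)

lemma eventually_add_natCast_pos (x : ℝ) : ∀ᶠ N : ℕ in atTop, 0 < x + N :=
  (tendsto_atTop_add_const_left _ x tendsto_natCast_atTop_atTop).eventually_gt_atTop 0

lemma tendsto_zetaHalf_add_sqrt (x y : ℝ) :
    Tendsto (fun N : ℕ => zetaHalf (x + N) + 2 * √(y + N)) atTop (𝓝 0) := by
  have hzeta : Tendsto (fun N : ℕ => zetaHalf (x + N) + 2 * √(x + N)) atTop (𝓝 0) := by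
    have hbound := (tendsto_invSqrt_add_natCast x).const_mul 2
    rw [mul_zero] at hbound
    refine tendsto_of_tendsto_of_tendsto_of_le_of_le' tendsto_const_nhds hbound ?_ ?_ <;>
      filter_upwards [eventually_add_natCast_pos x] with N hN
    exacts [zetaHalf_add_two_mul_sqrt_nonneg hN, zetaHalf_add_two_mul_sqrt_le hN]
  have hsqrt : Tendsto (fun N : ℕ => √(y + N) - √(x + N)) atTop (𝓝 0) := by
    have hbound := (tendsto_invSqrt_add_natCast x).const_mul |y - x|
    rw [mul_zero] at hbound
    refine squeeze_zero_norm' ?_ hbound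
    filter_upwards [eventually_add_natCast_pos x, eventually_add_natCast_pos y] with N hx hy
    simpa using abs_sqrt_sub_sqrt_le hx hy.le
  convert hzeta.add (hsqrt.const_mul 2) using 2
  · ring
  · simp

lemma zetaHalf_le_zetaHalf {x y : ℝ} (hx : 0 < x) (hxy : x ≤ y) : zetaHalf y ≤ zetaHalf x := by
  have hlim : Tendsto (fun N : ℕ => zetaHalf (x + N) - zetaHalf (y + N)) atTop (𝓝 0) := by
    convert (tendsto_zetaHalf_add_sqrt x x).sub (tendsto_zetaHalf_add_sqrt y x) using 2 <;> ring
  have hle : ∀ N : ℕ, zetaHalf (x + N) - zetaHalf (y + N) ≤ zetaHalf x - zetaHalf y := by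
    intro N
    have hsum : ∑ n ∈ range N, invSqrt (y + n) ≤ ∑ n ∈ range N, invSqrt (x + n) :=
      sum_le_sum fun n _ => invSqrt_le_invSqrt (by positivity) (by gcongr)
    rw [zetaHalf_eq_sum_add x N, zetaHalf_eq_sum_add y N]
    linarith
  exact sub_nonneg.1 (le_of_tendsto' hlim hle)

lemma sum_zetaHalf_div_sub_add_one {x : ℝ} (hx : 0 < x) {k : ℕ} (hk : 0 < k) :
    ∑ j ∈ range k, zetaHalf ((x + 1 + j) / k) - √k * zetaHalf (x + 1) =
      ∑ j ∈ range k, zetaHalf ((x + j) / k) - √k * zetaHalf x := by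
  have hk' : (0 : ℝ) < k := mod_cast hk
  have hshift : ∑ j ∈ range k, zetaHalf ((x + 1 + j) / k) + zetaHalf (x / k) =
      ∑ j ∈ range k, zetaHalf ((x + j) / k) + zetaHalf (x / k + 1) := by
    have hlast := sum_range_succ (fun j : ℕ => zetaHalf ((x + j) / k)) k
    have hfirst := sum_range_succ' (fun j : ℕ => zetaHalf ((x + j) / k)) k
    rw [add_div, div_self hk'.ne'] at hlast
    rw [← hlast, hfirst]
    push_cast
    simp only [add_zero, add_comm, add_left_comm]
  have hscale : √k * invSqrt x = invSqrt (x / k) := by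
    unfold invSqrt
    rw [Real.sqrt_div hx.le, one_div_div, mul_one_div]
  rw [zetaHalf_eq_invSqrt_add (x / k)] at hshift
  rw [zetaHalf_eq_invSqrt_add x]
  linear_combination hshift + hscale

lemma sum_zetaHalf_div_sub_add_natCast {x : ℝ} (hx : 0 < x) {k : ℕ} (hk : 0 < k) (N : ℕ) :
    ∑ j ∈ range k, zetaHalf ((x + N + j) / k) - √k * zetaHalf (x + N) =
      ∑ j ∈ range k, zetaHalf ((x + j) / k) - √k * zetaHalf x := by
  induction N with
  | zero => simp
  | succ N ih =>
    rw [← ih, ← sum_zetaHalf_div_sub_add_one (x := x + N) (by positivity) hk]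
    push_cast
    simp only [add_assoc]

lemma tendsto_sum_zetaHalf_div_sub (x : ℝ) {k : ℕ} (hk : 0 < k) :
    Tendsto (fun N : ℕ => ∑ j ∈ range k, zetaHalf ((x + (k * N : ℕ) + j) / k) -
      √k * zetaHalf (x + (k * N : ℕ))) atTop (𝓝 0) := by
  have hk' : (0 : ℝ) < k := mod_cast hk
  have hsum : Tendsto (fun N : ℕ => ∑ j ∈ range k, (zetaHalf ((x + j) / k + N) + 2 * √(x / k + N)))
      atTop (𝓝 (∑ _j ∈ range k, 0)) :=
    tendsto_finsetSum _ fun _ _ => tendsto_zetaHalf_add_sqrt _ _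
  have hmul : Tendsto (fun N : ℕ => √k * (zetaHalf (x + (k * N : ℕ)) + 2 * √(x + (k * N : ℕ))))
      atTop (𝓝 (√k * 0)) :=
    ((tendsto_zetaHalf_add_sqrt x x).comp
      (tendsto_atTop_mono (fun n => Nat.le_mul_of_pos_left n hk) tendsto_id)).const_mul _
  have hdiff := hsum.sub hmul
  rw [sum_const_zero, mul_zero, sub_zero] at hdiff
  refine hdiff.congr fun N => ?_
  have hsqrt : √(x + (k * N : ℕ)) = √k * √(x / k + N) := by
    rw [← Real.sqrt_mul hk'.le]
    congr 1
    push_cast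
    field_simp
  have hargs : ∑ j ∈ range k, zetaHalf ((x + j) / k + N) =
      ∑ j ∈ range k, zetaHalf ((x + (k * N : ℕ) + j) / k) := by
    refine sum_congr rfl fun _ _ => congrArg zetaHalf ?_
    push_cast
    field_simp
    ring
  rw [sum_add_distrib, sum_const, card_range, nsmul_eq_mul, hargs, hsqrt]
  linear_combination -(2 * √(x / k + N)) * Real.mul_self_sqrt hk'.le

/-- The difference of the two sides of the distribution relation is `1`-periodic in `x` and tends
to `0` at infinity. -/
theorem sum_zetaHalf_add_div {x : ℝ} (hx : 0 < x) {k : ℕ} (hk : 0 < k) :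
    ∑ j ∈ range k, zetaHalf ((x + j) / k) = √k * zetaHalf x := by
  have hconst := (tendsto_sum_zetaHalf_div_sub x hk).congr
    fun N => sum_zetaHalf_div_sub_add_natCast hx hk (k * N)
  exact sub_eq_zero.1 (tendsto_nhds_unique tendsto_const_nhds hconst)

/-- The part `-ζ(1/2, x + 1)` left over after splitting off the singularity `x^{-1/2}` of
`ζ(1/2, x)`, with the sign that makes it increasing and nonnegative. -/
noncomputable def regularPart (x : ℝ) : ℝ := -zetaHalf (x + 1)

lemma measurable_regularPart : Measurable regularPart :=
  (measurable_zetaHalf.comp (measurable_id.add_const 1)).neg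

lemma zetaHalf_eq_invSqrt_sub (x : ℝ) : zetaHalf x = invSqrt x - regularPart x := by
  rw [zetaHalf_eq_invSqrt_add x, regularPart, sub_neg_eq_add]

lemma regularPart_le_regularPart {x y : ℝ} (hx : 0 ≤ x) (hxy : x ≤ y) :
    regularPart x ≤ regularPart y :=
  neg_le_neg (zetaHalf_le_zetaHalf (by linarith) (by linarith))

lemma zetaHalf_one_nonpos : zetaHalf 1 ≤ 0 := by
  have hle := tsum_trapezoidError_le one_pos
  have := invSqrt_nonneg (1 + 1)
  rw [invSqrt_one] at hle
  unfold zetaHalf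
  rw [invSqrt_one, Real.sqrt_one]
  linarith

lemma regularPart_nonneg {x : ℝ} (hx : 0 ≤ x) : 0 ≤ regularPart x := by
  refine le_trans ?_ (regularPart_le_regularPart le_rfl hx)
  rw [regularPart, zero_add]
  exact neg_nonneg.2 zetaHalf_one_nonpos

lemma regularPart_le_three {x : ℝ} (hx : 0 ≤ x) (hx1 : x ≤ 1) : regularPart x ≤ 3 := by
  have hasymp := zetaHalf_add_two_mul_sqrt_nonneg (y := 2) two_pos
  have hsqrt : √(2 : ℝ) ≤ 3 / 2 := Real.sqrt_le_iff.2 (by norm_num)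
  refine (regularPart_le_regularPart hx hx1).trans ?_
  rw [regularPart, one_add_one_eq_two]
  linarith

end ZetaHalf

section HurwitzZeta

/-- The `n`-th term of the Dirichlet-type series for `ζ(s, a) - ζ(s, 1)`. -/
noncomputable def hurwitzSubTerm (a : ℝ) (n : ℕ) (s : ℂ) : ℂ :=
  1 / ((n : ℂ) + (a : ℂ)) ^ s - 1 / ((n : ℂ) + ((1 : ℝ) : ℂ)) ^ s

lemma norm_cpow_neg_sub_cpow_neg_le {x y : ℝ} (hx : 0 < x) (hxy : x ≤ y) {s : ℂ}
    (hs : 0 < s.re) :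
    ‖(x : ℂ) ^ (-s) - (y : ℂ) ^ (-s)‖ ≤ ‖s‖ * x ^ (-s.re - 1) * (y - x) := by
  have hderiv : ∀ t ∈ Set.Icc x y,
      HasDerivWithinAt (fun t : ℝ => (t : ℂ) ^ (-s)) (-s * (t : ℂ) ^ (-s - 1)) (Set.Icc x y) t :=
    fun t ht => ((Complex.hasStrictDerivAt_cpow_const
      (Complex.ofReal_mem_slitPlane.2 (hx.trans_le ht.1))).hasDerivAt.comp_ofReal).hasDerivWithinAt
  have hbound : ∀ t ∈ Set.Icc x y, ‖-s * (t : ℂ) ^ (-s - 1)‖ ≤ ‖s‖ * x ^ (-s.re - 1) := by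
    intro t ht
    rw [norm_mul, norm_neg, Complex.norm_cpow_eq_rpow_re_of_pos (hx.trans_le ht.1)]
    simp only [sub_re, neg_re, one_re]
    exact mul_le_mul_of_nonneg_left (Real.rpow_le_rpow_of_nonpos hx ht.1 (by linarith))
      (norm_nonneg s)
  have h := (convex_Icc x y).norm_image_sub_le_of_norm_hasDerivWithin_le hderiv hbound
    (Set.right_mem_Icc.2 hxy) (Set.left_mem_Icc.2 hxy)
  rwa [Real.norm_eq_abs, abs_sub_comm, abs_of_nonneg (sub_nonneg.2 hxy)] at h

variable {a : ℝ}

lemma hurwitzSubTerm_eq (a : ℝ) (n : ℕ) (s : ℂ) :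
    hurwitzSubTerm a n s = ((n + a : ℝ) : ℂ) ^ (-s) - ((n + 1 : ℝ) : ℂ) ^ (-s) := by
  simp [hurwitzSubTerm, Complex.cpow_neg]

lemma norm_hurwitzSubTerm_le (ha : 0 < a) (ha1 : a ≤ 1) {δ R : ℝ} (hδ : 0 < δ) (n : ℕ) {s : ℂ}
    (hs : δ < s.re) (hR : ‖s‖ < R) :
    ‖hurwitzSubTerm a n s‖ ≤ R * a ^ (-R) * (1 / |(n : ℝ) + a| ^ (1 + δ)) := by
  have hpos : 0 < (n : ℝ) + a := by positivity
  have : 0 ≤ R := (norm_nonneg s).trans hR.le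
  have hre : s.re ≤ R := (Complex.re_le_norm s).trans hR.le
  have hpow : ((n : ℝ) + a) ^ (-(s.re - δ)) ≤ a ^ (-R) :=
    (Real.rpow_le_rpow_of_nonpos ha (by linarith [n.cast_nonneg (α := ℝ)]) (by linarith)).trans
      (Real.rpow_le_rpow_of_exponent_ge ha ha1 (by linarith))
  rw [hurwitzSubTerm_eq, abs_of_pos hpos, one_div, ← Real.rpow_neg hpos.le]
  calc _ ≤ ‖s‖ * ((n : ℝ) + a) ^ (-s.re - 1) * (n + 1 - (n + a)) :=
        norm_cpow_neg_sub_cpow_neg_le hpos (by linarith) (hδ.trans hs)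
    _ ≤ ‖s‖ * ((n : ℝ) + a) ^ (-s.re - 1) := mul_le_of_le_one_right (by positivity) (by linarith)
    _ = ‖s‖ * (((n : ℝ) + a) ^ (-(s.re - δ)) * ((n : ℝ) + a) ^ (-(1 + δ))) := by
        rw [← Real.rpow_add hpos]
        ring_nf
    _ ≤ R * (a ^ (-R) * ((n : ℝ) + a) ^ (-(1 + δ))) := by gcongr
    _ = _ := by ring

lemma summable_hurwitzSubTerm_bound (a R : ℝ) {δ : ℝ} (hδ : 0 < δ) :
    Summable fun n : ℕ => R * a ^ (-R) * (1 / |(n : ℝ) + a| ^ (1 + δ)) :=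
  ((Real.summable_one_div_nat_add_rpow a (1 + δ)).2 (by linarith)).mul_left _

lemma differentiable_hurwitzSubTerm (ha : 0 < a) (n : ℕ) :
    Differentiable ℂ (hurwitzSubTerm a n) := by
  have hbase : ∀ b : ℝ, 0 < b → ((n + b : ℝ) : ℂ) ≠ 0 := fun b hb =>
    Complex.ofReal_ne_zero.2 (by positivity)
  have hpow : ∀ b : ℝ, 0 < b → Differentiable ℂ fun s : ℂ => ((n + b : ℝ) : ℂ) ^ (-s) :=
    fun b hb => differentiable_neg.const_cpow (Or.inl (hbase b hb))
  rw [funext (hurwitzSubTerm_eq a n)]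
  exact (hpow a ha).sub (hpow 1 one_pos)

lemma hurwitzZeta_sub_eq_tsum (ha : 0 < a) (ha1 : a ≤ 1) {s : ℂ} (hs : 0 < s.re) :
    HurwitzZeta.hurwitzZeta (a : UnitAddCircle) s -
      HurwitzZeta.hurwitzZeta ((1 : ℝ) : UnitAddCircle) s = ∑' n, hurwitzSubTerm a n s := by
  set δ := min (s.re / 2) 1
  have hδ : 0 < δ := lt_min (by linarith) one_pos
  set U : Set ℂ := {z | δ < z.re} ∩ Metric.ball 0 (‖s‖ + 3)
  have hUopen : IsOpen U :=
    (isOpen_lt continuous_const Complex.continuous_re).inter Metric.isOpen_ball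
  have hUconvex : Convex ℝ U := (convex_halfSpace_re_gt _).inter (convex_ball _ _)
  have hseries : DifferentiableOn ℂ (fun z => ∑' n, hurwitzSubTerm a n z) U :=
    differentiableOn_tsum_of_summable_norm (summable_hurwitzSubTerm_bound a (‖s‖ + 3) hδ)
      (fun n => (differentiable_hurwitzSubTerm ha n).differentiableOn) hUopen
      fun n z hz => norm_hurwitzSubTerm_le ha ha1 hδ n hz.1 (mem_ball_zero_iff.1 hz.2)
  have hzeta : DifferentiableOn ℂ (fun z => HurwitzZeta.hurwitzZeta (a : UnitAddCircle) z -
      HurwitzZeta.hurwitzZeta ((1 : ℝ) : UnitAddCircle) z) U :=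
    (HurwitzZeta.differentiable_hurwitzZeta_sub_hurwitzZeta _ _).differentiableOn
  have htwo : (2 : ℂ) ∈ U := by
    refine ⟨(min_le_right (s.re / 2) 1).trans_lt (by norm_num), mem_ball_zero_iff.2 ?_⟩
    rw [Complex.norm_ofNat]
    linarith [norm_nonneg s]
  have hsU : s ∈ U :=
    ⟨(min_le_left (s.re / 2) 1).trans_lt (by linarith), mem_ball_zero_iff.2 (by linarith)⟩
  have heq : (fun z => HurwitzZeta.hurwitzZeta (a : UnitAddCircle) z -
      HurwitzZeta.hurwitzZeta ((1 : ℝ) : UnitAddCircle) z) =ᶠ[𝓝 2]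
        fun z => ∑' n, hurwitzSubTerm a n z := by
    filter_upwards [(isOpen_lt continuous_const Complex.continuous_re).mem_nhds
      (by norm_num : (1 : ℝ) < (2 : ℂ).re)] with z hz
    exact (((HurwitzZeta.hasSum_hurwitzZeta_of_one_lt_re ⟨ha.le, ha1⟩ hz).sub
      (HurwitzZeta.hasSum_hurwitzZeta_of_one_lt_re ⟨zero_le_one, le_rfl⟩ hz)).tsum_eq).symm
  exact (hzeta.analyticOnNhd hUopen).eqOn_of_preconnected_of_eventuallyEq
    (hseries.analyticOnNhd hUopen) hUconvex.isPreconnected htwo heq hsU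

lemma ofReal_cpow_neg_half {x : ℝ} (hx : 0 ≤ x) :
    (x : ℂ) ^ (-(1 / 2) : ℂ) = (invSqrt x : ℝ) := by
  rw [invSqrt, one_div √x, Real.sqrt_eq_rpow, ← Real.rpow_neg hx, Complex.ofReal_cpow hx]
  norm_num

lemma sum_hurwitzSubTerm_half (ha : 0 < a) (N : ℕ) :
    ∑ n ∈ range N, hurwitzSubTerm a n (1 / 2) =
      ((zetaHalf a - zetaHalf 1 - (zetaHalf (a + N) - zetaHalf (1 + N)) : ℝ) : ℂ) := by
  have hterm : ∀ n : ℕ,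
      hurwitzSubTerm a n (1 / 2) = ((invSqrt (a + n) - invSqrt (1 + n) : ℝ) : ℂ) := by
    intro n
    rw [hurwitzSubTerm_eq, ofReal_cpow_neg_half (by positivity),
      ofReal_cpow_neg_half (by positivity), add_comm (n : ℝ) a, add_comm (n : ℝ) 1,
      Complex.ofReal_sub]
  rw [sum_congr rfl fun n _ => hterm n, ← Complex.ofReal_sum, sum_sub_distrib,
    zetaHalf_eq_sum_add a N, zetaHalf_eq_sum_add 1 N]
  congr 1
  ring

theorem hurwitzZeta_half_sub (ha : 0 < a) (ha1 : a ≤ 1) :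
    HurwitzZeta.hurwitzZeta (a : UnitAddCircle) (1 / 2) -
      HurwitzZeta.hurwitzZeta ((1 : ℝ) : UnitAddCircle) (1 / 2) =
        ((zetaHalf a - zetaHalf 1 : ℝ) : ℂ) := by
  have hsummable : Summable fun n => hurwitzSubTerm a n (1 / 2) :=
    .of_norm_bounded (summable_hurwitzSubTerm_bound a 1 (δ := 1 / 4) (by norm_num)) fun n =>
      norm_hurwitzSubTerm_le ha ha1 (by norm_num) n (by norm_num) (by norm_num)
  have hlim : Tendsto (fun N : ℕ => ∑ n ∈ range N, hurwitzSubTerm a n (1 / 2)) atTop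
      (𝓝 ((zetaHalf a - zetaHalf 1 : ℝ) : ℂ)) := by
    simp_rw [sum_hurwitzSubTerm_half ha]
    refine (Complex.continuous_ofReal.tendsto _).comp ?_
    convert ((tendsto_zetaHalf_add_sqrt a 1).sub (tendsto_zetaHalf_add_sqrt 1 1)).const_sub
      (zetaHalf a - zetaHalf 1) using 2 <;> ring
  rw [hurwitzZeta_sub_eq_tsum ha ha1 (by norm_num)]
  exact tendsto_nhds_unique hsummable.hasSum.tendsto_sum_nat hlim

end HurwitzZeta

section Periodization

/-- The representative of `x` modulo `1` in `(0, 1]`. -/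
noncomputable def unitRep (x : ℝ) : ℝ := 1 - Int.fract (-x)

lemma unitRep_pos (x : ℝ) : 0 < unitRep x := sub_pos.2 (Int.fract_lt_one (-x))

lemma unitRep_le_one (x : ℝ) : unitRep x ≤ 1 := sub_le_self _ (Int.fract_nonneg (-x))

lemma measurable_unitRep : Measurable unitRep :=
  measurable_const.sub (measurable_fract.comp measurable_neg)

lemma exists_unitRep_eq_sub_intCast (x : ℝ) : ∃ i : ℤ, unitRep x = x - i :=
  ⟨-⌊-x⌋ - 1, by unfold unitRep Int.fract; push_cast; ring⟩

lemma unitRep_eq_sub_intCast {x : ℝ} {i : ℤ} (h : (i : ℝ) < x) (h' : x ≤ i + 1) :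
    unitRep x = x - i := by
  have hfract : Int.fract (-x) = i + 1 - x :=
    Int.fract_eq_iff.2 ⟨by linarith, by linarith, -i - 1, by push_cast; ring⟩
  rw [unitRep, hfract]
  ring

lemma unitRep_neg_eq {x : ℝ} {i : ℤ} (h : (i : ℝ) < x) (h' : x < i + 1) :
    unitRep (-x) = i + 1 - x := by
  rw [unitRep_eq_sub_intCast (i := -i - 1) (by push_cast; linarith) (by push_cast; linarith)]
  push_cast
  ring

lemma unitRep_eq_self {x : ℝ} (hx : 0 < x) (hx1 : x ≤ 1) : unitRep x = x := by
  simpa using unitRep_eq_sub_intCast (i := 0) (by simpa using hx) (by simpa using hx1)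

lemma periodic_unitRep : Function.Periodic unitRep 1 := fun x => by
  rw [unitRep, neg_add, ← sub_eq_add_neg, Int.fract_sub_one, unitRep]

/-- The periodic zeta value `x ↦ ζ(1/2, x mod 1)`, where `x mod 1` is taken in `(0, 1]`. -/
noncomputable def zetaHalfMod (x : ℝ) : ℝ := zetaHalf (unitRep x)

lemma measurable_zetaHalfMod : Measurable zetaHalfMod :=
  measurable_zetaHalf.comp measurable_unitRep

lemma periodic_zetaHalfMod : Function.Periodic zetaHalfMod 1 := periodic_unitRep.comp zetaHalf

lemma zetaHalfMod_add_intCast (x : ℝ) (m : ℤ) : zetaHalfMod (x + m) = zetaHalfMod x := by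
  simpa using periodic_zetaHalfMod.int_mul m x

lemma zetaHalfMod_eq_zetaHalf {x : ℝ} (hx : 0 < x) (hx1 : x ≤ 1) :
    zetaHalfMod x = zetaHalf x := by
  rw [zetaHalfMod, unitRep_eq_self hx hx1]

lemma zetaHalfMod_val_div {q : ℕ} [NeZero q] (m : ℤ) :
    zetaHalfMod ((m : ZMod q).val / q) = zetaHalfMod (m / q) := by
  have hm : (((m : ZMod q).val : ℤ) : ℝ) + q * ((m / (q : ℤ) : ℤ) : ℝ) = m := by
    rw [ZMod.val_intCast]
    exact_mod_cast Int.emod_add_mul_ediv m q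
  have hq : (q : ℝ) ≠ 0 := NeZero.ne _
  rw [← zetaHalfMod_add_intCast _ (m / (q : ℤ)), div_add' _ _ _ hq, ← hm, Int.cast_natCast,
    mul_comm (q : ℝ)]

end Periodization

section CharacterSums

variable {q : ℕ}

lemma conj_apply_unit (χ : DirichletCharacter ℂ q) (u : (ZMod q)ˣ) :
    (starRingEnd ℂ) (χ u) = χ (u : ZMod q)⁻¹ := by
  rw [starRingEnd_apply, MulChar.star_apply', MulChar.inv_apply, Ring.inverse_unit,
    ZMod.inv_coe_unit]

variable [NeZero q]

/-- The sum of `χ(n) F(n)` over the reduced residue classes `n` modulo `q`. -/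
noncomputable def charSum (F : ZMod q → ℝ) (χ : DirichletCharacter ℂ q) : ℂ :=
  ∑ n : (ZMod q)ˣ, χ n * F n

lemma charSum_eq_sum (F : ZMod q → ℝ) (χ : DirichletCharacter ℂ q) :
    charSum F χ = ∑ j, χ j * F j :=
  Fintype.sum_of_injective Units.val Units.val_injective _ _
    (fun j hj => by rw [χ.map_nonunit fun ⟨u, hu⟩ => hj ⟨u, hu⟩, zero_mul]) fun _ => rfl

lemma LFunction_half_eq_charSum {χ : DirichletCharacter ℂ q} (hχ : χ ≠ 1) :
    χ.LFunction (1 / 2) =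
      ((1 / √q : ℝ) : ℂ) * charSum (fun j : ZMod q => zetaHalfMod (j.val / q)) χ := by
  have hzeta : ∀ j : ZMod q, HurwitzZeta.hurwitzZeta (ZMod.toAddCircle j) (1 / 2) =
      (zetaHalfMod (j.val / q) : ℂ) + (HurwitzZeta.hurwitzZeta ((1 : ℝ) : UnitAddCircle) (1 / 2)
        - (zetaHalf 1 : ℂ)) := by
    intro j
    have hq : (0 : ℝ) < q := Nat.cast_pos.2 (NeZero.pos q)
    rcases eq_or_ne j 0 with rfl | hj
    · have h01 : ((0 : ℝ) : UnitAddCircle) = ((1 : ℝ) : UnitAddCircle) := by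
        rw [AddCircle.coe_period, AddCircle.coe_zero]
      have h0 : zetaHalfMod 0 = zetaHalf 1 := by
        rw [← zetaHalfMod_eq_zetaHalf one_pos le_rfl, ← periodic_zetaHalfMod 0, zero_add]
      simp [h0, ← h01]
    · have hpos : (0 : ℝ) < j.val / q := by
        have := Nat.pos_of_ne_zero ((ZMod.val_ne_zero j).2 hj)
        positivity
      have hle : (j.val : ℝ) / q ≤ 1 :=
        (div_le_one hq).2 (Nat.cast_le.2 (ZMod.val_lt j).le)
      have := hurwitzZeta_half_sub hpos hle
      rw [ZMod.toAddCircle_apply, zetaHalfMod_eq_zetaHalf hpos hle]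
      push_cast at this ⊢
      linear_combination this
  rw [DirichletCharacter.LFunction, ZMod.LFunction, charSum_eq_sum, ← Complex.ofReal_natCast q,
    ofReal_cpow_neg_half q.cast_nonneg, invSqrt]
  simp_rw [hzeta, mul_add]
  rw [sum_add_distrib, ← sum_mul, MulChar.sum_eq_zero_of_ne_one hχ, zero_mul, add_zero]

lemma norm_charSum_sq_mul_eq (F : ZMod q → ℝ) (u v : (ZMod q)ˣ) (χ : DirichletCharacter ℂ q) :
    (‖charSum F χ‖ ^ 2 : ℂ) * χ u * (starRingEnd ℂ) (χ v) =
      ∑ n : (ZMod q)ˣ, ∑ a : (ZMod q)ˣ,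
        χ ((v * n : (ZMod q)ˣ) : ZMod q)⁻¹ * χ a * ((F a * F (u * n) : ℝ) : ℂ) := by
  have hconj : (starRingEnd ℂ) (charSum F χ) =
      ∑ n : (ZMod q)ˣ, (starRingEnd ℂ) (χ (u * n : (ZMod q)ˣ)) * F (u * n) := by
    simp only [charSum, map_sum, map_mul, Complex.conj_ofReal]
    exact (Equiv.sum_comp (Equiv.mulLeft u) fun n : (ZMod q)ˣ =>
      (starRingEnd ℂ) (χ n) * (F n : ℂ)).symm.trans (by simp)
  have hu : χ u * (starRingEnd ℂ) (χ u) = 1 := by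
    rw [conj_apply_unit, ← map_mul, ZMod.inv_coe_unit, Units.mul_inv, map_one]
  rw [← Complex.mul_conj', hconj, charSum, sum_mul_sum, sum_comm, sum_mul, sum_mul]
  refine sum_congr rfl fun n _ => ?_
  rw [sum_mul, sum_mul]
  refine sum_congr rfl fun a _ => ?_
  rw [← conj_apply_unit, Units.val_mul, Units.val_mul, map_mul, map_mul, map_mul, map_mul]
  push_cast
  linear_combination (χ a * F a * (starRingEnd ℂ) (χ n) * F (u * n) * (starRingEnd ℂ) (χ v)) * hu

theorem sum_norm_charSum_sq_mul (F : ZMod q → ℝ) (u v : (ZMod q)ˣ) :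
    ∑ χ : DirichletCharacter ℂ q, (‖charSum F χ‖ ^ 2 : ℂ) * χ u * (starRingEnd ℂ) (χ v) =
      ((q.totient * ∑ n : (ZMod q)ˣ, F (u * n) * F (v * n) : ℝ) : ℂ) := by
  simp_rw [norm_charSum_sq_mul_eq]
  rw [sum_comm]
  rw [Complex.ofReal_mul, Complex.ofReal_sum, mul_sum]
  refine sum_congr rfl fun n _ => ?_
  rw [sum_comm]
  simp_rw [← sum_mul, DirichletCharacter.sum_char_inv_mul_char_eq ℂ (v * n).isUnit, Units.val_inj,
    ite_mul, zero_mul]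
  rw [sum_ite_eq, if_pos (mem_univ _), Units.val_mul]
  push_cast
  ring

open scoped Classical in
lemma sum_ite_parity {ε : ℤ} (hε : ε = 1 ∨ ε = -1) (f : DirichletCharacter ℂ q → ℂ) :
    (∑ χ, if χ ≠ 1 ∧ χ (-1) = (ε : ℂ) then f χ else 0) =
      (∑ χ, f χ + ε * ∑ χ, f χ * χ (-1)) / 2 - (1 + ε) / 2 * f 1 := by
  have hterm : ∀ χ : DirichletCharacter ℂ q, (if χ ≠ 1 ∧ χ (-1) = (ε : ℂ) then f χ else 0) =
      (f χ + ε * (f χ * χ (-1))) / 2 - if χ = 1 then (1 + ε) / 2 * f 1 else 0 := by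
    intro χ
    have hsq : χ (-1) = 1 ∨ χ (-1) = -1 :=
      mul_self_eq_one_iff.1 (by rw [← map_mul, neg_mul_neg, one_mul, map_one])
    have hne : (1 : ℂ) ≠ -1 := by norm_num
    by_cases hχ : χ = 1
    · rw [if_neg fun h => h.1 hχ, if_pos hχ, hχ, MulChar.one_apply isUnit_one.neg]
      ring
    · rw [if_neg hχ]
      rcases hsq with hs | hs <;> rcases hε with rfl | rfl <;> simp [hs, hχ, hne, hne.symm]
  rw [sum_congr rfl fun χ _ => hterm χ, sum_sub_distrib, sum_ite_eq', if_pos (mem_univ _),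
    ← sum_div, sum_add_distrib, mul_sum]

end CharacterSums

section SecondMoment

/-- The correlation sum `∑_{0 < n < q} ζ(1/2, un/q) ζ(1/2, vn/q)` with periodic arguments. -/
noncomputable def corrSum (u v : ℤ) (q : ℕ) : ℝ :=
  ∑ n ∈ Ico 1 q, zetaHalfMod (u * (n / q)) * zetaHalfMod (v * (n / q))

lemma sum_units_eq_sum_Ico {q : ℕ} [Fact q.Prime] (g : ZMod q → ℝ) :
    ∑ n : (ZMod q)ˣ, g n = ∑ n ∈ Ico 1 q, g n := by
  refine sum_nbij (fun n => (n : ZMod q).val) (fun n _ => ?_) (fun a _ b _ hab => ?_)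
    (fun n hn => ?_) fun n _ => by rw [ZMod.natCast_zmod_val]
  · exact mem_Ico.2 ⟨Nat.pos_of_ne_zero ((ZMod.val_ne_zero _).2 n.ne_zero), ZMod.val_lt _⟩
  · exact Units.ext (ZMod.val_injective q hab)
  · obtain ⟨hn1, hnq⟩ := mem_Ico.1 hn
    have hn0 : (n : ZMod q) ≠ 0 := by
      rw [Ne, ZMod.natCast_eq_zero_iff]
      exact Nat.not_dvd_of_pos_of_lt hn1 hnq
    exact ⟨Units.mk0 n hn0, mem_coe.2 (mem_univ _), ZMod.val_cast_of_lt hnq⟩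

variable {q : ℕ} [Fact q.Prime]

lemma sum_units_zetaHalfMod_mul {u v : ℤ} {a b : (ZMod q)ˣ} (ha : (a : ZMod q) = u)
    (hb : (b : ZMod q) = v) :
    ∑ n : (ZMod q)ˣ, zetaHalfMod ((a * n : ZMod q).val / q) *
      zetaHalfMod ((b * n : ZMod q).val / q) = corrSum u v q := by
  rw [sum_units_eq_sum_Ico fun n : ZMod q =>
    zetaHalfMod ((a * n : ZMod q).val / q) * zetaHalfMod ((b * n : ZMod q).val / q), corrSum]
  have hval : ∀ (w : ℤ) (n : ℕ),
      zetaHalfMod (((w : ZMod q) * n).val / q) = zetaHalfMod (w * (n / q)) := by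
    intro w n
    have := zetaHalfMod_val_div (q := q) (w * n)
    push_cast at this
    rw [this, mul_div_assoc]
  simp only [ha, hb, hval]

lemma charSum_one : charSum (fun j : ZMod q => zetaHalfMod (j.val / q)) 1 =
    (((√q - 1) * zetaHalf 1 : ℝ) : ℂ) := by
  have hq : 0 < q := (Fact.out : q.Prime).pos
  have hdist := sum_zetaHalf_add_div one_pos hq
  have hshift : ∑ j ∈ range q, zetaHalf ((1 + j) / q) =
      ∑ n ∈ Ico 1 (q + 1), zetaHalf (n / q) := by
    rw [sum_Ico_eq_sum_range]
    simp
  rw [hshift, sum_Ico_succ_top hq, div_self (by positivity)] at hdist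
  have hterm : ∀ n ∈ Ico 1 q, zetaHalfMod ((n : ZMod q).val / q) = zetaHalf (n / q) := by
    intro n hn
    obtain ⟨hn1, hnq⟩ := mem_Ico.1 hn
    have : (0 : ℝ) < n := Nat.cast_pos.2 hn1
    rw [ZMod.val_cast_of_lt hnq, zetaHalfMod_eq_zetaHalf (by positivity)
      ((div_le_one (by positivity)).2 (Nat.cast_le.2 hnq.le))]
  simp only [charSum, MulChar.one_apply_coe, one_mul, ← Complex.ofReal_sum]
  rw [sum_units_eq_sum_Ico fun j : ZMod q => zetaHalfMod (j.val / q), sum_congr rfl hterm]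
  congr 1
  linarith

lemma norm_charSum_one_le :
    ‖charSum (fun j : ZMod q => zetaHalfMod (j.val / q)) 1‖ ≤ 3 * √q := by
  have hq : 1 ≤ √(q : ℝ) := Real.one_le_sqrt.2 (Nat.one_le_cast.2 (Fact.out : q.Prime).one_le)
  have hle := regularPart_le_three le_rfl zero_le_one
  rw [regularPart, zero_add] at hle
  rw [charSum_one, Complex.norm_real, Real.norm_eq_abs, abs_mul, abs_of_nonneg (by linarith),
    abs_of_nonpos zetaHalf_one_nonpos, mul_comm]
  exact mul_le_mul hle (by linarith) (by linarith) (by norm_num)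

lemma norm_LFunction_half_sq {χ : DirichletCharacter ℂ q} (hχ : χ ≠ 1) :
    (‖χ.LFunction (1 / 2)‖ ^ 2 : ℂ) =
      (q : ℂ)⁻¹ * ‖charSum (fun j : ZMod q => zetaHalfMod (j.val / q)) χ‖ ^ 2 := by
  rw [LFunction_half_eq_charSum hχ, norm_mul, Complex.norm_real,
    Real.norm_of_nonneg (by positivity)]
  push_cast
  rw [mul_pow, div_pow, one_pow, one_div, ← Complex.ofReal_pow, Real.sq_sqrt q.cast_nonneg,
    Complex.ofReal_natCast]

lemma sum_norm_charSum_sq_mul_eq_corrSum {h k : ℤ} {u v : (ZMod q)ˣ} (hu : (u : ZMod q) = h)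
    (hv : (v : ZMod q) = k) :
    ∑ χ, (‖charSum (fun j : ZMod q => zetaHalfMod (j.val / q)) χ‖ ^ 2 : ℂ) * χ u *
      (starRingEnd ℂ) (χ v) = q.totient * (corrSum h k q : ℂ) := by
  rw [sum_norm_charSum_sq_mul, sum_units_zetaHalfMod_mul hu hv, Complex.ofReal_mul,
    Complex.ofReal_natCast]

lemma Mpm_eq {ε : ℤ} (hε : ε = 1 ∨ ε = -1) {h k : ℤ} {u v : (ZMod q)ˣ} (hu : (u : ZMod q) = h)
    (hv : (v : ZMod q) = k) :
    Mpm ε h k q = ((1 / (2 * √q) * (corrSum h k q + ε * corrSum (-h) k q) : ℝ) : ℂ) -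
      √q / (q.totient : ℝ) * ((1 + ε) / 2 * ((q : ℂ)⁻¹ *
        ‖charSum (fun j : ZMod q => zetaHalfMod (j.val / q)) 1‖ ^ 2)) := by
  set A : DirichletCharacter ℂ q → ℂ := charSum fun j : ZMod q => zetaHalfMod (j.val / q)
  have hneg : ∀ χ : DirichletCharacter ℂ q, χ ((-u : (ZMod q)ˣ) : ZMod q) = χ u * χ (-1) :=
    fun χ => by rw [← map_mul, Units.val_neg, mul_neg_one]
  have hminus := sum_norm_charSum_sq_mul_eq_corrSum
    (show ((-u : (ZMod q)ˣ) : ZMod q) = (-h : ℤ) by rw [Units.val_neg, hu, Int.cast_neg]) hv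
  simp_rw [hneg] at hminus
  have hweight : ∀ χ : DirichletCharacter ℂ q, (if χ ≠ 1 ∧ χ (-1) = (ε : ℂ) then
      (‖χ.LFunction (1 / 2)‖ ^ 2 : ℂ) * χ h * (starRingEnd ℂ) (χ k) else 0) =
      if χ ≠ 1 ∧ χ (-1) = (ε : ℂ) then
        (q : ℂ)⁻¹ * ((‖A χ‖ ^ 2 : ℂ) * χ u * (starRingEnd ℂ) (χ v)) else 0 := by
    refine fun χ => ite_congr rfl (fun hχ => ?_) fun _ => rfl
    rw [norm_LFunction_half_sq hχ.1, hu, hv]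
    ring
  have htwist : ∀ χ : DirichletCharacter ℂ q,
      (q : ℂ)⁻¹ * ((‖A χ‖ ^ 2 : ℂ) * χ u * (starRingEnd ℂ) (χ v)) * χ (-1) =
        (q : ℂ)⁻¹ * ((‖A χ‖ ^ 2 : ℂ) * (χ u * χ (-1)) * (starRingEnd ℂ) (χ v)) :=
    fun χ => by ring
  have htot : (q.totient : ℂ) ≠ 0 :=
    Nat.cast_ne_zero.2 (Nat.totient_pos.2 (NeZero.pos q)).ne'
  have hsqrt : (√q : ℂ) * √q = q := by
    rw [← Complex.ofReal_mul, Real.mul_self_sqrt q.cast_nonneg, Complex.ofReal_natCast]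
  have hq : (√q : ℂ) ≠ 0 := fun h0 => NeZero.ne (q : ℂ) (by rw [← hsqrt, h0, zero_mul])
  rw [Mpm, sum_congr rfl fun χ _ => hweight χ, sum_ite_parity hε]
  simp_rw [htwist, ← mul_sum]
  rw [sum_norm_charSum_sq_mul_eq_corrSum hu hv, hminus, MulChar.one_apply_coe,
    MulChar.one_apply_coe, map_one, mul_one, mul_one]
  push_cast
  rw [← hsqrt]
  field_simp

theorem norm_Mpm_sub_corrSum_le {ε : ℤ} (hε : ε = 1 ∨ ε = -1) {h k : ℤ}
    (hh : (h : ZMod q) ≠ 0) (hk : (k : ZMod q) ≠ 0) :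
    ‖Mpm ε h k q - ((1 / (2 * √q) * (corrSum h k q + ε * corrSum (-h) k q) : ℝ) : ℂ)‖ ≤ 18 := by
  have hq2 : (2 : ℝ) ≤ q := Nat.ofNat_le_cast.2 (Fact.out : q.Prime).two_le
  have htot : (q.totient : ℝ) = q - 1 := by
    rw [Nat.totient_prime Fact.out, Nat.cast_sub (Fact.out : q.Prime).one_le, Nat.cast_one]
  have hparity : ‖(1 + ε : ℂ) / 2‖ ≤ 1 := by rcases hε with rfl | rfl <;> norm_num
  have hratio : √(q : ℝ) / q.totient ≤ 2 := by
    rw [htot, div_le_iff₀ (by linarith)]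
    exact Real.sqrt_le_iff.2 ⟨by linarith, by nlinarith⟩
  rw [Mpm_eq hε (Units.val_mk0 hh) (Units.val_mk0 hk), sub_sub_cancel_left, norm_neg,
    norm_mul, norm_mul, norm_mul, norm_pow, norm_inv, Complex.norm_natCast, ← Complex.ofReal_div,
    Complex.norm_real, Real.norm_of_nonneg (by positivity)]
  calc _ ≤ 2 * (1 * ((q : ℝ)⁻¹ * (3 * √q) ^ 2)) := by
        gcongr
        rw [Complex.norm_real, norm_norm]
        exact norm_charSum_one_le
    _ = 18 := by
        rw [mul_pow, Real.sq_sqrt q.cast_nonneg]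
        field_simp
        norm_num

end SecondMoment

section Cusps

lemma invSqrt_of_nonpos {x : ℝ} (hx : x ≤ 0) : invSqrt x = 0 := by
  rw [invSqrt, Real.sqrt_eq_zero_of_nonpos hx, div_zero]

lemma invSqrt_abs (x : ℝ) : invSqrt |x| = invSqrt x + invSqrt (-x) := by
  rcases le_total 0 x with hx | hx
  · rw [abs_of_nonneg hx, invSqrt_of_nonpos (neg_nonpos.2 hx), add_zero]
  · rw [abs_of_nonpos hx, invSqrt_of_nonpos hx, zero_add]

lemma invSqrt_div {x y : ℝ} (hx : 0 ≤ x) : invSqrt (x / y) = √y * invSqrt x := by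
  rw [invSqrt, invSqrt, Real.sqrt_div hx, one_div_div, mul_one_div]

lemma invSqrt_mul {x y : ℝ} (hx : 0 ≤ x) : invSqrt (x * y) = invSqrt x * invSqrt y := by
  rw [invSqrt, invSqrt, invSqrt, Real.sqrt_mul hx, div_mul_div_comm, one_mul]

lemma sqrt_mul_invSqrt {x : ℝ} (hx : 0 < x) : √x * invSqrt x = 1 := by
  unfold invSqrt
  field_simp

lemma invSqrt_sq {x : ℝ} (hx : 0 ≤ x) : invSqrt x ^ 2 = 1 / x := by
  rw [invSqrt, div_pow, one_pow, Real.sq_sqrt hx]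

lemma intervalIntegrable_invSqrt (a b : ℝ) : IntervalIntegrable invSqrt volume a b := by
  refine (intervalIntegral.intervalIntegrable_rpow' (r := -(1 / 2)) (by norm_num)).mono_fun
    measurable_invSqrt.aestronglyMeasurable (Eventually.of_forall fun x => ?_)
  dsimp only
  rcases le_total 0 x with hx | hx
  · rw [Real.rpow_neg hx, ← Real.sqrt_eq_rpow, invSqrt, one_div]
  · rw [invSqrt_of_nonpos hx, norm_zero]
    exact norm_nonneg _

lemma integral_invSqrt (a b : ℝ) : ∫ x in a..b, invSqrt x = 2 * √b - 2 * √a := by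
  refine integral_eq_of_hasDerivAt_off_countable (fun x => 2 * √x) invSqrt
    (Set.countable_singleton 0) (by fun_prop) ?_ (intervalIntegrable_invSqrt a b)
  rintro x ⟨-, hx⟩
  rcases lt_or_gt_of_ne (Set.notMem_singleton_iff.1 hx) with hx | hx
  · rw [invSqrt_of_nonpos hx.le]
    refine (hasDerivAt_const x (0 : ℝ)).congr_of_eventuallyEq ?_
    filter_upwards [Iio_mem_nhds hx] with y hy
    rw [Real.sqrt_eq_zero_of_nonpos (le_of_lt hy), mul_zero]
  · have h := (Real.hasDerivAt_sqrt hx.ne').const_mul 2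
    rwa [show 2 * (1 / (2 * √x)) = invSqrt x by unfold invSqrt; field_simp] at h

lemma intervalIntegrable_invSqrt_abs (a b : ℝ) :
    IntervalIntegrable (fun x => invSqrt |x|) volume a b := by
  simp_rw [invSqrt_abs]
  have hneg := (intervalIntegrable_invSqrt (-a) (-b)).comp_sub_left 0
  simp only [zero_sub, neg_neg] at hneg
  exact (intervalIntegrable_invSqrt a b).add hneg

lemma integral_invSqrt_abs_le {a b δ : ℝ} (ha : -a ≤ δ) (hb : b ≤ δ) :
    ∫ x in a..b, invSqrt |x| ≤ 4 * √δ := by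
  have hneg := (intervalIntegrable_invSqrt (-a) (-b)).comp_sub_left 0
  simp only [zero_sub, neg_neg] at hneg
  simp_rw [invSqrt_abs]
  rw [integral_add (intervalIntegrable_invSqrt a b) hneg, integral_comp_neg invSqrt,
    integral_invSqrt, integral_invSqrt]
  linarith [Real.sqrt_le_sqrt ha, Real.sqrt_le_sqrt hb, Real.sqrt_nonneg a, Real.sqrt_nonneg (-b)]

/-- A `1`-periodic majorant with inverse-square-root cusps at the integers. -/
noncomputable def cusp (x : ℝ) : ℝ := invSqrt (Int.fract x) + invSqrt (1 - Int.fract x)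

lemma periodic_cusp : Function.Periodic cusp 1 := fun x => by
  rw [cusp, Int.fract_add_one, cusp]

lemma one_le_cusp (x : ℝ) : 1 ≤ cusp x :=
  (one_le_invSqrt (sub_pos.2 (Int.fract_lt_one x)) (sub_le_self _ (Int.fract_nonneg x))).trans
    (le_add_of_nonneg_left (invSqrt_nonneg _))

lemma cusp_nonneg (x : ℝ) : 0 ≤ cusp x := zero_le_one.trans (one_le_cusp x)

lemma cusp_neg (x : ℝ) : cusp (-x) = cusp x := by
  by_cases h : Int.fract x = 0
  · rw [cusp, cusp, h, Int.fract_neg_eq_zero.2 h]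
  · rw [cusp, cusp, Int.fract_neg h, sub_sub_cancel, add_comm]

lemma cusp_natCast_mul_one_sub (k : ℕ) (x : ℝ) : cusp (k * (1 - x)) = cusp (k * x) := by
  rw [← cusp_neg (k * x), ← periodic_cusp.nat_mul k (-(k * x))]
  congr 1
  ring

lemma cusp_le {y u v : ℝ} (hu : 0 < u) (hv : 0 < v) (huy : u ≤ Int.fract y)
    (hvy : v ≤ 1 - Int.fract y) : cusp y ≤ invSqrt u + invSqrt v :=
  add_le_add (invSqrt_le_invSqrt hu huy) (invSqrt_le_invSqrt hv hvy)

lemma cusp_le_of_abs_sub_intCast_le {y : ℝ} {i : ℤ} (hne : y ≠ i) (hle : |y - i| ≤ 1 / 2) :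
    cusp y ≤ 2 * invSqrt |y - i| := by
  have hpos : 0 < |y - i| := abs_pos.2 (sub_ne_zero.2 hne)
  rw [two_mul]
  rcases lt_or_gt_of_ne hne with h | h
  · rw [abs_of_neg (sub_neg.2 h)] at hpos hle ⊢
    have hfract : Int.fract y = y - i + 1 :=
      Int.fract_eq_iff.2 ⟨by linarith, by linarith, i - 1, by push_cast; ring⟩
    apply cusp_le hpos hpos <;> rw [hfract] <;> linarith
  · rw [abs_of_pos (sub_pos.2 h)] at hpos hle ⊢
    have hfract : Int.fract y = y - i :=
      Int.fract_eq_iff.2 ⟨by linarith, by linarith, i, by ring⟩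
    exact cusp_le hpos hpos hfract.ge (by linarith)

lemma cusp_add_div_le {a : ℤ} {s h : ℕ} {δ : ℝ} (hs : 1 ≤ s) (hsh : s < h)
    (hδ : |δ| ≤ 1 / (4 * h)) :
    cusp (a + s / h + δ) ≤ 2 * √h * (invSqrt s + invSqrt (h - s : ℕ)) := by
  have hh : (0 : ℝ) < h := Nat.cast_pos.2 (hs.trans hsh.le)
  have hs' : (1 : ℝ) ≤ s := Nat.one_le_cast.2 hs
  have hsh' : (s : ℝ) + 1 ≤ h := by exact_mod_cast hsh
  have hlow : 1 / (h : ℝ) ≤ s / h := by gcongr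
  have hhigh : 1 / (h : ℝ) ≤ 1 - s / h := by
    rw [one_sub_div hh.ne']
    gcongr
    linarith
  have hinv : 0 < 1 / (h : ℝ) := by positivity
  have hδ' := abs_le.1 (hδ.trans_eq (by field_simp : 1 / (4 * (h : ℝ)) = 1 / h / 4))
  have hfract : Int.fract (a + (s : ℝ) / h + δ) = s / h + δ :=
    Int.fract_eq_iff.2 ⟨by linarith, by linarith, a, by ring⟩
  have hsplit : (s : ℝ) / (2 ^ 2 * h) = s / h / 4 := by
    field_simp
    norm_num
  have hsplit' : ((h - s : ℕ) : ℝ) / (2 ^ 2 * h) = (1 - s / h) / 4 := by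
    rw [Nat.cast_sub hsh.le]
    field_simp
    norm_num
  have hcusp : cusp (a + s / h + δ) ≤
      invSqrt (s / (2 ^ 2 * h)) + invSqrt ((h - s : ℕ) / (2 ^ 2 * h)) := by
    rw [hsplit, hsplit']
    apply cusp_le <;> (try rw [hfract]) <;> linarith
  refine hcusp.trans_eq ?_
  rw [invSqrt_div s.cast_nonneg, invSqrt_div (Nat.cast_nonneg _), Real.sqrt_mul (by positivity),
    Real.sqrt_sq zero_le_two]
  ring

lemma intervalIntegrable_cusp (a b : ℝ) : IntervalIntegrable cusp volume a b := by
  have hrefl : IntervalIntegrable (fun x => invSqrt (1 - x)) volume 0 1 := by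
    simpa using (intervalIntegrable_invSqrt 1 0).comp_sub_left 1
  have hsum := (intervalIntegrable_invSqrt 0 1).add hrefl
  refine periodic_cusp.intervalIntegrable₀ one_ne_zero ?_ a b
  rw [intervalIntegrable_iff_integrableOn_Ioo_of_le zero_le_one] at hsum ⊢
  refine hsum.congr_fun (fun x hx => ?_) measurableSet_Ioo
  rw [cusp, Int.fract_eq_self.2 ⟨hx.1.le, hx.2⟩]

lemma intervalIntegrable_cusp_mul {k : ℝ} (hk : k ≠ 0) (a b : ℝ) :
    IntervalIntegrable (fun x => cusp (k * x)) volume a b := by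
  simpa [hk] using (intervalIntegrable_cusp (k * a) (k * b)).comp_mul_left (c := k)

end Cusps

section RiemannSums

/-- `q` times the integral of `Φ` over the `n`-th cell `[n/q, (n+1)/q]`. -/
noncomputable def cellMean (q : ℕ) (Φ : ℝ → ℝ) (n : ℕ) : ℝ :=
  q * ∫ x in (n / q : ℝ)..((n + 1) / q), Φ x

/-- A bound for the contribution of the `n`-th cell to the Riemann sum error when nothing is known
about the monotonicity of `Φ` there; the endpoint `1` carries no sample point. -/
noncomputable def cellError (q : ℕ) (Φ : ℝ → ℝ) (n : ℕ) : ℝ :=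
  cellMean q Φ n + if n + 1 < q then Φ ((n + 1) / q) else 0

variable {q : ℕ} {Φ : ℝ → ℝ}

lemma div_le_add_one_div (q n : ℕ) : (n : ℝ) / q ≤ (n + 1) / q := by
  gcongr
  linarith

lemma uIcc_cell_subset {n : ℕ} (hn : n < q) :
    Set.uIcc ((n : ℝ) / q) ((n + 1) / q) ⊆ Set.uIcc 0 1 := by
  have hq : (0 : ℝ) < q := Nat.cast_pos.2 (n.zero_le.trans_lt hn)
  rw [Set.uIcc_of_le (div_le_add_one_div q n), Set.uIcc_of_le zero_le_one]
  exact Set.Icc_subset_Icc (by positivity) ((div_le_one hq).2 (by exact_mod_cast hn))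

lemma cellMean_nonneg (hΦ : ∀ x, 0 ≤ Φ x) (q n : ℕ) : 0 ≤ cellMean q Φ n :=
  mul_nonneg q.cast_nonneg (integral_nonneg (div_le_add_one_div q n) fun x _ => hΦ x)

lemma cellMean_le_cellError (hΦ : ∀ x, 0 ≤ Φ x) (q n : ℕ) :
    cellMean q Φ n ≤ cellError q Φ n := by
  refine le_add_of_nonneg_right ?_
  split_ifs
  exacts [hΦ _, le_rfl]

lemma cellError_nonneg (hΦ : ∀ x, 0 ≤ Φ x) (q n : ℕ) : 0 ≤ cellError q Φ n :=
  (cellMean_nonneg hΦ q n).trans (cellMean_le_cellError hΦ q n)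

lemma mul_integral_eq_sum_cellMean (hq : 0 < q) (hint : IntervalIntegrable Φ volume 0 1) :
    q * ∫ x in (0 : ℝ)..1, Φ x = ∑ n ∈ range q, cellMean q Φ n := by
  have hcell : ∀ n < q,
      IntervalIntegrable Φ volume ((n : ℕ) / q : ℝ) ((n + 1 : ℕ) / q : ℝ) := fun n hn => by
    rw [Nat.cast_add_one]
    exact hint.mono_set (uIcc_cell_subset hn)
  have hsum := sum_integral_adjacent_intervals (a := fun n : ℕ => (n : ℝ) / q) hcell
  simp only [Nat.cast_zero, zero_div, div_self (Nat.cast_ne_zero.2 hq.ne' : (q : ℝ) ≠ 0)] at hsum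
  rw [← hsum, mul_sum]
  exact sum_congr rfl fun n _ => by rw [cellMean, Nat.cast_add_one]

lemma sum_cellMean_sub_sum_le {bad : Finset ℕ} (hΦ : ∀ x, 0 ≤ Φ x) (h0 : 0 ∈ bad)
    (hgood : ∀ n < q, n ∉ bad → cellMean q Φ n ≤ Φ (n / q)) :
    ∑ n ∈ range q, cellMean q Φ n - ∑ n ∈ Ico 1 q, Φ (n / q) ≤ ∑ n ∈ bad, cellError q Φ n := by
  rcases q.eq_zero_or_pos with rfl | hq
  · simpa using sum_nonneg fun n _ => cellError_nonneg hΦ 0 n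
  have hsplit : ∑ n ∈ range q, cellMean q Φ n ≤ ∑ n ∈ range q,
      ((if n ∈ bad then cellError q Φ n else 0) + if n = 0 then 0 else Φ (n / q)) := by
    refine sum_le_sum fun n hn => ?_
    by_cases hb : n ∈ bad
    · rw [if_pos hb]
      refine (cellMean_le_cellError hΦ q n).trans (le_add_of_nonneg_right ?_)
      split_ifs
      exacts [le_rfl, hΦ _]
    · rw [if_neg hb, if_neg (ne_of_mem_of_not_mem h0 hb).symm, zero_add]
      exact hgood n (mem_range.1 hn) hb
  have hsample : ∑ n ∈ range q, (if n = 0 then 0 else Φ (n / q)) = ∑ n ∈ Ico 1 q, Φ (n / q) := by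
    rw [range_eq_Ico, sum_eq_sum_Ico_succ_bot hq, if_pos rfl, zero_add]
    exact sum_congr rfl fun n hn => if_neg (Nat.one_le_iff_ne_zero.1 (mem_Ico.1 hn).1)
  have hbad : ∑ n ∈ range q, (if n ∈ bad then cellError q Φ n else 0) ≤
      ∑ n ∈ bad, cellError q Φ n := by
    rw [← sum_filter]
    exact sum_le_sum_of_subset_of_nonneg (fun n hn => (mem_filter.1 hn).2)
      fun n _ _ => cellError_nonneg hΦ q n
  rw [sum_add_distrib, hsample] at hsplit
  linarith

lemma sum_sub_sum_cellMean_le {bad : Finset ℕ} (hΦ : ∀ x, 0 ≤ Φ x) (h1 : q - 1 ∈ bad)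
    (hgood : ∀ n < q, n ∉ bad → Φ ((n + 1) / q) ≤ cellMean q Φ n) :
    ∑ n ∈ Ico 1 q, Φ (n / q) - ∑ n ∈ range q, cellMean q Φ n ≤ ∑ n ∈ bad, cellError q Φ n := by
  have hsample : ∑ n ∈ Ico 1 q, Φ (n / q) =
      ∑ n ∈ range q, if n + 1 < q then Φ ((n + 1) / q) else 0 := by
    rw [← sum_filter, sum_Ico_eq_sum_range]
    refine sum_congr (Finset.ext fun n => ?_) fun n _ => by push_cast; rw [add_comm]
    simp only [mem_range, mem_filter]
    lia
  calc _ = ∑ n ∈ range q, ((if n + 1 < q then Φ ((n + 1) / q) else 0) - cellMean q Φ n) := by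
        rw [hsample, sum_sub_distrib]
    _ ≤ ∑ n ∈ range q, if n ∈ bad then cellError q Φ n else 0 := by
        refine sum_le_sum fun n hn => ?_
        by_cases hb : n ∈ bad
        · rw [if_pos hb, cellError]
          linarith [cellMean_nonneg hΦ q n]
        · have := mem_range.1 hn
          have := ne_of_mem_of_not_mem h1 hb
          rw [if_neg hb, if_pos (by lia), sub_nonpos]
          exact hgood n (mem_range.1 hn) hb
    _ ≤ ∑ n ∈ bad, cellError q Φ n := by
        rw [← sum_filter]
        exact sum_le_sum_of_subset_of_nonneg (fun n hn => (mem_filter.1 hn).2)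
          fun n _ _ => cellError_nonneg hΦ q n

lemma cellMean_mem_Icc_of_antitoneOn (hq : 0 < q) {n : ℕ}
    (hanti : AntitoneOn Φ (Set.Icc (n / q) ((n + 1) / q))) :
    cellMean q Φ n ∈ Set.Icc (Φ ((n + 1) / q)) (Φ (n / q)) := by
  have hq' : (q : ℝ) ≠ 0 := Nat.cast_ne_zero.2 hq.ne'
  have hle := div_le_add_one_div q n
  have hint : IntervalIntegrable Φ volume ((n : ℝ) / q) ((n + 1) / q) :=
    AntitoneOn.intervalIntegrable (by rwa [Set.uIcc_of_le hle])
  have hconst (c : ℝ) : q * ∫ _ in (n / q : ℝ)..((n + 1) / q), c = c := by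
    rw [intervalIntegral.integral_const, smul_eq_mul]
    field_simp
    ring
  constructor
  · rw [← hconst (Φ _)]
    exact mul_le_mul_of_nonneg_left (integral_mono_on hle intervalIntegrable_const hint
      fun x hx => hanti hx ⟨hle, le_rfl⟩ hx.2) q.cast_nonneg
  · rw [← hconst (Φ _)]
    exact mul_le_mul_of_nonneg_left (integral_mono_on hle hint intervalIntegrable_const
      fun x hx => hanti ⟨le_rfl, hle⟩ hx hx.1) q.cast_nonneg

theorem abs_sum_sub_integral_le_sum_cellError (hq : 0 < q) {bad : Finset ℕ} (hΦ : ∀ x, 0 ≤ Φ x)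
    (hint : IntervalIntegrable Φ volume 0 1) (h0 : 0 ∈ bad) (h1 : q - 1 ∈ bad)
    (hgood : ∀ n < q, n ∉ bad → AntitoneOn Φ (Set.Icc (n / q) ((n + 1) / q))) :
    |∑ n ∈ Ico 1 q, Φ (n / q) - q * ∫ x in (0 : ℝ)..1, Φ x| ≤ ∑ n ∈ bad, cellError q Φ n := by
  rw [mul_integral_eq_sum_cellMean hq hint]
  exact abs_sub_le_iff.2
    ⟨sum_sub_sum_cellMean_le hΦ h1 fun n hn hb =>
      (cellMean_mem_Icc_of_antitoneOn hq (hgood n hn hb)).1,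
    sum_cellMean_sub_sum_le hΦ h0 fun n hn hb =>
      (cellMean_mem_Icc_of_antitoneOn hq (hgood n hn hb)).2⟩

end RiemannSums

section ResidueSums

lemma mul_mod_mem_Ico {u h i : ℕ} (huh : u.Coprime h) (hi : i ∈ Ico 1 h) : u * i % h ∈ Ico 1 h := by
  rw [mem_Ico] at hi ⊢
  refine ⟨Nat.pos_of_ne_zero fun hzero => ?_, Nat.mod_lt _ (by lia)⟩
  exact Nat.not_dvd_of_pos_of_lt hi.1 hi.2
    (huh.symm.dvd_of_dvd_mul_left (Nat.dvd_of_mod_eq_zero hzero))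

lemma sum_Ico_mul_mod {M : Type*} [AddCommMonoid M] {u h : ℕ} (huh : u.Coprime h) (F : ℕ → M) :
    ∑ i ∈ Ico 1 h, F (u * i % h) = ∑ s ∈ Ico 1 h, F s := by
  have hmaps : ∀ i ∈ Ico 1 h, u * i % h ∈ Ico 1 h := fun i hi => mul_mod_mem_Ico huh hi
  have hinj : Set.InjOn (fun i => u * i % h) (Ico 1 h : Finset ℕ) := fun a ha b hb hab =>
    (Nat.ModEq.cancel_left_of_coprime huh.symm hab).eq_of_lt_of_lt
      (mem_Ico.1 ha).2 (mem_Ico.1 hb).2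
  exact sum_nbij _ hmaps hinj (surjOn_of_injOn_of_card_le _ hmaps hinj le_rfl) fun _ _ => rfl

lemma sum_Ico_sub {M : Type*} [AddCommMonoid M] (h : ℕ) (F : ℕ → M) :
    ∑ i ∈ Ico 1 h, F (h - i) = ∑ s ∈ Ico 1 h, F s := by
  rw [sum_Ico_reflect F 1 h.le_succ, Nat.add_sub_cancel_left, Nat.add_sub_cancel]

lemma sum_Ico_one_div_le (h : ℕ) : ∑ s ∈ Ico 1 h, (1 : ℝ) / s ≤ 1 + Real.log h := by
  refine le_trans ?_ (harmonic_le_one_add_log h)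
  rw [harmonic_eq_sum_Icc]
  push_cast
  simp_rw [one_div]
  exact sum_le_sum_of_subset_of_nonneg Ico_subset_Icc_self fun _ _ _ => by positivity

end ResidueSums

section CuspFree

/-- The interval `[x, y]` contains no rational of the form `i/h`. -/
def CuspFree (h : ℕ) (x y : ℝ) : Prop := ∃ i : ℤ, (i : ℝ) < h * x ∧ h * y < i + 1

lemma CuspFree.mono {h : ℕ} {x y x' y' : ℝ} (H : CuspFree h x y) (hx : x ≤ x') (hy : y' ≤ y) :
    CuspFree h x' y' := by
  obtain ⟨i, hix, hiy⟩ := H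
  exact ⟨i, hix.trans_le (by gcongr), lt_of_le_of_lt (by gcongr) hiy⟩

lemma CuspFree.one_sub {h : ℕ} {x y : ℝ} (H : CuspFree h x y) : CuspFree h (1 - y) (1 - x) := by
  obtain ⟨i, hix, hiy⟩ := H
  exact ⟨h - 1 - i, by push_cast; linarith, by push_cast; linarith⟩

variable {q h n : ℕ}

lemma exists_mul_lt_and_lt_mul (hqh : q.Coprime h) (hn : 1 ≤ n) (hnq : n + 1 < q)
    (hcusp : ∀ i ∈ Ico 1 h, q * i / h ≠ n) : ∃ j, q * j < h * n ∧ h * (n + 1) < q * (j + 1) := by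
  have hq : 0 < q := by lia
  have hdvd : ∀ m, 1 ≤ m → m < q → ∀ j, q * j ≠ h * m := fun m hm hmq j hj =>
    Nat.not_dvd_of_pos_of_lt hm hmq (hqh.dvd_of_dvd_mul_left ⟨j, hj.symm⟩)
  set j := h * n / q
  refine ⟨j, (Nat.mul_div_le _ _).lt_of_ne (hdvd n hn (by lia) j), ?_⟩
  by_contra! hle
  have hlt : q * (j + 1) < h * (n + 1) := hle.lt_of_ne (hdvd (n + 1) (by lia) hnq _)
  have hjh : j + 1 < h := by
    refine lt_of_mul_lt_mul_left (hlt.trans_le ?_) q.zero_le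
    rw [mul_comm q]
    exact Nat.mul_le_mul_left h hnq.le
  have hnj : h * n < q * (j + 1) := Nat.lt_mul_div_succ _ hq
  refine hcusp (j + 1) (mem_Ico.2 ⟨Nat.le_add_left 1 j, hjh⟩)
    (Nat.div_eq_of_lt_le (by linarith) (by linarith))

lemma cuspFree_cell (hqh : q.Coprime h) (hn : 1 ≤ n) (hnq : n + 1 < q)
    (hcusp : ∀ i ∈ Ico 1 h, q * i / h ≠ n) : CuspFree h (n / q) ((n + 1) / q) := by
  have hq : (0 : ℝ) < q := Nat.cast_pos.2 (by lia)
  obtain ⟨j, hj, hj'⟩ := exists_mul_lt_and_lt_mul hqh hn hnq hcusp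
  refine ⟨j, ?_, ?_⟩
  · rw [← mul_div_assoc, lt_div_iff₀ hq, mul_comm]
    exact_mod_cast hj
  · rw [← mul_div_assoc, div_lt_iff₀ hq, mul_comm _ (q : ℝ)]
    exact_mod_cast hj'

end CuspFree

section CuspDominated

/-- Nonnegative functions on `(0, 1)` with inverse-square-root cusps at the multiples of `1/h` and
of `1/k`: the product bound controls the singularities in the interior, the sum bound those at the
two endpoints. -/
structure CuspDominated (h k : ℕ) (K : ℝ) (Φ : ℝ → ℝ) : Prop where
  measurable : Measurable Φ
  nonneg : ∀ x, 0 ≤ Φ x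
  le_mul : ∀ x, 0 < x → x < 1 → Φ x ≤ K * (cusp (k * x) * cusp (h * x))
  le_add : ∀ x, 0 < x → x < 1 → Φ x ≤ K * (√h * cusp (h * x) + √k * cusp (k * x))

/-- `Φ` decreases on every subinterval of `(0, 1)` free of multiples of `1/h` and of `1/k`. -/
def AntitoneBetweenCusps (h k : ℕ) (Φ : ℝ → ℝ) : Prop :=
  ∀ x y, 0 < x → x ≤ y → y < 1 → CuspFree h x y → CuspFree k x y → Φ y ≤ Φ x

/-- `Φ` increases on every subinterval of `(0, 1)` free of multiples of `1/h` and of `1/k`. -/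
def MonotoneBetweenCusps (h k : ℕ) (Φ : ℝ → ℝ) : Prop :=
  ∀ x y, 0 < x → x ≤ y → y < 1 → CuspFree h x y → CuspFree k x y → Φ x ≤ Φ y

lemma MonotoneBetweenCusps.comp_one_sub {h k : ℕ} {Φ : ℝ → ℝ} (hmono : MonotoneBetweenCusps h k Φ) :
    AntitoneBetweenCusps h k fun x => Φ (1 - x) := fun x y hx hxy hy hh hk =>
  hmono (1 - y) (1 - x) (by linarith) (by linarith) (by linarith) hh.one_sub hk.one_sub

namespace CuspDominated

variable {h k : ℕ} {K : ℝ} {Φ : ℝ → ℝ}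

lemma symm (H : CuspDominated h k K Φ) : CuspDominated k h K Φ where
  measurable := H.measurable
  nonneg := H.nonneg
  le_mul x h0 h1 := mul_comm (cusp (k * x)) _ ▸ H.le_mul x h0 h1
  le_add x h0 h1 := add_comm (√h * cusp (h * x)) _ ▸ H.le_add x h0 h1

lemma comp_one_sub (H : CuspDominated h k K Φ) : CuspDominated h k K fun x => Φ (1 - x) where
  measurable := H.measurable.comp (measurable_const.sub measurable_id)
  nonneg x := H.nonneg _
  le_mul x h0 h1 := by
    simpa only [cusp_natCast_mul_one_sub] using H.le_mul (1 - x) (by linarith) (by linarith)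
  le_add x h0 h1 := by
    simpa only [cusp_natCast_mul_one_sub] using H.le_add (1 - x) (by linarith) (by linarith)

lemma const_nonneg (H : CuspDominated h k K Φ) : 0 ≤ K := by
  refine nonneg_of_mul_nonneg_left
    ((H.nonneg (1 / 2)).trans (H.le_mul (1 / 2) (by norm_num) (by norm_num))) ?_
  exact zero_lt_one.trans_le (one_le_mul_of_one_le_of_one_le (one_le_cusp _) (one_le_cusp _))

lemma intervalIntegrable (H : CuspDominated h k K Φ) (hh : h ≠ 0) (hk : k ≠ 0) :
    IntervalIntegrable Φ volume 0 1 := by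
  have hmaj : IntervalIntegrable (fun x => K * (√h * cusp (h * x) + √k * cusp (k * x)))
      volume 0 1 :=
    (((intervalIntegrable_cusp_mul (Nat.cast_ne_zero.2 hh) 0 1).const_mul _).add
      ((intervalIntegrable_cusp_mul (Nat.cast_ne_zero.2 hk) 0 1).const_mul _)).const_mul _
  refine hmaj.mono_fun H.measurable.aestronglyMeasurable ?_
  rw [Set.uIoc_of_le zero_le_one, ← restrict_Ioo_eq_restrict_Ioc]
  filter_upwards [ae_restrict_mem measurableSet_Ioo] with x hx
  rw [Real.norm_of_nonneg (H.nonneg x)]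
  exact (H.le_add x hx.1 hx.2).trans (le_abs_self _)

end CuspDominated

end CuspDominated

section InteriorCells

variable {q h k i : ℕ} {K : ℝ} {Φ : ℝ → ℝ}

lemma mul_div_pos_and_add_one_lt (hhq : 2 * h ≤ q) (hi : i ∈ Ico 1 h) :
    0 < q * i / h ∧ q * i / h + 1 < q := by
  obtain ⟨hi1, hih⟩ := mem_Ico.1 hi
  have hh : 0 < h := by lia
  refine ⟨Nat.div_pos (by nlinarith) hh, ?_⟩
  have : q * i / h < q - 1 := Nat.div_lt_of_lt_mul (by zify [(by lia : 1 ≤ q)]; nlinarith)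
  lia

lemma abs_mul_sub_le_of_mem_cell (hh : 0 < h) (hq : 0 < q) {x : ℝ}
    (hx : x ∈ Set.Icc ((q * i / h : ℕ) / q : ℝ) (((q * i / h : ℕ) + 1) / q)) :
    |h * x - i| ≤ h / q := by
  have : (0 : ℝ) < h := Nat.cast_pos.2 hh
  have hq' : (0 : ℝ) < q := Nat.cast_pos.2 hq
  have hlow : (h : ℝ) * (q * i / h : ℕ) ≤ q * i := by exact_mod_cast Nat.mul_div_le (q * i) h
  have hhigh : (q : ℝ) * i ≤ h * ((q * i / h : ℕ) + 1) := by
    exact_mod_cast (Nat.lt_mul_div_succ (q * i) hh).le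
  have hx1 := (div_le_iff₀ hq').1 hx.1
  have hx2 := (le_div_iff₀ hq').1 hx.2
  rw [abs_le, ← neg_div, div_le_iff₀ hq', le_div_iff₀ hq']
  constructor <;> nlinarith

lemma CuspDominated.le_invSqrt_abs (H : CuspDominated h k K Φ) (hk : 0 < k) (hkh : k.Coprime h)
    (hhk : 4 * h * k ≤ q) (hi : i ∈ Ico 1 h) {x : ℝ} (hx0 : 0 < x) (hx1 : x < 1)
    (hne : h * x ≠ i) (hclose : |h * x - i| ≤ h / q) :
    Φ x ≤ 4 * K * √h * (invSqrt (k * i % h : ℕ) + invSqrt (h - k * i % h : ℕ)) *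
      invSqrt |h * x - i| := by
  obtain ⟨hs, hsh⟩ := mem_Ico.1 (mul_mod_mem_Ico hkh hi)
  have hh : (0 : ℝ) < h := Nat.cast_pos.2 (by lia)
  have hk' : (1 : ℝ) ≤ k := Nat.one_le_cast.2 hk
  have hhk' : 4 * (h : ℝ) * k ≤ q := by exact_mod_cast hhk
  have hq : (0 : ℝ) < q := by nlinarith
  have hcuspk : cusp (k * x) ≤
      2 * √h * (invSqrt (k * i % h : ℕ) + invSqrt (h - k * i % h : ℕ)) := by
    have hdiv : (h : ℝ) * (k * i / h : ℕ) + (k * i % h : ℕ) = k * i := by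
      exact_mod_cast Nat.div_add_mod (k * i) h
    have hkx : (k : ℝ) * x = (k * i / h : ℕ) + (k * i % h : ℕ) / h + k / h * (h * x - i) := by
      field_simp
      linear_combination -hdiv
    rw [hkx, ← Int.cast_natCast (k * i / h)]
    refine cusp_add_div_le hs hsh ?_
    rw [abs_mul, abs_of_nonneg (by positivity)]
    calc (k : ℝ) / h * |h * x - i| ≤ k / h * (h / q) := by gcongr
      _ = k / q := by field_simp
      _ ≤ 1 / (4 * h) := by
        rw [div_le_div_iff₀ hq (by positivity)]
        linarith
  have hcusph : cusp (h * x) ≤ 2 * invSqrt |h * x - i| := by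
    refine cusp_le_of_abs_sub_intCast_le (i := i) (mod_cast hne) (hclose.trans ?_)
    rw [div_le_div_iff₀ hq two_pos]
    nlinarith
  have hK := H.const_nonneg
  calc Φ x ≤ K * (cusp (k * x) * cusp (h * x)) := H.le_mul x hx0 hx1
    _ ≤ K * (2 * √h * (invSqrt (k * i % h : ℕ) + invSqrt (h - k * i % h : ℕ)) *
        (2 * invSqrt |h * x - i|)) := by
      refine mul_le_mul_of_nonneg_left ?_ hK
      exact mul_le_mul hcuspk hcusph (cusp_nonneg _) ((cusp_nonneg _).trans hcuspk)
    _ = _ := by ring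

lemma CuspDominated.le_at_cell_end (H : CuspDominated h k K Φ) (hk : 0 < k) (hkh : k.Coprime h)
    (hqh : q.Coprime h) (hhk : 4 * h * k ≤ q) (hi : i ∈ Ico 1 h) :
    Φ (((q * i / h : ℕ) + 1) / q) ≤ 4 * K * √(q * h) *
      (1 / (k * i % h : ℕ) + 1 / (h - k * i % h : ℕ) + 1 / (h - q * i % h : ℕ)) := by
  obtain ⟨-, hmq⟩ := mul_div_pos_and_add_one_lt (q := q) (by nlinarith) hi
  obtain ⟨-, hρh⟩ := mem_Ico.1 (mul_mod_mem_Ico hqh hi)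
  have hq : (0 : ℝ) < q := Nat.cast_pos.2 (by lia)
  have hh : 0 < h := by lia
  set m := q * i / h
  have hdist : (h : ℝ) * ((m + 1) / q) - i = (h - q * i % h : ℕ) / q := by
    have hdiv : (h : ℝ) * m + (q * i % h : ℕ) = q * i := by
      exact_mod_cast Nat.div_add_mod (q * i) h
    rw [Nat.cast_sub hρh.le]
    field_simp
    linear_combination hdiv
  have hpos : (0 : ℝ) < (h - q * i % h : ℕ) / q :=
    div_pos (Nat.cast_pos.2 (Nat.sub_pos_of_lt hρh)) hq
  have hbound := H.le_invSqrt_abs hk hkh hhk hi (x := (m + 1) / q) (by positivity)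
    ((div_lt_one hq).2 (by exact_mod_cast hmq)) (sub_ne_zero.1 (hdist ▸ hpos.ne'))
    (abs_mul_sub_le_of_mem_cell hh (by lia) ⟨div_le_add_one_div q m, le_rfl⟩)
  rw [hdist, abs_of_pos hpos, invSqrt_div (Nat.cast_nonneg _)] at hbound
  have hK := H.const_nonneg
  set a := invSqrt (k * i % h : ℕ)
  set b := invSqrt (h - k * i % h : ℕ)
  set c := invSqrt (h - q * i % h : ℕ)
  calc _ ≤ 4 * K * √h * (a + b) * (√q * c) := hbound
    _ = 4 * K * √(q * h) * ((a + b) * c) := by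
      rw [Real.sqrt_mul q.cast_nonneg]
      ring
    _ ≤ 4 * K * √(q * h) * (a ^ 2 + b ^ 2 + c ^ 2) := by
      gcongr
      nlinarith [sq_nonneg (a - c), sq_nonneg (b - c), sq_nonneg a, sq_nonneg b]
    _ = _ := by simp only [a, b, c, invSqrt_sq (Nat.cast_nonneg _)]

lemma invSqrt_natCast_le {s h : ℕ} (hs : 0 < s) (hsh : s ≤ h) : invSqrt s ≤ √h * (1 / s) := by
  rw [← invSqrt_sq s.cast_nonneg, sq, ← mul_assoc]
  refine le_mul_of_one_le_left (invSqrt_nonneg _) ?_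
  rw [← sqrt_mul_invSqrt (Nat.cast_pos.2 hs)]
  gcongr
  exact invSqrt_nonneg _

lemma intervalIntegrable_invSqrt_abs_mul_sub {c : ℝ} (hc : c ≠ 0) (d a b : ℝ) :
    IntervalIntegrable (fun x => invSqrt |c * x - d|) volume a b := by
  simpa [hc] using ((intervalIntegrable_invSqrt_abs (c * a - d) (c * b - d)).comp_sub_right
    d).comp_mul_left (c := c)

lemma integral_cell_invSqrt_abs_le (hh : 0 < h) (hq : 0 < q) :
    ∫ x in ((q * i / h : ℕ) / q : ℝ)..(((q * i / h : ℕ) + 1) / q), invSqrt |h * x - i| ≤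
      (h : ℝ)⁻¹ * (4 * √(h / q)) := by
  have hle := div_le_add_one_div q (q * i / h)
  rw [integral_comp_mul_sub (fun u => invSqrt |u|) (Nat.cast_ne_zero.2 hh.ne'), smul_eq_mul]
  gcongr
  exact integral_invSqrt_abs_le
    (neg_le.1 (neg_le_of_abs_le (abs_mul_sub_le_of_mem_cell hh hq ⟨le_rfl, hle⟩)))
    (le_of_abs_le (abs_mul_sub_le_of_mem_cell hh hq ⟨hle, le_rfl⟩))

lemma CuspDominated.cellMean_le (H : CuspDominated h k K Φ) (hk : 0 < k) (hkh : k.Coprime h)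
    (hhk : 4 * h * k ≤ q) (hi : i ∈ Ico 1 h) :
    cellMean q Φ (q * i / h) ≤
      16 * K * √(q * h) * (1 / (k * i % h : ℕ) + 1 / (h - k * i % h : ℕ)) := by
  obtain ⟨hm, hmq⟩ := mul_div_pos_and_add_one_lt (q := q) (by nlinarith) hi
  obtain ⟨hs, hsh⟩ := mem_Ico.1 (mul_mod_mem_Ico hkh hi)
  have hh : 0 < h := by lia
  have hh' : (h : ℝ) ≠ 0 := Nat.cast_ne_zero.2 hh.ne'
  have hq : (0 : ℝ) < q := Nat.cast_pos.2 (by lia)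
  have hm' : (0 : ℝ) < (q * i / h : ℕ) := Nat.cast_pos.2 hm
  have hm1 : ((q * i / h : ℕ) + 1 : ℝ) / q < 1 := (div_lt_one hq).2 (by exact_mod_cast hmq)
  have hle := div_le_add_one_div q (q * i / h)
  set m := q * i / h
  set A := invSqrt (k * i % h : ℕ) + invSqrt (h - k * i % h : ℕ)
  have hA : 0 ≤ A := add_nonneg (invSqrt_nonneg _) (invSqrt_nonneg _)
  have hK := H.const_nonneg
  have hmono : ∫ x in (m / q : ℝ)..((m + 1) / q), Φ x ≤
      ∫ x in (m / q : ℝ)..((m + 1) / q), 4 * K * √h * A * invSqrt |h * x - i| := by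
    refine integral_mono_ae_restrict hle
      ((H.intervalIntegrable hh.ne' hk.ne').mono_set (uIcc_cell_subset (by lia)))
      ((intervalIntegrable_invSqrt_abs_mul_sub hh' _ _ _).const_mul _) ?_
    filter_upwards [ae_restrict_mem measurableSet_Icc,
      ae_restrict_of_ae (Measure.ae_ne volume ((i : ℝ) / h))] with x hx hne
    exact H.le_invSqrt_abs hk hkh hhk hi ((by positivity : (0 : ℝ) < m / q).trans_le hx.1)
      (hx.2.trans_lt hm1) (fun heq => hne (eq_div_of_mul_eq hh' (mul_comm x h ▸ heq)))
      (abs_mul_sub_le_of_mem_cell hh (by lia) hx)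
  rw [intervalIntegral.integral_const_mul] at hmono
  calc cellMean q Φ m ≤ q * (4 * K * √h * A * ((h : ℝ)⁻¹ * (4 * √(h / q)))) := by
        unfold cellMean
        gcongr
        exact hmono.trans (by gcongr; exact integral_cell_invSqrt_abs_le hh (by lia))
    _ = 16 * K * √q * A := by
        rw [Real.sqrt_div h.cast_nonneg]
        field_simp
        rw [Real.sq_sqrt h.cast_nonneg, Real.sq_sqrt q.cast_nonneg]
        ring
    _ ≤ 16 * K * √q * (√h * (1 / (k * i % h : ℕ)) + √h * (1 / (h - k * i % h : ℕ))) := by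
        exact mul_le_mul_of_nonneg_left (add_le_add (invSqrt_natCast_le hs hsh.le)
          (invSqrt_natCast_le (by lia) (Nat.sub_le _ _))) (by positivity)
    _ = _ := by
        rw [Real.sqrt_mul q.cast_nonneg]
        ring

end InteriorCells

section EndCells

variable {q h k : ℕ} {K : ℝ} {Φ : ℝ → ℝ}

lemma sqrt_mul_cusp_mul_le {c x : ℝ} (hc : 0 < c) (hx : 0 < x) (hcx : c * x ≤ 1 / 2) :
    √c * cusp (c * x) ≤ 2 * invSqrt x := by
  have hpos : 0 < c * x := mul_pos hc hx
  have hcusp := cusp_le_of_abs_sub_intCast_le (y := c * x) (i := 0)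
    (by exact_mod_cast hpos.ne') (by rwa [Int.cast_zero, sub_zero, abs_of_pos hpos])
  rw [Int.cast_zero, sub_zero, abs_of_pos hpos, invSqrt_mul hc.le] at hcusp
  calc √c * cusp (c * x) ≤ √c * (2 * (invSqrt c * invSqrt x)) := by gcongr
    _ = 2 * (√c * invSqrt c) * invSqrt x := by ring
    _ = 2 * invSqrt x := by rw [sqrt_mul_invSqrt hc, mul_one]

namespace CuspDominated

lemma le_invSqrt (H : CuspDominated h k K Φ) (hh : 0 < h) (hk : 0 < k) (hhq : 2 * h ≤ q)
    (hkq : 2 * k ≤ q) {x : ℝ} (hx0 : 0 < x) (hxq : x ≤ 1 / q) : Φ x ≤ 4 * K * invSqrt x := by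
  have hq : (0 : ℝ) < q := Nat.cast_pos.2 (by lia)
  have hmul {c : ℕ} (hc : 2 * c ≤ q) : (c : ℝ) * x ≤ 1 / 2 := by
    have hc' : (2 : ℝ) * c ≤ q := by exact_mod_cast hc
    calc (c : ℝ) * x ≤ c * (1 / q) := by gcongr
      _ ≤ 1 / 2 := by
        rw [mul_one_div, div_le_div_iff₀ hq two_pos]
        linarith
  have hx1 : x < 1 := hxq.trans_lt ((div_lt_one hq).2 (by exact_mod_cast (by lia : 1 < q)))
  have hK := H.const_nonneg
  calc Φ x ≤ K * (√h * cusp (h * x) + √k * cusp (k * x)) := H.le_add x hx0 hx1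
    _ ≤ K * (2 * invSqrt x + 2 * invSqrt x) := by
      exact mul_le_mul_of_nonneg_left
        (add_le_add (sqrt_mul_cusp_mul_le (Nat.cast_pos.2 hh) hx0 (hmul hhq))
          (sqrt_mul_cusp_mul_le (Nat.cast_pos.2 hk) hx0 (hmul hkq))) hK
    _ = 4 * K * invSqrt x := by ring

lemma cellMean_zero_le (H : CuspDominated h k K Φ) (hh : 0 < h) (hk : 0 < k) (hhq : 2 * h ≤ q)
    (hkq : 2 * k ≤ q) : cellMean q Φ 0 ≤ 8 * K * √q := by
  have hq : (0 : ℝ) < q := Nat.cast_pos.2 (by lia)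
  have hsub := uIcc_cell_subset (by lia : 0 < q)
  rw [Nat.cast_zero, zero_div, zero_add] at hsub
  have hmono : ∫ x in (0 : ℝ)..(1 / q), Φ x ≤ ∫ x in (0 : ℝ)..(1 / q), 4 * K * invSqrt x :=
    integral_mono_on_of_le_Ioo (by positivity)
      ((H.intervalIntegrable hh.ne' hk.ne').mono_set hsub)
      ((intervalIntegrable_invSqrt _ _).const_mul _)
      fun x hx => H.le_invSqrt hh hk hhq hkq hx.1 hx.2.le
  rw [intervalIntegral.integral_const_mul, integral_invSqrt, Real.sqrt_zero, mul_zero, sub_zero,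
    Real.sqrt_div zero_le_one, Real.sqrt_one] at hmono
  rw [cellMean, Nat.cast_zero, zero_div, zero_add]
  calc _ ≤ q * (4 * K * (2 * (1 / √q))) := by gcongr
    _ = 8 * K * √q := by
      field_simp
      rw [Real.sq_sqrt hq.le]
      ring

lemma cellError_zero_le (H : CuspDominated h k K Φ) (hh : 0 < h) (hk : 0 < k) (hhq : 2 * h ≤ q)
    (hkq : 2 * k ≤ q) : cellError q Φ 0 ≤ 12 * K * √q := by
  have hq : (0 : ℝ) < q := Nat.cast_pos.2 (by lia)
  have hpoint := H.le_invSqrt hh hk hhq hkq (x := 1 / q) (by positivity) le_rfl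
  rw [invSqrt_div zero_le_one, invSqrt_one, mul_one] at hpoint
  rw [cellError, if_pos (by lia), Nat.cast_zero, zero_add]
  linarith [H.cellMean_zero_le hh hk hhq hkq]

lemma cellError_last_le (H : CuspDominated h k K Φ) (hh : 0 < h) (hk : 0 < k) (hhq : 2 * h ≤ q)
    (hkq : 2 * k ≤ q) : cellError q Φ (q - 1) ≤ 8 * K * √q := by
  have hq : (q : ℝ) ≠ 0 := Nat.cast_ne_zero.2 (by lia)
  have hrefl : cellMean q (fun x => Φ (1 - x)) 0 = cellMean q Φ (q - 1) := by
    rw [cellMean, cellMean, integral_comp_sub_left, Nat.cast_sub (by lia), Nat.cast_zero,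
      Nat.cast_one, zero_div, sub_zero, zero_add, sub_add_cancel, div_self hq, sub_div,
      div_self hq]
  rw [cellError, if_neg (by lia), add_zero, ← hrefl]
  exact H.comp_one_sub.cellMean_zero_le hh hk hhq hkq

end CuspDominated

end EndCells

section RiemannSumError

variable {q h k : ℕ} {K : ℝ} {Φ : ℝ → ℝ}

/-- The indices of the cells `[n/q, (n+1)/q]` whose interior or right end meets a rational `i/h`
with `0 < i < h`. -/
def cuspCells (q h : ℕ) : Finset ℕ := (Ico 1 h).image fun i => q * i / h

lemma AntitoneBetweenCusps.antitoneOn_cell (hanti : AntitoneBetweenCusps h k Φ)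
    (hqh : q.Coprime h) (hqk : q.Coprime k) {n : ℕ} (hn : n < q)
    (hbad : n ∉ {0, q - 1} ∪ (cuspCells q h ∪ cuspCells q k)) :
    AntitoneOn Φ (Set.Icc (n / q) ((n + 1) / q)) := by
  simp only [cuspCells, mem_union, mem_insert, mem_singleton, mem_image, not_or, not_exists,
    not_and] at hbad
  obtain ⟨⟨hn0, hn1⟩, hnh, hnk⟩ := hbad
  have hq : (0 : ℝ) < q := Nat.cast_pos.2 (by lia)
  have hlow : (0 : ℝ) < n / q := div_pos (Nat.cast_pos.2 (by lia)) hq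
  have hhigh : ((n : ℝ) + 1) / q < 1 :=
    (div_lt_one hq).2 (by exact_mod_cast (by lia : n + 1 < q))
  intro x hx y hy hxy
  exact hanti x y (hlow.trans_le hx.1) hxy (hy.2.trans_lt hhigh)
    ((cuspFree_cell hqh (by lia) (by lia) hnh).mono hx.1 hy.2)
    ((cuspFree_cell hqk (by lia) (by lia) hnk).mono hx.1 hy.2)

lemma CuspDominated.sum_cuspCells_le (H : CuspDominated h k K Φ) (hk : 0 < k)
    (hhk : h.Coprime k) (hqh : q.Coprime h) (hhkq : 4 * h * k ≤ q) :
    ∑ n ∈ cuspCells q h, cellError q Φ n ≤ 60 * K * √(q * h) * (1 + Real.log h) := by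
  have hK := H.const_nonneg
  calc ∑ n ∈ cuspCells q h, cellError q Φ n ≤ ∑ i ∈ Ico 1 h, cellError q Φ (q * i / h) :=
        sum_image_le_of_nonneg fun n _ => cellError_nonneg H.nonneg q n
    _ ≤ ∑ i ∈ Ico 1 h, 20 * K * √(q * h) *
          (1 / (k * i % h : ℕ) + 1 / (h - k * i % h : ℕ) + 1 / (h - q * i % h : ℕ)) := by
        refine sum_le_sum fun i hi => ?_
        have hmean := H.cellMean_le hk hhk.symm hhkq hi
        have hpoint := H.le_at_cell_end hk hhk.symm hqh hhkq hi
        have hextra : 0 ≤ 16 * K * √(q * h) * (1 / (h - q * i % h : ℕ)) := by positivity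
        rw [cellError, if_pos (mul_div_pos_and_add_one_lt (by nlinarith) hi).2]
        linarith
    _ = 20 * K * √(q * h) * (3 * ∑ s ∈ Ico 1 h, (1 : ℝ) / s) := by
        rw [← mul_sum, sum_add_distrib, sum_add_distrib,
          sum_Ico_mul_mod hhk.symm fun s => (1 : ℝ) / s,
          sum_Ico_mul_mod hhk.symm fun s => (1 : ℝ) / (h - s : ℕ),
          sum_Ico_mul_mod hqh fun s => (1 : ℝ) / (h - s : ℕ), sum_Ico_sub h fun s => (1 : ℝ) / s]
        ring
    _ ≤ 20 * K * √(q * h) * (3 * (1 + Real.log h)) := by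
        gcongr
        exact sum_Ico_one_div_le h
    _ = _ := by ring

lemma sum_union_cellError_le (hΦ : ∀ x, 0 ≤ Φ x) (s t : Finset ℕ) :
    ∑ n ∈ s ∪ t, cellError q Φ n ≤ ∑ n ∈ s, cellError q Φ n + ∑ n ∈ t, cellError q Φ n := by
  rw [← sum_union_inter]
  exact le_add_of_nonneg_right (sum_nonneg fun n _ => cellError_nonneg hΦ q n)

theorem AntitoneBetweenCusps.abs_sum_sub_integral_le (hanti : AntitoneBetweenCusps h k Φ)
    (H : CuspDominated h k K Φ) (hh : 0 < h) (hk : 0 < k) (hhk : h.Coprime k)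
    (hqh : q.Coprime h) (hqk : q.Coprime k) (hhkq : 4 * h * k ≤ q) :
    |∑ n ∈ Ico 1 q, Φ (n / q) - q * ∫ x in (0 : ℝ)..1, Φ x| ≤
      140 * K * (√(q * (h + k)) * (1 + Real.log q)) := by
  have hhq : 2 * h ≤ q := by nlinarith
  have hkq : 2 * k ≤ q := by nlinarith
  have hK := H.const_nonneg
  have hbad := abs_sum_sub_integral_le_sum_cellError (by lia) H.nonneg
    (H.intervalIntegrable hh.ne' hk.ne') (bad := {0, q - 1} ∪ (cuspCells q h ∪ cuspCells q k))
    (by simp) (by simp) fun n hn hgood => hanti.antitoneOn_cell hqh hqk hn hgood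
  have hends : ∑ n ∈ ({0, q - 1} : Finset ℕ), cellError q Φ n ≤ 20 * K * √q := by
    rw [sum_pair (by lia)]
    linarith [H.cellError_zero_le hh hk hhq hkq, H.cellError_last_le hh hk hhq hkq]
  have hlog {c : ℕ} (hc : 0 < c) (hcq : 2 * c ≤ q) : Real.log c ≤ Real.log q :=
    Real.log_le_log (Nat.cast_pos.2 hc) (Nat.cast_le.2 (by lia))
  have hlog0 : 0 ≤ Real.log q := Real.log_natCast_nonneg q
  have hh1 : (1 : ℝ) ≤ h := Nat.one_le_cast.2 hh
  have hq : √(q : ℝ) ≤ √(q * (h + k)) :=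
    Real.sqrt_le_sqrt (le_mul_of_one_le_right q.cast_nonneg (by linarith))
  calc _ ≤ 20 * K * √q + (60 * K * √(q * h) * (1 + Real.log h) +
        60 * K * √(q * k) * (1 + Real.log k)) :=
        hbad.trans <| (sum_union_cellError_le H.nonneg _ _).trans <| add_le_add hends <|
          (sum_union_cellError_le H.nonneg _ _).trans <|
            add_le_add (H.sum_cuspCells_le hk hhk hqh hhkq)
              (H.symm.sum_cuspCells_le hh hhk.symm hqk (by linarith))
    _ ≤ 20 * K * (√(q * (h + k)) * (1 + Real.log q)) +
        (60 * K * √(q * (h + k)) * (1 + Real.log q) +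
          60 * K * √(q * (h + k)) * (1 + Real.log q)) := by
        gcongr 20 * K * ?_ + (60 * K * √(q * ?_) * (1 + ?_) + 60 * K * √(q * ?_) * (1 + ?_))
        · exact hq.trans (le_mul_of_one_le_right (Real.sqrt_nonneg _) (by linarith))
        exacts [le_add_of_nonneg_right k.cast_nonneg, hlog hh hhq,
          le_add_of_nonneg_left h.cast_nonneg, hlog hk hkq]
    _ = _ := by ring

theorem MonotoneBetweenCusps.abs_sum_sub_integral_le (hmono : MonotoneBetweenCusps h k Φ)
    (H : CuspDominated h k K Φ) (hh : 0 < h) (hk : 0 < k) (hhk : h.Coprime k)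
    (hqh : q.Coprime h) (hqk : q.Coprime k) (hhkq : 4 * h * k ≤ q) :
    |∑ n ∈ Ico 1 q, Φ (n / q) - q * ∫ x in (0 : ℝ)..1, Φ x| ≤
      140 * K * (√(q * (h + k)) * (1 + Real.log q)) := by
  have hrefl := hmono.comp_one_sub.abs_sum_sub_integral_le H.comp_one_sub hh hk hhk hqh hqk hhkq
  have hsum : ∑ n ∈ Ico 1 q, Φ (1 - n / q) = ∑ n ∈ Ico 1 q, Φ (n / q) := by
    rw [← sum_Ico_sub q fun n => Φ (n / q)]
    refine sum_congr rfl fun n hn => ?_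
    have hnq := (mem_Ico.1 hn).2
    rw [Nat.cast_sub hnq.le, sub_div, div_self (Nat.cast_ne_zero.2 (by lia))]
  have hint : ∫ x in (0 : ℝ)..1, Φ (1 - x) = ∫ x in (0 : ℝ)..1, Φ x := by
    rw [integral_comp_sub_left, sub_self, sub_zero]
  rwa [hsum, hint] at hrefl

end RiemannSumError

section RiemannErrors

/-- `Φ` is integrable on `[0, 1]` and its `q`-point Riemann sum, without the end point, is within
`A` of `q` times its integral. -/
structure HasRiemannError (q : ℕ) (A : ℝ) (Φ : ℝ → ℝ) : Prop where
  intervalIntegrable : IntervalIntegrable Φ volume 0 1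
  abs_sub_le : |∑ n ∈ Ico 1 q, Φ (n / q) - q * ∫ x in (0 : ℝ)..1, Φ x| ≤ A

namespace HasRiemannError

variable {q : ℕ} {A B : ℝ} {Φ Ψ : ℝ → ℝ}

lemma add (HΦ : HasRiemannError q A Φ) (HΨ : HasRiemannError q B Ψ) :
    HasRiemannError q (A + B) fun x => Φ x + Ψ x where
  intervalIntegrable := HΦ.intervalIntegrable.add HΨ.intervalIntegrable
  abs_sub_le := by
    rw [integral_add HΦ.intervalIntegrable HΨ.intervalIntegrable, sum_add_distrib, mul_add,
      add_sub_add_comm]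
    exact (abs_add_le _ _).trans (add_le_add HΦ.abs_sub_le HΨ.abs_sub_le)

lemma const_mul (HΦ : HasRiemannError q A Φ) (c : ℝ) :
    HasRiemannError q (|c| * A) fun x => c * Φ x where
  intervalIntegrable := HΦ.intervalIntegrable.const_mul c
  abs_sub_le := by
    rw [intervalIntegral.integral_const_mul, ← mul_sum, mul_left_comm, ← mul_sub, abs_mul]
    exact mul_le_mul_of_nonneg_left HΦ.abs_sub_le (abs_nonneg c)

lemma sub (HΦ : HasRiemannError q A Φ) (HΨ : HasRiemannError q B Ψ) :
    HasRiemannError q (A + B) fun x => Φ x - Ψ x := by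
  simpa only [abs_neg, abs_one, one_mul, neg_one_mul, ← sub_eq_add_neg] using
    HΦ.add (HΨ.const_mul (-1))

lemma const (hq : 0 < q) (c : ℝ) : HasRiemannError q |c| fun _ => c where
  intervalIntegrable := intervalIntegrable_const
  abs_sub_le := by
    rw [sum_const, Nat.card_Ico, intervalIntegral.integral_const, sub_zero, one_smul, nsmul_eq_mul,
      Nat.cast_pred hq, ← sub_mul, sub_sub_cancel_left, neg_one_mul, abs_neg]

end HasRiemannError

variable {q h k : ℕ} {K : ℝ} {Φ : ℝ → ℝ}

lemma AntitoneBetweenCusps.hasRiemannError (hanti : AntitoneBetweenCusps h k Φ)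
    (H : CuspDominated h k K Φ) (hh : 0 < h) (hk : 0 < k) (hhk : h.Coprime k)
    (hqh : q.Coprime h) (hqk : q.Coprime k) (hhkq : 4 * h * k ≤ q) :
    HasRiemannError q (140 * K * (√(q * (h + k)) * (1 + Real.log q))) Φ :=
  ⟨H.intervalIntegrable hh.ne' hk.ne',
    hanti.abs_sum_sub_integral_le H hh hk hhk hqh hqk hhkq⟩

lemma MonotoneBetweenCusps.hasRiemannError (hmono : MonotoneBetweenCusps h k Φ)
    (H : CuspDominated h k K Φ) (hh : 0 < h) (hk : 0 < k) (hhk : h.Coprime k)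
    (hqh : q.Coprime h) (hqk : q.Coprime k) (hhkq : 4 * h * k ≤ q) :
    HasRiemannError q (140 * K * (√(q * (h + k)) * (1 + Real.log q))) Φ :=
  ⟨H.intervalIntegrable hh.ne' hk.ne',
    hmono.abs_sum_sub_integral_le H hh hk hhk hqh hqk hhkq⟩

end RiemannErrors

section BetweenCusps

variable {h k : ℕ} {Φ Ψ f : ℝ → ℝ}

lemma AntitoneBetweenCusps.symm (H : AntitoneBetweenCusps h k Φ) : AntitoneBetweenCusps k h Φ :=
  fun x y hx hxy hy hk hh => H x y hx hxy hy hh hk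

lemma MonotoneBetweenCusps.symm (H : MonotoneBetweenCusps h k Φ) : MonotoneBetweenCusps k h Φ :=
  fun x y hx hxy hy hk hh => H x y hx hxy hy hh hk

lemma AntitoneBetweenCusps.mul (HΦ : AntitoneBetweenCusps h k Φ)
    (HΨ : AntitoneBetweenCusps h k Ψ) (hΦ : ∀ x, 0 ≤ Φ x) (hΨ : ∀ x, 0 ≤ Ψ x) :
    AntitoneBetweenCusps h k fun x => Φ x * Ψ x := fun x y hx hxy hy hh hk =>
  mul_le_mul (HΦ x y hx hxy hy hh hk) (HΨ x y hx hxy hy hh hk) (hΨ y) (hΦ x)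

lemma MonotoneBetweenCusps.mul (HΦ : MonotoneBetweenCusps h k Φ)
    (HΨ : MonotoneBetweenCusps h k Ψ) (hΦ : ∀ x, 0 ≤ Φ x) (hΨ : ∀ x, 0 ≤ Ψ x) :
    MonotoneBetweenCusps h k fun x => Φ x * Ψ x := fun x y hx hxy hy hh hk =>
  mul_le_mul (HΦ x y hx hxy hy hh hk) (HΨ x y hx hxy hy hh hk) (hΨ x) (hΦ y)

lemma CuspFree.exists_unitRep_eq {x y : ℝ} (H : CuspFree h x y) (hxy : x ≤ y) :
    ∃ i : ℤ, (unitRep (h * x) = h * x - i ∧ unitRep (h * y) = h * y - i) ∧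
      unitRep (-(h * x)) = i + 1 - h * x ∧ unitRep (-(h * y)) = i + 1 - h * y := by
  obtain ⟨i, hix, hiy⟩ := H
  have hmul : (h : ℝ) * x ≤ h * y := mul_le_mul_of_nonneg_left hxy h.cast_nonneg
  exact ⟨i, ⟨unitRep_eq_sub_intCast hix (hmul.trans hiy.le),
    unitRep_eq_sub_intCast (hix.trans_le hmul) hiy.le⟩,
    unitRep_neg_eq hix (hmul.trans_lt hiy), unitRep_neg_eq (hix.trans_le hmul) hiy⟩

lemma CuspFree.unitRep_mul_le {x y : ℝ} (H : CuspFree h x y) (hxy : x ≤ y) :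
    unitRep (h * x) ≤ unitRep (h * y) := by
  obtain ⟨i, ⟨hx, hy⟩, -⟩ := H.exists_unitRep_eq hxy
  rw [hx, hy]
  gcongr

lemma CuspFree.unitRep_neg_mul_le {x y : ℝ} (H : CuspFree h x y) (hxy : x ≤ y) :
    unitRep (-(h * y)) ≤ unitRep (-(h * x)) := by
  obtain ⟨i, -, hx, hy⟩ := H.exists_unitRep_eq hxy
  rw [hx, hy]
  gcongr

lemma antitoneBetweenCusps_comp_mul (hf : AntitoneOn f (Set.Ioi 0)) :
    AntitoneBetweenCusps h k fun x => f (unitRep (h * x)) := fun _ _ _ hxy _ hh _ =>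
  hf (unitRep_pos _) (unitRep_pos _) (hh.unitRep_mul_le hxy)

lemma antitoneBetweenCusps_comp_neg_mul (hf : MonotoneOn f (Set.Ioi 0)) :
    AntitoneBetweenCusps h k fun x => f (unitRep (-(h * x))) := fun _ _ _ hxy _ hh _ =>
  hf (unitRep_pos _) (unitRep_pos _) (hh.unitRep_neg_mul_le hxy)

lemma monotoneBetweenCusps_comp_mul (hf : MonotoneOn f (Set.Ioi 0)) :
    MonotoneBetweenCusps h k fun x => f (unitRep (h * x)) := fun _ _ _ hxy _ hh _ =>
  hf (unitRep_pos _) (unitRep_pos _) (hh.unitRep_mul_le hxy)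

lemma monotoneBetweenCusps_comp_neg_mul (hf : AntitoneOn f (Set.Ioi 0)) :
    MonotoneBetweenCusps h k fun x => f (unitRep (-(h * x))) := fun _ _ _ hxy _ hh _ =>
  hf (unitRep_pos _) (unitRep_pos _) (hh.unitRep_neg_mul_le hxy)

lemma antitoneOn_invSqrt : AntitoneOn invSqrt (Set.Ioi 0) := fun _ hx _ _ => invSqrt_le_invSqrt hx

lemma monotoneOn_regularPart : MonotoneOn regularPart (Set.Ioi 0) := fun _ hx _ _ =>
  regularPart_le_regularPart (Set.mem_Ioi.1 hx).le

end BetweenCusps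

section ShiftedFactors

lemma zetaHalfMod_eq_invSqrt_sub (x : ℝ) :
    zetaHalfMod x = invSqrt (unitRep x) - regularPart (unitRep x) := zetaHalf_eq_invSqrt_sub _

lemma invSqrt_unitRep_neg_le (x : ℝ) : invSqrt (unitRep (-x)) ≤ cusp x := by
  rw [unitRep, neg_neg]
  exact le_add_of_nonneg_left (invSqrt_nonneg _)

lemma invSqrt_unitRep_le (x : ℝ) : invSqrt (unitRep x) ≤ cusp x := by
  simpa only [neg_neg, cusp_neg] using invSqrt_unitRep_neg_le (-x)

lemma regularPart_unitRep_nonneg (x : ℝ) : 0 ≤ regularPart (unitRep x) :=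
  regularPart_nonneg (unitRep_pos x).le

lemma regularPart_unitRep_le (x : ℝ) : regularPart (unitRep x) ≤ 3 :=
  regularPart_le_three (unitRep_pos x).le (unitRep_le_one x)

lemma zetaHalfMod_add_three_nonneg (x : ℝ) : 0 ≤ zetaHalfMod x + 3 := by
  rw [zetaHalfMod_eq_invSqrt_sub]
  linarith [invSqrt_nonneg (unitRep x), regularPart_unitRep_le x]

lemma zetaHalfMod_add_three_le (x : ℝ) : zetaHalfMod x + 3 ≤ cusp x + 3 := by
  rw [zetaHalfMod_eq_invSqrt_sub]
  linarith [invSqrt_unitRep_le x, regularPart_unitRep_nonneg x]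

variable {h k : ℕ} {Φ M : ℝ → ℝ}

lemma antitoneBetweenCusps_zetaHalfMod_add_three :
    AntitoneBetweenCusps h k fun x => zetaHalfMod (h * x) + 3 :=
  antitoneBetweenCusps_comp_mul (f := fun x => zetaHalf x + 3) fun _ hx _ _ hxy =>
    add_le_add_left (zetaHalf_le_zetaHalf hx hxy) 3

lemma cuspDominated_of_le (hh : 0 < h) (hk : 0 < k) (hmeas : Measurable Φ) (hΦ : ∀ x, 0 ≤ Φ x)
    (hle : ∀ x, 0 < x → x < 1 → Φ x ≤ M x + 3 * cusp (k * x) + 3 * cusp (h * x) + 9)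
    (hmul : ∀ x, 0 < x → x < 1 → M x ≤ cusp (k * x) * cusp (h * x))
    (hadd : ∀ x, 0 < x → x < 1 → M x ≤ √h * cusp (h * x) + √k * cusp (k * x)) :
    CuspDominated h k 16 Φ where
  measurable := hmeas
  nonneg := hΦ
  le_mul x h0 h1 := by
    have hk1 := one_le_cusp (k * x)
    have hh1 := one_le_cusp (h * x)
    nlinarith [hle x h0 h1, hmul x h0 h1, mul_nonneg (sub_nonneg.2 hk1) (sub_nonneg.2 hh1)]
  le_add x h0 h1 := by
    have hself {c : ℕ} (hc : 0 < c) : cusp (c * x) ≤ √c * cusp (c * x) :=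
      le_mul_of_one_le_left (cusp_nonneg _) (Real.one_le_sqrt.2 (Nat.one_le_cast.2 hc))
    linarith [hle x h0 h1, hadd x h0 h1, hself hh, hself hk, one_le_cusp (k * x),
      one_le_cusp (h * x)]

lemma cuspDominated_of_le_cusp (hh : 0 < h) (hk : 0 < k) (hmeas : Measurable Φ)
    (hΦ : ∀ x, 0 ≤ Φ x) (hle : ∀ x, Φ x ≤ 3 * cusp (h * x) + 9) : CuspDominated h k 16 Φ :=
  cuspDominated_of_le hh hk hmeas hΦ (M := fun _ => 0)
    (fun x _ _ => by linarith [hle x, cusp_nonneg (k * x)])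
    (fun _ _ _ => mul_nonneg (cusp_nonneg _) (cusp_nonneg _))
    (fun _ _ _ => add_nonneg (mul_nonneg (Real.sqrt_nonneg _) (cusp_nonneg _))
      (mul_nonneg (Real.sqrt_nonneg _) (cusp_nonneg _)))

end ShiftedFactors

section OppositeTwists

variable {q h k : ℕ}

lemma measurable_unitRep_mul (c : ℝ) : Measurable fun x => unitRep (c * x) :=
  measurable_unitRep.comp (measurable_const_mul c)

lemma measurable_unitRep_neg_mul (c : ℝ) : Measurable fun x => unitRep (-(c * x)) :=
  measurable_unitRep.comp (measurable_const_mul c).neg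

/-- The positive integer `h X + k Y` for the representatives `X` of `k x` and `Y` of `-h x`; as a
function of `x` it is constant between cusps. -/
noncomputable def oppositeGap (h k : ℕ) (x : ℝ) : ℝ :=
  h * unitRep (k * x) + k * unitRep (-(h * x))

lemma measurable_oppositeGap : Measurable (oppositeGap h k) :=
  ((measurable_unitRep_mul k).const_mul _).add ((measurable_unitRep_neg_mul h).const_mul _)

lemma one_le_oppositeGap (hh : 0 < h) (hk : 0 < k) (x : ℝ) : 1 ≤ oppositeGap h k x := by
  obtain ⟨i, hi⟩ := exists_unitRep_eq_sub_intCast (k * x)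
  obtain ⟨j, hj⟩ := exists_unitRep_eq_sub_intCast (-(h * x))
  have hpos : 0 < oppositeGap h k x :=
    add_pos (mul_pos (Nat.cast_pos.2 hh) (unitRep_pos _))
      (mul_pos (Nat.cast_pos.2 hk) (unitRep_pos _))
  have hint : oppositeGap h k x = ((-(h * i) - k * j : ℤ) : ℝ) := by
    rw [oppositeGap, hi, hj]
    push_cast
    ring
  rw [hint] at hpos ⊢
  exact_mod_cast Int.cast_pos.1 hpos

lemma oppositeGap_nonneg (h k : ℕ) (x : ℝ) : 0 ≤ oppositeGap h k x :=
  add_nonneg (mul_nonneg h.cast_nonneg (unitRep_pos _).le)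
    (mul_nonneg k.cast_nonneg (unitRep_pos _).le)

lemma CuspFree.oppositeGap_eq {x y : ℝ} (hh : CuspFree h x y) (hk : CuspFree k x y)
    (hxy : x ≤ y) : oppositeGap h k x = oppositeGap h k y := by
  obtain ⟨i, -, hhx, hhy⟩ := hh.exists_unitRep_eq hxy
  obtain ⟨j, ⟨hkx, hky⟩, -⟩ := hk.exists_unitRep_eq hxy
  rw [oppositeGap, oppositeGap, hhx, hhy, hkx, hky]
  ring

lemma invSqrt_mul_invSqrt_le {a b x y : ℝ} (ha : 0 ≤ a) (hb : 0 ≤ b) (hx : 0 < x) (hy : 0 < y)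
    (h : 1 ≤ a * x + b * y) : invSqrt x * invSqrt y ≤ √a * invSqrt y + √b * invSqrt x := by
  have hsum : 1 ≤ √a * √x + √b * √y := by
    rw [← Real.sqrt_mul ha, ← Real.sqrt_mul hb, ← one_le_sq_iff₀ (by positivity), add_sq,
      Real.sq_sqrt (mul_nonneg ha hx.le), Real.sq_sqrt (mul_nonneg hb hy.le)]
    linarith [mul_nonneg (Real.sqrt_nonneg (a * x)) (Real.sqrt_nonneg (b * y))]
  calc _ ≤ (√a * √x + √b * √y) * (invSqrt x * invSqrt y) :=
        le_mul_of_one_le_left (mul_nonneg (invSqrt_nonneg _) (invSqrt_nonneg _)) hsum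
    _ = √a * invSqrt y * (√x * invSqrt x) + √b * invSqrt x * (√y * invSqrt y) := by ring
    _ = _ := by rw [sqrt_mul_invSqrt hx, sqrt_mul_invSqrt hy, mul_one, mul_one]

/-- The part of `X⁻¹ᐟ² Y⁻¹ᐟ²` that decreases between cusps, for the representatives `X` of `k x`
and `Y` of `-h x`. -/
noncomputable def decreasingPart (h k : ℕ) (x : ℝ) : ℝ :=
  k / oppositeGap h k x * (invSqrt (unitRep (k * x)) * √(unitRep (-(h * x))))

/-- The part of `X⁻¹ᐟ² Y⁻¹ᐟ²` that increases between cusps, for the representatives `X` of `k x`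
and `Y` of `-h x`. -/
noncomputable def increasingPart (h k : ℕ) (x : ℝ) : ℝ :=
  h / oppositeGap h k x * (√(unitRep (k * x)) * invSqrt (unitRep (-(h * x))))

lemma decreasingPart_add_increasingPart (hh : 0 < h) (hk : 0 < k) (x : ℝ) :
    decreasingPart h k x + increasingPart h k x =
      invSqrt (unitRep (k * x)) * invSqrt (unitRep (-(h * x))) := by
  have hX := sqrt_mul_invSqrt (unitRep_pos (k * x))
  have hY := sqrt_mul_invSqrt (unitRep_pos (-(h * x)))
  have hgap : oppositeGap h k x ≠ 0 := (zero_lt_one.trans_le (one_le_oppositeGap hh hk x)).ne'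
  have hgap' : h * √(unitRep (k * x)) ^ 2 + k * √(unitRep (-(h * x))) ^ 2 = oppositeGap h k x := by
    rw [Real.sq_sqrt (unitRep_pos _).le, Real.sq_sqrt (unitRep_pos _).le, oppositeGap]
  rw [decreasingPart, increasingPart, div_mul_eq_mul_div, div_mul_eq_mul_div, ← add_div,
    div_eq_iff hgap, ← hgap']
  linear_combination (-k * invSqrt (unitRep (k * x)) * √(unitRep (-(h * x)))) * hY -
    (h * √(unitRep (k * x)) * invSqrt (unitRep (-(h * x)))) * hX

lemma decreasingPart_nonneg (h k : ℕ) (x : ℝ) : 0 ≤ decreasingPart h k x :=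
  mul_nonneg (div_nonneg k.cast_nonneg (oppositeGap_nonneg h k x))
    (mul_nonneg (invSqrt_nonneg _) (Real.sqrt_nonneg _))

lemma increasingPart_nonneg (h k : ℕ) (x : ℝ) : 0 ≤ increasingPart h k x :=
  mul_nonneg (div_nonneg h.cast_nonneg (oppositeGap_nonneg h k x))
    (mul_nonneg (Real.sqrt_nonneg _) (invSqrt_nonneg _))

lemma antitoneBetweenCusps_decreasingPart : AntitoneBetweenCusps h k (decreasingPart h k) := by
  refine AntitoneBetweenCusps.mul (fun x y _ hxy _ hh hk => by rw [hh.oppositeGap_eq hk hxy])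
    (.mul (antitoneBetweenCusps_comp_mul antitoneOn_invSqrt).symm
      (antitoneBetweenCusps_comp_neg_mul (Real.sqrt_monotone.monotoneOn _))
      (fun _ => invSqrt_nonneg _) fun _ => Real.sqrt_nonneg _)
    (fun x => div_nonneg k.cast_nonneg (oppositeGap_nonneg h k x))
    fun _ => mul_nonneg (invSqrt_nonneg _) (Real.sqrt_nonneg _)

lemma monotoneBetweenCusps_increasingPart : MonotoneBetweenCusps h k (increasingPart h k) := by
  refine MonotoneBetweenCusps.mul (fun x y _ hxy _ hh hk => by rw [hh.oppositeGap_eq hk hxy])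
    (.mul (monotoneBetweenCusps_comp_mul (Real.sqrt_monotone.monotoneOn _)).symm
      (monotoneBetweenCusps_comp_neg_mul antitoneOn_invSqrt)
      (fun _ => Real.sqrt_nonneg _) fun _ => invSqrt_nonneg _)
    (fun x => div_nonneg h.cast_nonneg (oppositeGap_nonneg h k x))
    fun _ => mul_nonneg (Real.sqrt_nonneg _) (invSqrt_nonneg _)

lemma cuspDominated_of_le_invSqrt_mul (hh : 0 < h) (hk : 0 < k) {Φ : ℝ → ℝ}
    (hmeas : Measurable Φ) (hΦ : ∀ x, 0 ≤ Φ x)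
    (hle : ∀ x, Φ x ≤ invSqrt (unitRep (k * x)) * invSqrt (unitRep (-(h * x)))) :
    CuspDominated h k 16 Φ := by
  refine cuspDominated_of_le hh hk hmeas hΦ
    (M := fun x => invSqrt (unitRep (k * x)) * invSqrt (unitRep (-(h * x))))
    (fun x _ _ => ?_) (fun x _ _ => ?_) fun x _ _ => ?_
  · linarith [hle x, cusp_nonneg (k * x), cusp_nonneg (h * x)]
  · exact mul_le_mul (invSqrt_unitRep_le _) (invSqrt_unitRep_neg_le _) (invSqrt_nonneg _)
      (cusp_nonneg _)
  · refine (invSqrt_mul_invSqrt_le h.cast_nonneg k.cast_nonneg (unitRep_pos _) (unitRep_pos _)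
      (one_le_oppositeGap hh hk x)).trans ?_
    gcongr
    exacts [invSqrt_unitRep_neg_le _, invSqrt_unitRep_le _]

lemma cuspDominated_decreasingPart (hh : 0 < h) (hk : 0 < k) :
    CuspDominated h k 16 (decreasingPart h k) := by
  refine cuspDominated_of_le_invSqrt_mul hh hk ?_ (decreasingPart_nonneg h k) fun x => ?_
  · exact (measurable_const.div measurable_oppositeGap).mul
      ((measurable_invSqrt.comp (measurable_unitRep_mul k)).mul (measurable_unitRep_neg_mul h).sqrt)
  · rw [← decreasingPart_add_increasingPart hh hk]
    exact le_add_of_nonneg_right (increasingPart_nonneg h k x)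

lemma cuspDominated_increasingPart (hh : 0 < h) (hk : 0 < k) :
    CuspDominated h k 16 (increasingPart h k) := by
  refine cuspDominated_of_le_invSqrt_mul hh hk ?_ (increasingPart_nonneg h k) fun x => ?_
  · exact (measurable_const.div measurable_oppositeGap).mul
      ((measurable_unitRep_mul k).sqrt.mul (measurable_invSqrt.comp (measurable_unitRep_neg_mul h)))
  · rw [← decreasingPart_add_increasingPart hh hk]
    exact le_add_of_nonneg_left (decreasingPart_nonneg h k x)

lemma cuspDominated_regularPart (hh : 0 < h) (hk : 0 < k) :
    CuspDominated h k 16 fun x => regularPart (unitRep (-(h * x))) :=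
  cuspDominated_of_le_cusp hh hk (measurable_regularPart.comp (measurable_unitRep_neg_mul h))
    (fun _ => regularPart_unitRep_nonneg _)
    fun x => by linarith [regularPart_unitRep_le (-(h * x)), cusp_nonneg (h * x)]

lemma cuspDominated_zetaHalfMod_mul_regularPart (hh : 0 < h) (hk : 0 < k) :
    CuspDominated h k 16 fun x => (zetaHalfMod (k * x) + 3) * regularPart (unitRep (-(h * x))) := by
  refine (cuspDominated_of_le_cusp hk hh ?_ (fun x => ?_) fun x => ?_).symm
  · exact ((measurable_zetaHalfMod.comp (measurable_const_mul _)).add_const 3).mul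
      (measurable_regularPart.comp (measurable_unitRep_neg_mul h))
  · exact mul_nonneg (zetaHalfMod_add_three_nonneg _) (regularPart_unitRep_nonneg _)
  · calc _ ≤ (cusp (k * x) + 3) * 3 :=
          mul_le_mul (zetaHalfMod_add_three_le _) (regularPart_unitRep_le _)
            (regularPart_unitRep_nonneg _) (by linarith [cusp_nonneg (k * x)])
      _ = _ := by ring

lemma cuspDominated_regularPart_mul_invSqrt (hh : 0 < h) (hk : 0 < k) :
    CuspDominated h k 16
      fun x => regularPart (unitRep (k * x)) * invSqrt (unitRep (-(h * x))) := by
  refine cuspDominated_of_le_cusp hh hk ?_ (fun x => ?_) fun x => ?_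
  · exact (measurable_regularPart.comp (measurable_unitRep_mul k)).mul
      (measurable_invSqrt.comp (measurable_unitRep_neg_mul h))
  · exact mul_nonneg (regularPart_unitRep_nonneg _) (invSqrt_nonneg _)
  · calc _ ≤ 3 * cusp (h * x) := mul_le_mul (regularPart_unitRep_le _)
          (invSqrt_unitRep_neg_le _) (invSqrt_nonneg _) zero_le_three
      _ ≤ _ := le_add_of_nonneg_right (by norm_num)

lemma zetaHalfMod_mul_zetaHalfMod_neg (hh : 0 < h) (hk : 0 < k) (x : ℝ) :
    zetaHalfMod (k * x) * zetaHalfMod (-(h * x)) =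
      decreasingPart h k x + increasingPart h k x + 3 * regularPart (unitRep (-(h * x))) -
        (zetaHalfMod (k * x) + 3) * regularPart (unitRep (-(h * x))) -
        regularPart (unitRep (k * x)) * invSqrt (unitRep (-(h * x))) := by
  rw [decreasingPart_add_increasingPart hh hk, zetaHalfMod_eq_invSqrt_sub,
    zetaHalfMod_eq_invSqrt_sub]
  ring

theorem hasRiemannError_opposite (hh : 0 < h) (hk : 0 < k) (hhk : h.Coprime k)
    (hqh : q.Coprime h) (hqk : q.Coprime k) (hhkq : 4 * h * k ≤ q) :
    HasRiemannError q (15680 * (√(q * (h + k)) * (1 + Real.log q)))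
      fun x => zetaHalfMod (k * x) * zetaHalfMod (-(h * x)) := by
  have hanti {Φ : ℝ → ℝ} (hΦ : AntitoneBetweenCusps h k Φ) (H : CuspDominated h k 16 Φ) :=
    hΦ.hasRiemannError H hh hk hhk hqh hqk hhkq
  have hmono {Φ : ℝ → ℝ} (hΦ : MonotoneBetweenCusps h k Φ) (H : CuspDominated h k 16 Φ) :=
    hΦ.hasRiemannError H hh hk hhk hqh hqk hhkq
  have hreg : AntitoneBetweenCusps h k fun x => regularPart (unitRep (-(h * x))) :=
    antitoneBetweenCusps_comp_neg_mul monotoneOn_regularPart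
  have hsum := ((((hanti antitoneBetweenCusps_decreasingPart
      (cuspDominated_decreasingPart hh hk)).add
    (hmono monotoneBetweenCusps_increasingPart (cuspDominated_increasingPart hh hk))).add
    ((hanti hreg (cuspDominated_regularPart hh hk)).const_mul 3)).sub
    (hanti (.mul antitoneBetweenCusps_zetaHalfMod_add_three.symm hreg
      (fun _ => zetaHalfMod_add_three_nonneg _) fun _ => regularPart_unitRep_nonneg _)
      (cuspDominated_zetaHalfMod_mul_regularPart hh hk))).sub
    (hmono (.mul (monotoneBetweenCusps_comp_mul monotoneOn_regularPart).symm
      (monotoneBetweenCusps_comp_neg_mul antitoneOn_invSqrt)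
      (fun _ => regularPart_unitRep_nonneg _) fun _ => invSqrt_nonneg _)
      (cuspDominated_regularPart_mul_invSqrt hh hk))
  simp_rw [zetaHalfMod_mul_zetaHalfMod_neg hh hk]
  convert hsum using 1
  rw [abs_of_pos three_pos]
  ring

end OppositeTwists

section ZeroPole

variable {h k : ℕ}

/-- The singularity at `0` of `x ↦ zetaHalfMod (k x) * zetaHalfMod (h x)`, cut off at the first
positive cusp. -/
noncomputable def zeroPole (h k : ℕ) : ℝ → ℝ :=
  (Set.Ioo 0 (1 / max (h : ℝ) k)).indicator fun x => 1 / (√(h * k) * x)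

lemma measurable_zeroPole : Measurable (zeroPole h k) :=
  (measurable_const.div (measurable_const_mul _)).indicator measurableSet_Ioo

lemma zeroPole_comm (h k : ℕ) : zeroPole h k = zeroPole k h := by
  rw [zeroPole, zeroPole, max_comm, mul_comm (h : ℝ)]

lemma mem_Ioo_one_div_max (hh : 0 < h) {x : ℝ} (hx : 0 < x) :
    x ∈ Set.Ioo 0 (1 / max (h : ℝ) k) ↔ h * x < 1 ∧ k * x < 1 := by
  rw [Set.mem_Ioo, and_iff_right hx, lt_div_iff₀ (lt_max_of_lt_left (Nat.cast_pos.2 hh)),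
    mul_comm, max_mul_of_nonneg _ _ hx.le, max_lt_iff]

lemma zeroPole_of_lt (hh : 0 < h) {x : ℝ} (hx : 0 < x) (hhx : h * x < 1) (hkx : k * x < 1) :
    zeroPole h k x = 1 / (√(h * k) * x) :=
  Set.indicator_of_mem ((mem_Ioo_one_div_max hh hx).2 ⟨hhx, hkx⟩) _

lemma zeroPole_of_one_le (hh : 0 < h) {x : ℝ} (hx : 0 < x) (hhkx : 1 ≤ h * x ∨ 1 ≤ k * x) :
    zeroPole h k x = 0 := by
  refine Set.indicator_of_notMem (fun hmem => ?_) _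
  obtain ⟨hhx, hkx⟩ := (mem_Ioo_one_div_max hh hx).1 hmem
  exact hhkx.elim hhx.not_ge hkx.not_ge

lemma zeroPole_nonneg (h k : ℕ) (x : ℝ) : 0 ≤ zeroPole h k x :=
  Set.indicator_nonneg (fun _ hx => one_div_nonneg.2 (mul_nonneg (Real.sqrt_nonneg _) hx.1.le)) x

lemma zeroPole_eq_invSqrt_mul (hh : 0 < h) (hk : 0 < k) {x : ℝ} (hx : 0 < x) (hhx : h * x < 1)
    (hkx : k * x < 1) :
    zeroPole h k x = invSqrt (unitRep (k * x)) * invSqrt (unitRep (h * x)) := by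
  rw [zeroPole_of_lt hh hx hhx hkx, unitRep_eq_self (mul_pos (Nat.cast_pos.2 hk) hx) hkx.le,
    unitRep_eq_self (mul_pos (Nat.cast_pos.2 hh) hx) hhx.le, invSqrt, invSqrt,
    Real.sqrt_mul k.cast_nonneg, Real.sqrt_mul h.cast_nonneg, Real.sqrt_mul h.cast_nonneg,
    one_div_mul_one_div_rev]
  congr 1
  linear_combination (-(√(h : ℝ) * √k)) * Real.mul_self_sqrt hx.le

lemma zeroPole_le (hh : 0 < h) (hk : 0 < k) (x : ℝ) :
    zeroPole h k x ≤ invSqrt (unitRep (k * x)) * invSqrt (unitRep (h * x)) := by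
  by_cases hmem : x ∈ Set.Ioo 0 (1 / max (h : ℝ) k)
  · obtain ⟨hhx, hkx⟩ := (mem_Ioo_one_div_max hh hmem.1).1 hmem
    exact (zeroPole_eq_invSqrt_mul hh hk hmem.1 hhx hkx).le
  · rw [zeroPole, Set.indicator_of_notMem hmem]
    exact mul_nonneg (invSqrt_nonneg _) (invSqrt_nonneg _)

end ZeroPole

section EqualTwists

variable {q h k : ℕ} {x y : ℝ}

lemma one_le_mul_unitRep_add (hh : 0 < h) (hk : 0 < k) (hhk : h.Coprime k) (hx0 : 0 < x)
    (hx1 : x < 1) (hhkx : 1 ≤ h * x ∨ 1 ≤ k * x) :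
    1 ≤ h * unitRep (k * x) + k * unitRep (h * x) := by
  obtain ⟨i, hi⟩ := exists_unitRep_eq_sub_intCast (k * x)
  obtain ⟨j, hj⟩ := exists_unitRep_eq_sub_intCast (h * x)
  have hh1 : (1 : ℝ) ≤ h := Nat.one_le_cast.2 hh
  have hk1 : (1 : ℝ) ≤ k := Nat.one_le_cast.2 hk
  have hX : 0 < h * unitRep (k * x) := mul_pos (Nat.cast_pos.2 hh) (unitRep_pos _)
  have hY : 0 < k * unitRep (h * x) := mul_pos (Nat.cast_pos.2 hk) (unitRep_pos _)
  have hsub : h * unitRep (k * x) - k * unitRep (h * x) = ((k * j - h * i : ℤ) : ℝ) := by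
    rw [hi, hj]
    push_cast
    ring
  rcases lt_trichotomy (k * j - h * i : ℤ) 0 with hneg | hzero | hpos
  · have : ((k * j - h * i : ℤ) : ℝ) ≤ -1 := by exact_mod_cast Int.le_sub_one_of_lt hneg
    linarith
  · have hdvd : (k : ℤ) ∣ i :=
      (Nat.isCoprime_iff_coprime.2 hhk.symm).dvd_of_dvd_mul_left ⟨j, by linarith⟩
    have hi0 : 0 ≤ i := by
      have : (-1 : ℝ) < i := by
        linarith [unitRep_le_one (k * x), mul_pos (hk1.trans_lt' one_pos) hx0]
      exact_mod_cast (show (-1 : ℤ) < i by exact_mod_cast this)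
    have hik : i < k := by
      have : (i : ℝ) < k := by nlinarith [unitRep_pos (k * x)]
      exact_mod_cast this
    obtain rfl := Int.eq_zero_of_dvd_of_nonneg_of_lt hi0 hik hdvd
    obtain rfl : j = 0 := by simpa [hk.ne'] using hzero
    rw [Int.cast_zero, sub_zero] at hi hj
    rcases hhkx with hhx | hkx
    · nlinarith
    · nlinarith
  · have : (1 : ℝ) ≤ ((k * j - h * i : ℤ) : ℝ) := by exact_mod_cast hpos
    linarith

lemma invSqrt_mul_sub_zeroPole_le (hh : 0 < h) (hk : 0 < k) (hhk : h.Coprime k) (hx0 : 0 < x)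
    (hx1 : x < 1) :
    invSqrt (unitRep (k * x)) * invSqrt (unitRep (h * x)) - zeroPole h k x ≤
      √h * cusp (h * x) + √k * cusp (k * x) := by
  by_cases hhkx : 1 ≤ h * x ∨ 1 ≤ k * x
  · refine (sub_le_self _ (zeroPole_nonneg h k x)).trans ?_
    refine (invSqrt_mul_invSqrt_le h.cast_nonneg k.cast_nonneg (unitRep_pos _) (unitRep_pos _)
      (one_le_mul_unitRep_add hh hk hhk hx0 hx1 hhkx)).trans ?_
    gcongr
    exacts [invSqrt_unitRep_le _, invSqrt_unitRep_le _]
  · obtain ⟨hhx, hkx⟩ := not_or.1 hhkx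
    rw [zeroPole_eq_invSqrt_mul hh hk hx0 (not_le.1 hhx) (not_le.1 hkx), sub_self]
    exact add_nonneg (mul_nonneg (Real.sqrt_nonneg _) (cusp_nonneg _))
      (mul_nonneg (Real.sqrt_nonneg _) (cusp_nonneg _))

lemma CuspFree.mul_lt_one (H : CuspFree h x y) (hx : h * x < 1) : h * y < 1 := by
  obtain ⟨i, hix, hiy⟩ := H
  have : i < 1 := by exact_mod_cast hix.trans hx
  exact hiy.trans_le (by exact_mod_cast this)

/-- What remains of `(zetaHalfMod (k x) + 3) * (zetaHalfMod (h x) + 3)` after the product of the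
two singular parts is removed. -/
noncomputable def productRemainder (h k : ℕ) (x : ℝ) : ℝ :=
  invSqrt (unitRep (k * x)) * (3 - regularPart (unitRep (h * x))) +
    (3 - regularPart (unitRep (k * x))) * (zetaHalfMod (h * x) + 3)

lemma zetaHalfMod_add_three_mul_eq (h k : ℕ) (x : ℝ) :
    (zetaHalfMod (k * x) + 3) * (zetaHalfMod (h * x) + 3) =
      invSqrt (unitRep (k * x)) * invSqrt (unitRep (h * x)) + productRemainder h k x := by
  rw [productRemainder, zetaHalfMod_eq_invSqrt_sub, zetaHalfMod_eq_invSqrt_sub]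
  ring

lemma productRemainder_nonneg (h k : ℕ) (x : ℝ) : 0 ≤ productRemainder h k x :=
  add_nonneg (mul_nonneg (invSqrt_nonneg _) (sub_nonneg.2 (regularPart_unitRep_le _)))
    (mul_nonneg (sub_nonneg.2 (regularPart_unitRep_le _)) (zetaHalfMod_add_three_nonneg _))

lemma productRemainder_le (h k : ℕ) (x : ℝ) :
    productRemainder h k x ≤ 3 * cusp (k * x) + 3 * cusp (h * x) + 9 :=
  calc _ ≤ cusp (k * x) * 3 + 3 * (cusp (h * x) + 3) :=
        add_le_add
          (mul_le_mul (invSqrt_unitRep_le _) (sub_le_self _ (regularPart_unitRep_nonneg _))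
            (sub_nonneg.2 (regularPart_unitRep_le _)) (cusp_nonneg _))
          (mul_le_mul (sub_le_self _ (regularPart_unitRep_nonneg _)) (zetaHalfMod_add_three_le _)
            (zetaHalfMod_add_three_nonneg _) zero_le_three)
    _ = _ := by ring

lemma antitoneBetweenCusps_productRemainder :
    AntitoneBetweenCusps h k (productRemainder h k) := by
  have hreg (h k : ℕ) : AntitoneBetweenCusps h k fun x => 3 - regularPart (unitRep (h * x)) :=
    antitoneBetweenCusps_comp_mul (f := fun x => 3 - regularPart x) fun _ hx _ hy hxy =>
      sub_le_sub_left (monotoneOn_regularPart hx hy hxy) 3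
  have hleft := (antitoneBetweenCusps_comp_mul antitoneOn_invSqrt).symm.mul (hreg h k)
    (fun _ => invSqrt_nonneg _) fun _ => sub_nonneg.2 (regularPart_unitRep_le _)
  have hright := (hreg k h).symm.mul antitoneBetweenCusps_zetaHalfMod_add_three
    (fun _ => sub_nonneg.2 (regularPart_unitRep_le _)) fun _ => zetaHalfMod_add_three_nonneg _
  exact fun x y hx hxy hy hh hk =>
    add_le_add (hleft x y hx hxy hy hh hk) (hright x y hx hxy hy hh hk)

lemma antitoneBetweenCusps_mul_sub_zeroPole (hh : 0 < h) (hk : 0 < k) :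
    AntitoneBetweenCusps h k fun x =>
      (zetaHalfMod (k * x) + 3) * (zetaHalfMod (h * x) + 3) - zeroPole h k x := by
  intro x y hx hxy hy hhxy hkxy
  dsimp only
  by_cases hhkx : 1 ≤ h * x ∨ 1 ≤ k * x
  · have hmul := (antitoneBetweenCusps_zetaHalfMod_add_three (h := k) (k := h)).symm.mul
      antitoneBetweenCusps_zetaHalfMod_add_three (fun _ => zetaHalfMod_add_three_nonneg _)
      fun _ => zetaHalfMod_add_three_nonneg _
    rw [zeroPole_of_one_le hh hx hhkx, sub_zero]
    exact (sub_le_self _ (zeroPole_nonneg h k y)).trans (hmul x y hx hxy hy hhxy hkxy)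
  · obtain ⟨hhx, hkx⟩ := not_or.1 hhkx
    rw [not_le] at hhx hkx
    rw [zetaHalfMod_add_three_mul_eq, zetaHalfMod_add_three_mul_eq,
      zeroPole_eq_invSqrt_mul hh hk hx hhx hkx, zeroPole_eq_invSqrt_mul hh hk (hx.trans_le hxy)
        (hhxy.mul_lt_one hhx) (hkxy.mul_lt_one hkx), add_sub_cancel_left, add_sub_cancel_left]
    exact antitoneBetweenCusps_productRemainder x y hx hxy hy hhxy hkxy

lemma cuspDominated_mul_sub_zeroPole (hh : 0 < h) (hk : 0 < k) (hhk : h.Coprime k) :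
    CuspDominated h k 16 fun x =>
      (zetaHalfMod (k * x) + 3) * (zetaHalfMod (h * x) + 3) - zeroPole h k x := by
  have heq (x : ℝ) : (zetaHalfMod (k * x) + 3) * (zetaHalfMod (h * x) + 3) - zeroPole h k x =
      invSqrt (unitRep (k * x)) * invSqrt (unitRep (h * x)) - zeroPole h k x +
        productRemainder h k x := by
    rw [zetaHalfMod_add_three_mul_eq]
    ring
  refine cuspDominated_of_le hh hk ?_ (fun x => ?_) (fun x _ _ => ?_) (fun x _ _ => ?_)
    fun _ => invSqrt_mul_sub_zeroPole_le hh hk hhk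
  · exact (((measurable_zetaHalfMod.comp (measurable_const_mul _)).add_const 3).mul
      ((measurable_zetaHalfMod.comp (measurable_const_mul _)).add_const 3)).sub measurable_zeroPole
  · rw [heq]
    exact add_nonneg (sub_nonneg.2 (zeroPole_le hh hk x)) (productRemainder_nonneg h k x)
  · linarith [heq x, productRemainder_le h k x]
  · exact (sub_le_self _ (zeroPole_nonneg h k x)).trans
      (mul_le_mul (invSqrt_unitRep_le _) (invSqrt_unitRep_le _) (invSqrt_nonneg _) (cusp_nonneg _))

lemma cuspDominated_zetaHalfMod_add_three (hh : 0 < h) (hk : 0 < k) :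
    CuspDominated h k 16 fun x => zetaHalfMod (h * x) + 3 :=
  cuspDominated_of_le_cusp hh hk
    ((measurable_zetaHalfMod.comp (measurable_const_mul _)).add_const 3)
    (fun _ => zetaHalfMod_add_three_nonneg _)
    fun x => by linarith [zetaHalfMod_add_three_le (h * x), cusp_nonneg (h * x)]

theorem hasRiemannError_equal (hh : 0 < h) (hk : 0 < k) (hhk : h.Coprime k)
    (hqh : q.Coprime h) (hqk : q.Coprime k) (hhkq : 4 * h * k ≤ q) :
    HasRiemannError q (15680 * (√(q * (h + k)) * (1 + Real.log q)) + 9)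
      fun x => zetaHalfMod (k * x) * zetaHalfMod (h * x) - zeroPole h k x := by
  have hanti {Φ : ℝ → ℝ} (hΦ : AntitoneBetweenCusps h k Φ) (H : CuspDominated h k 16 Φ) :=
    hΦ.hasRiemannError H hh hk hhk hqh hqk hhkq
  have hq : 0 < q := (Nat.mul_pos (Nat.mul_pos four_pos hh) hk).trans_le hhkq
  have hsum := (((hanti (antitoneBetweenCusps_mul_sub_zeroPole hh hk)
      (cuspDominated_mul_sub_zeroPole hh hk hhk)).sub
    ((hanti antitoneBetweenCusps_zetaHalfMod_add_three.symm
      (cuspDominated_zetaHalfMod_add_three hk hh).symm).const_mul 3)).sub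
    ((hanti antitoneBetweenCusps_zetaHalfMod_add_three
      (cuspDominated_zetaHalfMod_add_three hh hk)).const_mul 3)).add (.const hq 9)
  convert hsum using 1
  · rw [abs_of_pos three_pos, abs_of_pos (by norm_num : (0 : ℝ) < 9)]
    ring
  · ext x
    ring

end EqualTwists

section Distribution

variable {k : ℕ}

lemma sum_range_comp_add_mul {M : Type*} [AddCommMonoid M] {u : ℤ} (hk : 0 < k)
    (huk : IsCoprime u k) (m : ℤ) {g : ℤ → M} (hg : Function.Periodic g k) :
    ∑ j ∈ range k, g (m + u * j) = ∑ j ∈ range k, g j := by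
  have : NeZero k := ⟨hk.ne'⟩
  have hval (n : ℤ) : g n = g ((n : ZMod k).val : ℤ) := by
    simpa only [ZMod.val_intCast, Int.emod_def, smul_eq_mul, mul_comm] using
      (hg.sub_zsmul_eq (n / k)).symm
  have hsum (G : ZMod k → M) : ∑ j ∈ range k, G (j : ZMod k) = ∑ a, G a :=
    sum_nbij' (fun j => (j : ZMod k)) ZMod.val (fun _ _ => mem_univ _)
      (fun a _ => mem_range.2 a.val_lt) (fun j hj => ZMod.val_cast_of_lt (mem_range.1 hj))
      (fun a _ => ZMod.natCast_zmod_val a) fun _ _ => rfl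
  have hu : IsUnit (u : ZMod k) :=
    (ZMod.coe_int_isUnit_iff_isCoprime u k).2 huk.symm
  calc ∑ j ∈ range k, g (m + u * j)
      = ∑ j ∈ range k, g ((m + hu.unit * (j : ZMod k) : ZMod k).val : ℤ) :=
        sum_congr rfl fun j _ => by rw [hval]; push_cast; rfl
    _ = ∑ a : ZMod k, g ((m + hu.unit * a : ZMod k).val : ℤ) :=
        hsum fun a => g ((m + hu.unit * a : ZMod k).val : ℤ)
    _ = ∑ a : ZMod k, g (a.val : ℤ) :=
        Equiv.sum_comp (hu.unit.mulLeft.trans (Equiv.addLeft (m : ZMod k)))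
          fun a => g (a.val : ℤ)
    _ = ∑ j ∈ range k, g j := by
        rw [← hsum fun a => g (a.val : ℤ)]
        exact sum_congr rfl fun j _ => by rw [hval j, Int.cast_natCast]

lemma sum_zetaHalfMod_div {u : ℤ} (hk : 0 < k) (huk : IsCoprime u k) (z : ℝ) :
    ∑ j ∈ range k, zetaHalfMod ((z + u * j) / k) = √k * zetaHalfMod z := by
  have hk0 : (0 : ℝ) < k := Nat.cast_pos.2 hk
  obtain ⟨m, hm⟩ := exists_unitRep_eq_sub_intCast z
  have hper : Function.Periodic (fun n : ℤ => zetaHalfMod ((unitRep z + n) / k)) k := fun n => by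
    dsimp only
    rw [Int.cast_add, Int.cast_natCast, ← add_assoc, add_div, div_self hk0.ne',
      periodic_zetaHalfMod]
  calc ∑ j ∈ range k, zetaHalfMod ((z + u * j) / k)
      = ∑ j ∈ range k, zetaHalfMod ((unitRep z + (m + u * j : ℤ)) / k) :=
        sum_congr rfl fun j _ => by
          rw [hm]
          push_cast
          ring_nf
    _ = ∑ j ∈ range k, zetaHalfMod ((unitRep z + (j : ℤ)) / k) :=
        sum_range_comp_add_mul hk huk m hper
    _ = ∑ j ∈ range k, zetaHalf ((unitRep z + j) / k) := by
        refine sum_congr rfl fun j hj => ?_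
        have hjk : (j : ℝ) + 1 ≤ k := by exact_mod_cast mem_range.1 hj
        rw [Int.cast_natCast, zetaHalfMod_eq_zetaHalf
          (div_pos (add_pos_of_pos_of_nonneg (unitRep_pos z) j.cast_nonneg) hk0)]
        rw [div_le_one hk0]
        linarith [unitRep_le_one z]
    _ = √k * zetaHalfMod z := by rw [sum_zetaHalf_add_div (unitRep_pos z) hk, zetaHalfMod]

lemma integral_eq_integral_sum_comp_add_div {E : ℝ → ℝ} (hE : IntervalIntegrable E volume 0 1)
    (hk : 0 < k) :
    ∫ x in (0 : ℝ)..1, E x = 1 / k * ∫ y in (0 : ℝ)..1, ∑ j ∈ range k, E ((y + j) / k) := by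
  have hk0 : (0 : ℝ) < k := Nat.cast_pos.2 hk
  have hint (j : ℕ) (hj : j < k) :
      IntervalIntegrable E volume ((j : ℝ) / k) (((j + 1 : ℕ) : ℝ) / k) := by
    refine hE.mono_set ?_
    have : ((j + 1 : ℕ) : ℝ) / k ≤ 1 := (div_le_one hk0).2 (Nat.cast_le.2 hj)
    rw [Set.uIcc_of_le (by gcongr; exact j.le_succ), Set.uIcc_of_le zero_le_one]
    exact Set.Icc_subset_Icc (by positivity) this
  have hpiece (j : ℕ) : ∫ y in (0 : ℝ)..1, E ((y + j) / k) =
      k * ∫ x in (j : ℝ) / k..((j + 1 : ℕ) : ℝ) / k, E x := by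
    simp_rw [add_div]
    rw [intervalIntegral.integral_comp_div_add E hk0.ne', zero_div, zero_add, smul_eq_mul,
      ← add_div, Nat.cast_succ, add_comm (1 : ℝ)]
  rw [intervalIntegral.integral_finsetSum, sum_congr rfl fun j _ => hpiece j, ← mul_sum,
    sum_integral_adjacent_intervals hint, ← mul_assoc, one_div_mul_cancel hk0.ne', one_mul,
    Nat.cast_zero, zero_div, div_self hk0.ne']
  intro j hj
  have := ((hint j (mem_range.1 hj)).comp_mul_right (c := (k : ℝ)⁻¹)).comp_add_right (j : ℝ)
  simpa only [div_inv_eq_mul, div_mul_cancel₀ _ hk0.ne', sub_self, Nat.cast_succ,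
    add_sub_cancel_left, ← div_eq_mul_inv] using this

lemma integral_mul_sub_of_distribution {u : ℝ} {f g P : ℝ → ℝ} (hk : 0 < k)
    (hf : Function.Periodic f 1)
    (hg : ∀ y, ∑ j ∈ range k, g ((y + u * j) / k) = √k * g y) (hP : ∀ x : ℝ, 1 ≤ k * x → P x = 0)
    (hint : IntervalIntegrable (fun x => f (k * x) * g (u * x) - P x) volume 0 1) :
    ∫ x in (0 : ℝ)..1, (f (k * x) * g (u * x) - P x) =
      1 / k * ∫ y in (0 : ℝ)..1, (√k * (f y * g (u * y)) - P (y / k)) := by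
  have hk0 : (0 : ℝ) < k := Nat.cast_pos.2 hk
  rw [integral_eq_integral_sum_comp_add_div hint hk]
  congr 1
  refine intervalIntegral.integral_congr fun y hy => ?_
  rw [Set.uIcc_of_le zero_le_one] at hy
  have hpole : ∑ j ∈ range k, P ((y + j) / k) = P (y / k) := by
    rw [sum_eq_single_of_mem 0 (mem_range.2 hk), Nat.cast_zero, add_zero]
    refine fun j _ hj => hP _ ?_
    rw [mul_div_cancel₀ _ hk0.ne']
    have : (1 : ℝ) ≤ j := Nat.one_le_cast.2 (Nat.pos_of_ne_zero hj)
    linarith [hy.1]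
  have hshift (j : ℕ) : f (k * ((y + j) / k)) * g (u * ((y + j) / k)) =
      f y * g ((u * y + u * j) / k) := by
    rw [mul_div_cancel₀ _ hk0.ne', ← mul_div_assoc, mul_add]
    simpa using congrArg (· * g ((u * y + u * j) / k)) (hf.nat_mul j y)
  rw [sum_sub_distrib, hpole, sum_congr rfl fun j _ => hshift j, ← mul_sum, hg]
  ring

end Distribution

section TwistedIntegrals

variable {h k : ℕ}

lemma coprime_four_mul_mul_add_one (h k : ℕ) :
    (4 * h * k + 1).Coprime h ∧ (4 * h * k + 1).Coprime k :=
  ⟨by simp [mul_right_comm 4 h k], by simp⟩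

lemma intervalIntegrable_opposite (hh : 0 < h) (hk : 0 < k) (hhk : h.Coprime k) :
    IntervalIntegrable (fun x => zetaHalfMod (k * x) * zetaHalfMod (-(h * x))) volume 0 1 :=
  (hasRiemannError_opposite hh hk hhk (coprime_four_mul_mul_add_one h k).1
    (coprime_four_mul_mul_add_one h k).2 (Nat.le_succ _)).intervalIntegrable

lemma intervalIntegrable_equal (hh : 0 < h) (hk : 0 < k) (hhk : h.Coprime k) :
    IntervalIntegrable (fun x => zetaHalfMod (k * x) * zetaHalfMod (h * x) - zeroPole h k x)
      volume 0 1 :=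
  (hasRiemannError_equal hh hk hhk (coprime_four_mul_mul_add_one h k).1
    (coprime_four_mul_mul_add_one h k).2 (Nat.le_succ _)).intervalIntegrable

lemma integral_opposite_left (hh : 0 < h) (hk : 0 < k) (hhk : h.Coprime k) :
    ∫ x in (0 : ℝ)..1, zetaHalfMod (k * x) * zetaHalfMod (-(h * x)) =
      1 / √k * ∫ x in (0 : ℝ)..1, zetaHalfMod x * zetaHalfMod (-(h * x)) := by
  have hdistrib (y : ℝ) : ∑ j ∈ range k, zetaHalfMod (-((y + h * j) / k)) =
      √k * zetaHalfMod (-y) := by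
    rw [← sum_zetaHalfMod_div (u := -h) hk (Nat.isCoprime_iff_coprime.2 hhk).neg_left (-y)]
    refine sum_congr rfl fun j _ => ?_
    push_cast
    ring_nf
  have heq := integral_mul_sub_of_distribution (u := h) (g := fun x => zetaHalfMod (-x)) (P := 0)
    hk periodic_zetaHalfMod hdistrib (fun _ _ => rfl)
    (by simpa using intervalIntegrable_opposite hh hk hhk)
  simp only [Pi.zero_apply, sub_zero, intervalIntegral.integral_const_mul] at heq
  rw [heq, ← mul_assoc, one_div_mul_eq_div, Real.sqrt_div_self']

theorem integral_opposite (hh : 0 < h) (hk : 0 < k) (hhk : h.Coprime k) :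
    ∫ x in (0 : ℝ)..1, zetaHalfMod (k * x) * zetaHalfMod (-(h * x)) =
      1 / √(h * k) * ∫ x in (0 : ℝ)..1, zetaHalfMod x * zetaHalfMod (-x) := by
  have hreflect : ∫ x in (0 : ℝ)..1, zetaHalfMod x * zetaHalfMod (-(h * x)) =
      ∫ x in (0 : ℝ)..1, zetaHalfMod (h * x) * zetaHalfMod (-((1 : ℕ) * x)) := by
    have hcomp := intervalIntegral.integral_comp_sub_left
      (fun x => zetaHalfMod x * zetaHalfMod (-(h * x))) (a := 0) (b := 1) 1
    rw [sub_self, sub_zero] at hcomp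
    rw [← hcomp]
    refine intervalIntegral.integral_congr fun x _ => ?_
    have hone : zetaHalfMod (1 - x) = zetaHalfMod (-x) := by
      rw [← periodic_zetaHalfMod (-x), neg_add_eq_sub]
    have hmul : zetaHalfMod (-(h * (1 - x))) = zetaHalfMod (h * x) := by
      rw [← zetaHalfMod_add_intCast (h * x) (-h)]
      push_cast
      ring_nf
    rw [hone, hmul, Nat.cast_one, one_mul, mul_comm]
  rw [integral_opposite_left hh hk hhk, hreflect,
    integral_opposite_left one_pos hh (Nat.coprime_one_left h), ← mul_assoc,
    one_div_mul_one_div_rev, Real.sqrt_mul h.cast_nonneg]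
  simp_rw [Nat.cast_one, one_mul]

lemma indicator_Ioo_sub_indicator_Ioo {a b : ℝ} (ha : 0 < a) (hab : a ≤ b) (f : ℝ → ℝ) :
    (Set.Ioo 0 b).indicator f - (Set.Ioo 0 a).indicator f = (Set.Ico a b).indicator f := by
  rw [← Set.indicator_sdiff (Set.Ioo_subset_Ioo_right hab)]
  congr 1
  ext x
  simp only [Set.mem_sdiff, Set.mem_Ioo, Set.mem_Ico, not_and, not_lt]
  exact ⟨fun hx => ⟨hx.2 hx.1.1, hx.1.2⟩, fun hx => ⟨⟨ha.trans_le hx.1, hx.2⟩, fun _ => hx.1⟩⟩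

lemma intervalIntegrable_indicator_div {a b : ℝ} (ha : 0 < a) (c : ℝ) :
    IntervalIntegrable ((Set.Ico a b).indicator fun x => c / x) volume 0 1 := by
  have hcont : ContinuousOn (fun x => c / x) (Set.Icc a b) :=
    continuousOn_const.div continuousOn_id fun x hx => (ha.trans_le hx.1).ne'
  exact ((integrable_indicator_iff measurableSet_Ico).2 ((hcont.integrableOn_Icc).mono_set
    Set.Ico_subset_Icc_self)).intervalIntegrable

lemma integral_indicator_div {a b : ℝ} (ha : 0 < a) (hab : a ≤ b) (hb : b ≤ 1) (c : ℝ) :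
    ∫ x in (0 : ℝ)..1, (Set.Ico a b).indicator (fun x => c / x) x =
      c * (Real.log b - Real.log a) := by
  have hsub : Set.Ioc 0 1 ∩ Set.Ico a b = Set.Ico a b :=
    Set.inter_eq_right.2 fun x hx => ⟨ha.trans_le hx.1, hx.2.le.trans hb⟩
  rw [intervalIntegral.integral_of_le zero_le_one, setIntegral_indicator measurableSet_Ico, hsub,
    integral_Ico_eq_integral_Ioc, ← intervalIntegral.integral_of_le hab]
  simp_rw [div_eq_mul_one_div c]
  rw [intervalIntegral.integral_const_mul, integral_one_div_of_pos ha (ha.trans_le hab),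
    Real.log_div (ha.trans_le hab).ne' ha.ne']

/-- The integral over a period of `zetaHalfMod (k x) * zetaHalfMod (h x)`, made convergent by
removing the pole at `0`. -/
noncomputable def regularizedIntegral (h k : ℕ) : ℝ :=
  ∫ x in (0 : ℝ)..1, (zetaHalfMod (k * x) * zetaHalfMod (h * x) - zeroPole h k x)

lemma regularizedIntegral_comm (h k : ℕ) : regularizedIntegral h k = regularizedIntegral k h := by
  simp_rw [regularizedIntegral, zeroPole_comm h k, mul_comm (zetaHalfMod (k * _))]

lemma one_div_le_div_max (hh : 0 < h) (hk : 0 < k) : 1 / (h : ℝ) ≤ k / max (h : ℝ) k := by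
  have hh0 : (0 : ℝ) < h := Nat.cast_pos.2 hh
  rw [div_le_div_iff₀ hh0 (lt_max_of_lt_left hh0), one_mul]
  exact max_le (le_mul_of_one_le_left hh0.le (Nat.one_le_cast.2 hk))
    (le_mul_of_one_le_right k.cast_nonneg (Nat.one_le_cast.2 hh))

lemma zeroPole_div_sub (hh : 0 < h) (hk : 0 < k) :
    (fun x => zeroPole h k (x / k)) - (fun x => √k * zeroPole h 1 x) =
      (Set.Ico (1 / (h : ℝ)) (k / max (h : ℝ) k)).indicator fun x => √k / √h / x := by
  have hh0 : (0 : ℝ) < h := Nat.cast_pos.2 hh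
  have hk0 : (0 : ℝ) < k := Nat.cast_pos.2 hk
  rw [← indicator_Ioo_sub_indicator_Ioo (one_div_pos.2 hh0) (one_div_le_div_max hh hk)]
  congr 1 <;> ext x
  · have hmem : x / k ∈ Set.Ioo 0 (1 / max (h : ℝ) k) ↔ x ∈ Set.Ioo 0 (k / max (h : ℝ) k) := by
      rw [Set.mem_Ioo, Set.mem_Ioo, div_pos_iff_of_pos_right hk0, div_lt_iff₀ hk0,
        one_div_mul_eq_div]
    rw [zeroPole, Set.indicator_apply, Set.indicator_apply, if_congr hmem rfl rfl,
      Real.sqrt_mul h.cast_nonneg]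
    congr 1
    have hdiv : x / k = x / √k / √k := by rw [div_div, Real.mul_self_sqrt hk0.le]
    rw [hdiv]
    field_simp
  · rw [zeroPole, Nat.cast_one, max_eq_left (Nat.one_le_cast.2 hh), mul_one, Set.indicator_apply,
      Set.indicator_apply, mul_ite, mul_zero]
    congr 1
    ring

lemma regularizedIntegral_left (hh : 0 < h) (hk : 0 < k) (hhk : h.Coprime k) :
    regularizedIntegral h k = 1 / √k * regularizedIntegral h 1 +
      1 / √(h * k) * (Real.log (max (h : ℝ) k) - Real.log (h * k)) := by
  have hh0 : (0 : ℝ) < h := Nat.cast_pos.2 hh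
  have hk0 : (0 : ℝ) < k := Nat.cast_pos.2 hk
  have hmax0 : 0 < max (h : ℝ) k := lt_max_of_lt_left hh0
  have hcut (x : ℝ) (hx : 1 ≤ k * x) : zeroPole h k x = 0 :=
    zeroPole_of_one_le hh (pos_of_mul_pos_right (one_pos.trans_le hx) hk0.le) (.inr hx)
  have hdistrib (y : ℝ) := by
    simpa using sum_zetaHalfMod_div (u := h) hk (Nat.isCoprime_iff_coprime.2 hhk) y
  have hint := intervalIntegrable_equal hh one_pos (Nat.coprime_one_right h)
  have hsplit (y : ℝ) : √k * (zetaHalfMod y * zetaHalfMod (h * y)) - zeroPole h k (y / k) =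
      √k * (zetaHalfMod ((1 : ℕ) * y) * zetaHalfMod (h * y) - zeroPole h 1 y) -
        (Set.Ico (1 / (h : ℝ)) (k / max (h : ℝ) k)).indicator (fun x => √k / √h / x) y := by
    rw [← zeroPole_div_sub hh hk, Pi.sub_apply, Nat.cast_one, one_mul]
    ring
  rw [regularizedIntegral, integral_mul_sub_of_distribution hk periodic_zetaHalfMod hdistrib hcut
    (intervalIntegrable_equal hh hk hhk)]
  simp_rw [hsplit]
  rw [intervalIntegral.integral_sub (hint.const_mul _)
    (intervalIntegrable_indicator_div (one_div_pos.2 hh0) _),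
    intervalIntegral.integral_const_mul, ← regularizedIntegral,
    integral_indicator_div (one_div_pos.2 hh0) (one_div_le_div_max hh hk) ?_,
    Real.log_div hk0.ne' hmax0.ne', Real.log_div one_ne_zero hh0.ne', Real.log_one,
    Real.log_mul hh0.ne' hk0.ne', Real.sqrt_mul h.cast_nonneg]
  · have hinv : 1 / (k : ℝ) * √k = 1 / √k := by rw [one_div_mul_eq_div, Real.sqrt_div_self']
    have hcoef : 1 / (k : ℝ) * (√k / √h) = 1 / (√h * √k) := by
      rw [← mul_div_assoc, hinv, div_div, mul_comm √(k : ℝ)]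
    linear_combination regularizedIntegral h 1 * hinv +
      (Real.log (max (h : ℝ) k) - (Real.log h + Real.log k)) * hcoef
  · exact (div_le_one hmax0).2 (le_max_right _ _)

theorem regularizedIntegral_eq (hh : 0 < h) (hk : 0 < k) (hhk : h.Coprime k) :
    regularizedIntegral h k = 1 / √(h * k) *
      (regularizedIntegral 1 1 + Real.log (max (h : ℝ) k) - Real.log (h * k)) := by
  rw [regularizedIntegral_left hh hk hhk, regularizedIntegral_comm h 1,
    regularizedIntegral_left one_pos hh (Nat.coprime_one_left h), Nat.cast_one, one_mul,
    max_eq_right (Nat.one_le_cast.2 hh), sub_self, mul_zero, add_zero, ← mul_assoc,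
    one_div_mul_one_div_rev, Real.sqrt_mul h.cast_nonneg]
  ring

end TwistedIntegrals

section PoleSum

variable {h k q : ℕ}

lemma abs_sum_one_div_sub_le {N : ℕ} (hN : 0 < N) {x : ℝ} (hNx : N ≤ x) (hxN : x ≤ N + 1) :
    |∑ n ∈ Ico 1 (N + 1), 1 / (n : ℝ) - (Real.log x + Real.eulerMascheroniConstant)| ≤ 2 / x := by
  have hN0 : (0 : ℝ) < N := Nat.cast_pos.2 hN
  have hx0 : 0 < x := hN0.trans_le hNx
  have hharmonic : ((harmonic N : ℚ) : ℝ) = ∑ n ∈ Ico 1 (N + 1), 1 / (n : ℝ) := by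
    rw [harmonic_eq_sum_Icc, ← Ico_succ_right_eq_Icc]
    push_cast
    simp only [one_div, Nat.succ_eq_succ, Nat.succ_eq_add_one]
  have hlower := Real.eulerMascheroniSeq_lt_eulerMascheroniConstant N
  have hupper := Real.eulerMascheroniConstant_lt_eulerMascheroniSeq' N
  rw [Real.eulerMascheroniSeq, hharmonic] at hlower
  rw [Real.eulerMascheroniSeq', if_neg hN.ne', hharmonic] at hupper
  have hlogN : Real.log N ≤ Real.log x := Real.log_le_log hN0 hNx
  have hlogx : Real.log x ≤ Real.log (N + 1) := Real.log_le_log hx0 hxN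
  have hstep : Real.log (N + 1) - Real.log N ≤ 1 / N := by
    rw [← Real.log_div (by positivity) hN0.ne', add_div, div_self hN0.ne', add_comm]
    linarith [Real.log_le_sub_one_of_pos (show 0 < 1 / (N : ℝ) + 1 by positivity)]
  have hinv : 1 / (N : ℝ) ≤ 2 / x := by
    rw [div_le_div_iff₀ hN0 hx0]
    linarith [show (1 : ℝ) ≤ N from Nat.one_le_cast.2 hN]
  rw [abs_le]
  constructor <;> linarith

lemma natCast_div_mem_Ioo_iff {n m : ℕ} (hn : 0 < n) (hm : 0 < m) (hq : 0 < q) :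
    (n : ℝ) / q ∈ Set.Ioo 0 (1 / (m : ℝ)) ↔ n ≤ (q - 1) / m := by
  have hq0 : (0 : ℝ) < q := Nat.cast_pos.2 hq
  rw [Set.mem_Ioo, and_iff_right (div_pos (Nat.cast_pos.2 hn) hq0),
    div_lt_div_iff₀ hq0 (Nat.cast_pos.2 hm), one_mul, Nat.le_div_iff_mul_le hm,
    Nat.le_sub_one_iff_lt hq]
  exact_mod_cast Iff.rfl

lemma sum_zeroPole_div (hh : 0 < h) (hq : 0 < q) :
    ∑ n ∈ Ico 1 q, zeroPole h k (n / q) =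
      q / √(h * k) * ∑ n ∈ Ico 1 ((q - 1) / max h k + 1), 1 / (n : ℝ) := by
  have hsub : Ico 1 ((q - 1) / max h k + 1) ⊆ Ico 1 q :=
    Ico_subset_Ico_right (by have := Nat.div_le_self (q - 1) (max h k); lia)
  have hmem {n : ℕ} (hn : 0 < n) :=
    natCast_div_mem_Ioo_iff hn (lt_max_of_lt_left (b := h) (c := k) hh) hq
  rw [mul_sum, ← sum_subset hsub]
  · refine sum_congr rfl fun n hn => ?_
    rw [mem_Ico, Nat.lt_succ_iff] at hn
    rw [zeroPole, ← Nat.cast_max, Set.indicator_of_mem ((hmem hn.1).2 hn.2)]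
    field_simp
  · intro n hn hnot
    rw [mem_Ico] at hn hnot
    rw [zeroPole, ← Nat.cast_max, Set.indicator_of_notMem]
    rw [hmem hn.1]
    lia

lemma max_div_sqrt_mul_le (hh : 0 < h) (hk : 0 < k) :
    max (h : ℝ) k / √(h * k) ≤ √(h + k) := by
  have hh1 : (1 : ℝ) ≤ h := Nat.one_le_cast.2 hh
  have hk1 : (1 : ℝ) ≤ k := Nat.one_le_cast.2 hk
  rw [div_le_iff₀ (Real.sqrt_pos.2 (by positivity)), ← Real.sqrt_mul (by positivity)]
  refine max_le (Real.le_sqrt_of_sq_le ?_) (Real.le_sqrt_of_sq_le ?_)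
  · nlinarith [mul_nonneg (mul_self_nonneg (h : ℝ)) (sub_nonneg.2 hk1), mul_self_nonneg (k : ℝ)]
  · nlinarith [mul_nonneg (mul_self_nonneg (k : ℝ)) (sub_nonneg.2 hh1), mul_self_nonneg (h : ℝ)]

lemma abs_sum_zeroPole_sub_le (hh : 0 < h) (hk : 0 < k) (hhq : h < q) (hkq : k < q) :
    |∑ n ∈ Ico 1 q, zeroPole h k (n / q) - q / √(h * k) *
      (Real.log q - Real.log (max (h : ℝ) k) + Real.eulerMascheroniConstant)| ≤ 2 * √(h + k) := by
  have hmax : 0 < max h k := lt_max_of_lt_left hh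
  have hmaxq : max h k < q := max_lt hhq hkq
  have hmax0 : (0 : ℝ) < max (h : ℝ) k := lt_max_of_lt_left (Nat.cast_pos.2 hh)
  have hq : 0 < q := hh.trans hhq
  have hq0 : (0 : ℝ) < q := Nat.cast_pos.2 hq
  have hle : (((q - 1) / max h k : ℕ) : ℝ) ≤ q / max (h : ℝ) k := by
    rw [← Nat.cast_max]
    exact Nat.cast_div_le.trans (by gcongr; exact Nat.sub_le q 1)
  have hge : q / max (h : ℝ) k ≤ ((q - 1) / max h k : ℕ) + 1 := by
    rw [div_le_iff₀ hmax0, ← Nat.cast_max]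
    have := Nat.lt_mul_of_div_lt (Nat.lt_succ_self ((q - 1) / max h k)) hmax
    exact_mod_cast (by lia : q ≤ ((q - 1) / max h k + 1) * max h k)
  have hharmonic := abs_sum_one_div_sub_le
    (Nat.div_pos (Nat.le_sub_one_of_lt hmaxq) hmax) hle hge
  rw [Real.log_div hq0.ne' hmax0.ne'] at hharmonic
  rw [sum_zeroPole_div hh hq, ← mul_sub, abs_mul, abs_of_nonneg (by positivity)]
  calc q / √(h * k) * _ ≤ q / √(h * k) * (2 / (q / max (h : ℝ) k)) := by gcongr
    _ = 2 * (max (h : ℝ) k / √(h * k)) := by field_simp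
    _ ≤ 2 * √(h + k) := by gcongr; exact max_div_sqrt_mul_le hh hk

theorem abs_sum_equal_sub_le (hh : 0 < h) (hk : 0 < k) (hhk : h.Coprime k) (hhq : h < q)
    (hkq : k < q) (hqh : q.Coprime h) (hqk : q.Coprime k) (hhkq : 4 * h * k ≤ q) :
    |∑ n ∈ Ico 1 q, zetaHalfMod (k * (n / q)) * zetaHalfMod (h * (n / q)) - q / √(h * k) *
      (Real.log q - Real.log (h * k) + Real.eulerMascheroniConstant + regularizedIntegral 1 1)| ≤
        15680 * (√(q * (h + k)) * (1 + Real.log q)) + 9 + 2 * √(h + k) := by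
  have hriemann := (hasRiemannError_equal hh hk hhk hqh hqk hhkq).abs_sub_le
  have hpole := abs_sum_zeroPole_sub_le hh hk hhq hkq
  rw [← regularizedIntegral, regularizedIntegral_eq hh hk hhk, sum_sub_distrib] at hriemann
  refine (le_of_eq (congrArg _ ?_)).trans ((abs_add_le _ _).trans (add_le_add hriemann hpole))
  ring

end PoleSum

section ShiftedZeta

lemma intervalIntegrable_of_abs_le {a b : ℝ} (hab : a ≤ b) {f g : ℝ → ℝ}
    (hg : IntervalIntegrable g volume a b)
    (hf : AEStronglyMeasurable f (volume.restrict (Set.uIoc a b)))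
    (hfg : ∀ x ∈ Set.Ioo a b, |f x| ≤ g x) : IntervalIntegrable f volume a b := by
  refine hg.mono_fun' hf ?_
  rw [Set.uIoc_of_le hab, ← Measure.restrict_congr_set Ioo_ae_eq_Ioc]
  exact ae_restrict_of_forall_mem measurableSet_Ioo hfg

lemma abs_zetaHalf_add_natCast_add_le {x : ℝ} (hx : 0 ≤ x) (hx1 : x ≤ 1) {N : ℕ} (hN : 0 < N) :
    |zetaHalf (x + N) + 2 * √N| ≤ 4 * invSqrt N := by
  have hN' : (0 : ℝ) < N := mod_cast hN
  have hpos : 0 < x + N := by positivity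
  have hlower := zetaHalf_add_two_mul_sqrt_nonneg hpos
  have hupper := zetaHalf_add_two_mul_sqrt_le hpos
  have hmono := invSqrt_le_invSqrt hN' (le_add_of_nonneg_left hx)
  have hsqrt : |√(x + N) - √N| ≤ invSqrt N := by
    refine (abs_sqrt_sub_sqrt_le hN' hpos.le).trans (mul_le_of_le_one_left (invSqrt_nonneg _) ?_)
    rwa [add_sub_cancel_right, abs_of_nonneg hx]
  have := abs_le.1 hsqrt
  rw [abs_le]
  constructor <;> linarith

lemma tendsto_invSqrt_natCast : Tendsto (fun N : ℕ => invSqrt N) atTop (𝓝 0) := by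
  simpa only [zero_add] using tendsto_invSqrt_add_natCast 0

variable {φ : ℝ → ℝ}

lemma intervalIntegrable_mul_zetaHalf_add (hφ : IntervalIntegrable φ volume 0 1) {N : ℕ}
    (hN : 0 < N) : IntervalIntegrable (fun x => φ x * zetaHalf (x + N)) volume 0 1 := by
  refine intervalIntegrable_of_abs_le zero_le_one (hφ.norm.mul_const (4 * invSqrt N + 2 * √N))
    (hφ.aestronglyMeasurable_restrict_uIoc.mul
      (measurable_zetaHalf.comp (measurable_id.add_const _)).aestronglyMeasurable)
    fun x hx => ?_
  rw [abs_mul, Real.norm_eq_abs]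
  gcongr
  have hzeta := abs_zetaHalf_add_natCast_add_le hx.1.le hx.2.le hN
  have := abs_le.1 hzeta
  have := Real.sqrt_nonneg N
  rw [abs_le]
  constructor <;> linarith

lemma abs_integral_mul_zetaHalf_add_le (hφ : IntervalIntegrable φ volume 0 1) {N : ℕ}
    (hN : 0 < N) :
    |(∫ x in 0..1, φ x * zetaHalf (x + N)) + 2 * √N * ∫ x in 0..1, φ x| ≤
      4 * invSqrt N * ∫ x in 0..1, |φ x| := by
  have hint := intervalIntegrable_mul_zetaHalf_add hφ hN
  rw [← intervalIntegral.integral_const_mul, ← integral_add hint (hφ.const_mul _),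
    ← intervalIntegral.integral_const_mul, ← Real.norm_eq_abs]
  refine norm_integral_le_of_norm_le zero_le_one (.of_forall fun x hx => ?_) (hφ.abs.const_mul _)
  rw [mul_comm (2 * √_), ← mul_add, norm_mul, mul_comm, Real.norm_eq_abs, Real.norm_eq_abs]
  gcongr
  exact abs_zetaHalf_add_natCast_add_le hx.1.le hx.2 hN

lemma tendsto_integral_mul_zetaHalf_add (hφ : IntervalIntegrable φ volume 0 1) :
    Tendsto (fun N : ℕ => (∫ x in 0..1, φ x * zetaHalf (x + N)) + 2 * √N * ∫ x in 0..1, φ x)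
      atTop (𝓝 0) := by
  have hbound := (tendsto_invSqrt_natCast.const_mul 4).mul_const (∫ x in 0..1, |φ x|)
  rw [mul_zero, zero_mul] at hbound
  refine squeeze_zero_norm' ?_ hbound
  filter_upwards [eventually_gt_atTop 0] with N hN using abs_integral_mul_zetaHalf_add_le hφ hN

lemma intervalIntegrable_mul_invSqrt_add (hφ : IntervalIntegrable φ volume 0 1)
    (hφ' : IntervalIntegrable (fun x => φ x * invSqrt x) volume 0 1) (n : ℕ) :
    IntervalIntegrable (fun x => φ x * invSqrt (x + n)) volume 0 1 := by
  refine intervalIntegrable_of_abs_le zero_le_one hφ'.abs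
    (hφ.aestronglyMeasurable_restrict_uIoc.mul
      (measurable_invSqrt.comp (measurable_id.add_const _)).aestronglyMeasurable) fun x hx => ?_
  rw [abs_mul, abs_mul, abs_of_nonneg (invSqrt_nonneg _), abs_of_nonneg (invSqrt_nonneg _)]
  gcongr
  exact invSqrt_le_invSqrt hx.1 (le_add_of_nonneg_right n.cast_nonneg)

/-- Testing the regularised series `ζ(1/2, x) = lim (∑ (x + n)^{-1/2} - 2 √N)` against `φ`. -/
theorem tendsto_sum_integral_mul_invSqrt_add (hφ : IntervalIntegrable φ volume 0 1)
    (hφ' : IntervalIntegrable (fun x => φ x * invSqrt x) volume 0 1) :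
    Tendsto (fun N : ℕ => ∑ n ∈ range N, (∫ x in 0..1, φ x * invSqrt (x + n)) -
      2 * √N * ∫ x in 0..1, φ x) atTop (𝓝 (∫ x in 0..1, φ x * zetaHalf x)) := by
  have hlim := (tendsto_integral_mul_zetaHalf_add hφ).const_sub (∫ x in 0..1, φ x * zetaHalf x)
  rw [sub_zero] at hlim
  refine hlim.congr' ?_
  filter_upwards [eventually_gt_atTop 0] with N hN
  have hsum (n : ℕ) := intervalIntegrable_mul_invSqrt_add hφ hφ' n
  have hexpand : ∫ x in 0..1, φ x * zetaHalf x =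
      ∑ n ∈ range N, (∫ x in 0..1, φ x * invSqrt (x + n)) +
        ∫ x in 0..1, φ x * zetaHalf (x + N) := by
    rw [← integral_finsetSum fun n _ => hsum n, ← integral_add _
      (intervalIntegrable_mul_zetaHalf_add hφ hN)]
    · refine integral_congr fun x _ => ?_
      rw [zetaHalf_eq_sum_add x N, mul_add, mul_sum]
    · simpa only [Finset.sum_fn] using IntervalIntegrable.sum (range N) fun n _ => hsum n
  rw [hexpand]
  ring

lemma integral_invSqrt_add_natCast (n : ℕ) :
    ∫ x in 0..1, invSqrt (x + n) = 2 * √(n + 1 : ℕ) - 2 * √n := by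
  rw [integral_comp_add_right invSqrt, integral_invSqrt, zero_add, add_comm]
  push_cast
  rfl

theorem integral_zetaHalf : ∫ x in 0..1, zetaHalf x = 0 := by
  have hlim := tendsto_sum_integral_mul_invSqrt_add (φ := fun _ => 1) intervalIntegrable_const
    (by simpa only [one_mul] using intervalIntegrable_invSqrt 0 1)
  simp only [one_mul, integral_invSqrt_add_natCast, sum_range_sub (fun n : ℕ => 2 * √n)] at hlim
  refine tendsto_nhds_unique (hlim.congr fun N => ?_) tendsto_const_nhds
  simp

end ShiftedZeta

section Convolution

variable {N : ℝ}

lemma hasDerivAt_arcsin_affine {c y : ℝ} (hc : 0 ≤ c) (hy : y ∈ Set.Ioo 0 N) :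
    HasDerivAt (fun t => Real.arcsin ((2 * t + c - N) / (N + c)))
      (invSqrt (N - y) * invSqrt (y + c)) y := by
  obtain ⟨hy0, hyN⟩ := hy
  have hden : 0 < N + c := by linarith
  have hlower : -1 < (2 * y + c - N) / (N + c) := by rw [lt_div_iff₀ hden]; linarith
  have hupper : (2 * y + c - N) / (N + c) < 1 := by rw [div_lt_one hden]; linarith
  have haffine : HasDerivAt (fun t : ℝ => (2 * t + c - N) / (N + c)) (2 / (N + c)) y := by
    simpa using ((((hasDerivAt_id y).const_mul 2).add_const c).sub_const N).div_const (N + c)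
  have hsq : 1 - ((2 * y + c - N) / (N + c)) ^ 2 =
      (2 / (N + c)) ^ 2 * ((N - y) * (y + c)) := by
    field_simp
    ring
  refine ((Real.hasDerivAt_arcsin hlower.ne' hupper.ne).comp y haffine).congr_deriv ?_
  have : 0 < √(N - y) := Real.sqrt_pos.2 (sub_pos.2 hyN)
  have : 0 < √(y + c) := by positivity
  rw [hsq, Real.sqrt_mul (by positivity), Real.sqrt_sq (by positivity),
    Real.sqrt_mul (sub_pos.2 hyN).le]
  unfold invSqrt
  field_simp

lemma intervalIntegrable_invSqrt_conv (hN : 0 < N) {c : ℝ} (hc : 0 ≤ c) :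
    IntervalIntegrable (fun y => invSqrt (N - y) * invSqrt (y + c)) volume 0 N := by
  refine intervalIntegrable_deriv_of_nonneg
    (g := fun t => Real.arcsin ((2 * t + c - N) / (N + c))) (by fun_prop) ?_
    fun y _ => mul_nonneg (invSqrt_nonneg _) (invSqrt_nonneg _)
  rw [min_eq_left hN.le, max_eq_right hN.le]
  exact fun y hy => hasDerivAt_arcsin_affine hc hy

lemma integral_invSqrt_conv (hN : 0 < N) {c : ℝ} (hc : 0 ≤ c) :
    ∫ y in 0..N, invSqrt (N - y) * invSqrt (y + c) =
      π / 2 - Real.arcsin ((c - N) / (N + c)) := by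
  rw [integral_eq_sub_of_hasDerivAt_of_le hN.le (by fun_prop)
    (fun y hy => hasDerivAt_arcsin_affine hc hy) (intervalIntegrable_invSqrt_conv hN hc)]
  have hone : (2 * N + c - N) / (N + c) = 1 := by
    rw [div_eq_one_iff_eq (by positivity)]
    ring
  rw [hone, Real.arcsin_one, mul_zero, zero_add]

lemma intervalIntegrable_invSqrt_conv_self (hN : 0 < N) :
    IntervalIntegrable (fun y => invSqrt (N - y) * invSqrt y) volume 0 N := by
  simpa only [add_zero] using intervalIntegrable_invSqrt_conv hN le_rfl

lemma integral_invSqrt_conv_self (hN : 0 < N) :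
    ∫ y in 0..N, invSqrt (N - y) * invSqrt y = π := by
  have hconv := integral_invSqrt_conv hN le_rfl
  simp only [add_zero] at hconv
  rw [hconv, zero_sub, neg_div, div_self hN.ne', Real.arcsin_neg_one]
  ring

lemma intervalIntegrable_invSqrt_sub_mul (hN : 0 < N) {φ : ℝ → ℝ} (hφ : Measurable φ) {C : ℝ}
    (hle : ∀ y ∈ Set.Ioo 0 N, |φ y| ≤ C * invSqrt y) :
    IntervalIntegrable (fun y => invSqrt (N - y) * φ y) volume 0 N := by
  have := measurable_invSqrt
  refine intervalIntegrable_of_abs_le hN.le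
    ((intervalIntegrable_invSqrt_conv_self hN).const_mul C)
    (Measurable.aestronglyMeasurable (by fun_prop)) fun y hy => ?_
  rw [abs_mul, abs_of_nonneg (invSqrt_nonneg _), mul_left_comm]
  exact mul_le_mul_of_nonneg_left (hle y hy) (invSqrt_nonneg _)

lemma mul_invSqrt_self (y : ℝ) : y * invSqrt y = √y := by
  rw [invSqrt, mul_one_div, Real.div_sqrt]

lemma intervalIntegrable_invSqrt_sub_mul_sqrt (hN : 0 < N) :
    IntervalIntegrable (fun y => invSqrt (N - y) * √y) volume 0 N := by
  refine intervalIntegrable_invSqrt_sub_mul hN (by fun_prop) (C := N) fun y hy => ?_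
  rw [abs_of_nonneg (Real.sqrt_nonneg _), ← mul_invSqrt_self]
  exact mul_le_mul_of_nonneg_right hy.2.le (invSqrt_nonneg _)

/-- By the symmetry `y ↦ N - y` the integral is half that of
`(N - y)^{-1/2} y^{1/2} + (N - y)^{1/2} y^{-1/2} = N (N - y)^{-1/2} y^{-1/2}`. -/
lemma integral_invSqrt_sub_mul_sqrt (hN : 0 < N) :
    ∫ y in 0..N, invSqrt (N - y) * √y = N * π / 2 := by
  have hint := intervalIntegrable_invSqrt_sub_mul_sqrt hN
  have hflip := (hint.comp_sub_left N).symm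
  have hsymm := integral_comp_sub_left (a := 0) (b := N) (fun y => invSqrt (N - y) * √y) N
  simp only [sub_sub_cancel, sub_self, sub_zero] at hflip hsymm
  have hsum : ∫ y in 0..N, (invSqrt (N - y) * √y + invSqrt y * √(N - y)) = N * π := by
    rw [← integral_invSqrt_conv_self hN, ← intervalIntegral.integral_const_mul]
    refine integral_congr fun y _ => ?_
    simp only [← mul_invSqrt_self]
    ring
  rw [integral_add hint hflip, hsymm] at hsum
  linarith

lemma abs_zetaHalf_le {y : ℝ} (hy : 0 < y) : |zetaHalf y| ≤ (2 * y + 2) * invSqrt y := by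
  have hsqrt := mul_invSqrt_self y
  have := zetaHalf_add_two_mul_sqrt_nonneg hy
  have := zetaHalf_add_two_mul_sqrt_le hy
  have := Real.sqrt_nonneg y
  have := invSqrt_nonneg y
  rw [abs_le]
  constructor <;> linarith

/-- The convolution of `x^{-1/2}` with `ζ(1/2, x)` on the positive half-line. -/
noncomputable def zetaConv (N : ℝ) : ℝ := ∫ y in 0..N, invSqrt (N - y) * zetaHalf y

lemma intervalIntegrable_zetaConv (hN : 0 < N) :
    IntervalIntegrable (fun y => invSqrt (N - y) * zetaHalf y) volume 0 N := by
  refine intervalIntegrable_invSqrt_sub_mul hN measurable_zetaHalf (C := 2 * N + 2)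
    fun y hy => (abs_zetaHalf_le hy.1).trans ?_
  gcongr
  exacts [invSqrt_nonneg y, hy.2.le]

lemma le_zetaConv (hN : 0 < N) : -(N * π) + π / 2 ≤ zetaConv N := by
  have hsqrt := (intervalIntegrable_invSqrt_sub_mul_sqrt hN).const_mul (-2)
  have hinv := (intervalIntegrable_invSqrt_conv_self hN).const_mul (1 / 2)
  have hle := integral_mono_on_of_le_Ioo hN.le (hsqrt.add hinv) (intervalIntegrable_zetaConv hN)
    fun y hy => by
      have hzeta : -2 * √y + 1 / 2 * invSqrt y ≤ zetaHalf y := by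
        have := tsum_trapezoidError_nonneg hy.1
        unfold zetaHalf
        linarith
      linarith [mul_le_mul_of_nonneg_left hzeta (invSqrt_nonneg (N - y))]
  rw [integral_add hsqrt hinv, intervalIntegral.integral_const_mul,
    intervalIntegral.integral_const_mul, integral_invSqrt_sub_mul_sqrt hN,
    integral_invSqrt_conv_self hN] at hle
  unfold zetaConv
  linarith

lemma zetaConv_le (hN : 0 < N) :
    zetaConv N ≤ -(N * π) + (π + Real.arcsin ((1 - N) / (N + 1))) := by
  have hsqrt := (intervalIntegrable_invSqrt_sub_mul_sqrt hN).const_mul (-2)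
  have hinv := (intervalIntegrable_invSqrt_conv_self hN).const_mul (3 / 2)
  have hshift := intervalIntegrable_invSqrt_conv hN zero_le_one
  have hle := integral_mono_on_of_le_Ioo hN.le (intervalIntegrable_zetaConv hN)
    ((hsqrt.add hinv).sub hshift) fun y hy => by
      have hzeta : zetaHalf y ≤ -2 * √y + 3 / 2 * invSqrt y - invSqrt (y + 1) := by
        have := tsum_trapezoidError_le hy.1
        unfold zetaHalf
        linarith
      linarith [mul_le_mul_of_nonneg_left hzeta (invSqrt_nonneg (N - y))]
  rw [integral_sub (hsqrt.add hinv) hshift, integral_add hsqrt hinv,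
    intervalIntegral.integral_const_mul, intervalIntegral.integral_const_mul,
    integral_invSqrt_sub_mul_sqrt hN, integral_invSqrt_conv_self hN,
    integral_invSqrt_conv hN zero_le_one] at hle
  unfold zetaConv
  linarith

lemma tendsto_zetaConv_add :
    Tendsto (fun N : ℕ => zetaConv N + N * π) atTop (𝓝 (π / 2)) := by
  have hratio : Tendsto (fun N : ℕ => (1 - (N : ℝ)) / (N + 1)) atTop (𝓝 (-1)) := by
    have hlim : Tendsto (fun N : ℕ => -1 + 2 * (1 / ((N : ℝ) + 1))) atTop (𝓝 (-1 + 2 * 0)) :=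
      (tendsto_one_div_add_atTop_nhds_zero_nat.const_mul 2).const_add (-1)
    rw [mul_zero, add_zero] at hlim
    refine hlim.congr fun N => ?_
    field_simp
    ring
  have hupper := ((Real.continuous_arcsin.tendsto (-1)).comp hratio).const_add π
  rw [Real.arcsin_neg_one, ← sub_eq_add_neg, sub_half] at hupper
  refine tendsto_of_tendsto_of_tendsto_of_le_of_le' tendsto_const_nhds hupper ?_ ?_ <;>
    filter_upwards [eventually_gt_atTop 0] with N hN
  · linarith [le_zetaConv (Nat.cast_pos.2 hN)]
  · simp only [Function.comp_apply]
    linarith [zetaConv_le (Nat.cast_pos.2 hN)]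

lemma integral_one_sub_eq_integral (N : ℝ) :
    ∫ x in 0..1, zetaHalf (1 - x) * invSqrt (x + N) =
      ∫ y in 0..1, invSqrt (N + 1 - y) * zetaHalf y := by
  have hflip := integral_comp_sub_left (a := 0) (b := 1)
    (fun y => invSqrt (N + 1 - y) * zetaHalf y) 1
  rw [sub_self, sub_zero] at hflip
  rw [← hflip]
  refine integral_congr fun x _ => ?_
  rw [mul_comm]
  ring_nf

/-- Split at `y = 1` and use `ζ(1/2, y + 1) = ζ(1/2, y) - y^{-1/2}` on the part `y > 1`. -/
lemma zetaConv_add_one (hN : 0 < N) :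
    zetaConv (N + 1) =
      zetaConv N - π + ∫ x in 0..1, zetaHalf (1 - x) * invSqrt (x + N) := by
  have hint := intervalIntegrable_zetaConv (N := N + 1) (by positivity)
  have hone : (1 : ℝ) ∈ Set.uIcc 0 (N + 1) := Set.mem_uIcc_of_le zero_le_one (by linarith)
  have htail : ∫ y in 1..N + 1, invSqrt (N + 1 - y) * zetaHalf y = zetaConv N - π := by
    have hshift := integral_comp_add_right (a := 0) (b := N)
      (fun y => invSqrt (N + 1 - y) * zetaHalf y) 1
    rw [zero_add] at hshift
    rw [← hshift, ← integral_invSqrt_conv_self hN, zetaConv,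
      ← integral_sub (intervalIntegrable_zetaConv hN) (intervalIntegrable_invSqrt_conv_self hN)]
    refine integral_congr fun y _ => ?_
    rw [add_sub_add_right_eq_sub, zetaHalf_eq_invSqrt_add y]
    ring
  rw [integral_one_sub_eq_integral, ← htail, add_comm (∫ _ in _.._, _), zetaConv]
  exact (integral_add_adjacent_intervals (hint.mono_set (Set.uIcc_subset_uIcc_left hone))
    (hint.mono_set (Set.uIcc_subset_uIcc_right hone))).symm

lemma sum_integral_one_sub {N : ℕ} (hN : 1 ≤ N) :
    ∑ n ∈ range N, (∫ x in 0..1, zetaHalf (1 - x) * invSqrt (x + n)) =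
      zetaConv N + N * π - π := by
  induction N, hN using Nat.le_induction with
  | base => simp [zetaConv, integral_one_sub_eq_integral]
  | succ N hN ih =>
    have hrec := zetaConv_add_one (N := N) (by positivity)
    rw [sum_range_succ, ih]
    push_cast
    linarith

lemma intervalIntegrable_zetaHalf : IntervalIntegrable zetaHalf volume 0 1 := by
  refine intervalIntegrable_of_abs_le zero_le_one ((intervalIntegrable_invSqrt 0 1).const_mul 4)
    measurable_zetaHalf.aestronglyMeasurable fun y hy => (abs_zetaHalf_le hy.1).trans ?_
  gcongr
  exacts [invSqrt_nonneg y, by linarith [hy.2]]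

theorem integral_zetaHalfMod_mul_neg :
    ∫ x in 0..1, zetaHalfMod x * zetaHalfMod (-x) = -(π / 2) := by
  have hzeta : ∫ x in 0..1, zetaHalfMod x * zetaHalfMod (-x) =
      ∫ x in 0..1, zetaHalf (1 - x) * zetaHalf x := by
    refine integral_congr_Ioo_of_le zero_le_one fun x hx => ?_
    rw [zetaHalfMod_eq_zetaHalf hx.1 hx.2.le, ← zetaHalfMod_add_intCast (-x) 1, Int.cast_one,
      neg_add_eq_sub, zetaHalfMod_eq_zetaHalf (sub_pos.2 hx.2) (by linarith [hx.1]), mul_comm]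
  have hint : IntervalIntegrable (fun x => zetaHalf (1 - x)) volume 0 1 := by
    simpa using (intervalIntegrable_zetaHalf.comp_sub_left 1).symm
  have hint' : IntervalIntegrable (fun x => zetaHalf (1 - x) * invSqrt x) volume 0 1 := by
    simpa [mul_comm] using ((intervalIntegrable_zetaConv one_pos).comp_sub_left 1).symm
  have hmean : ∫ x in 0..1, zetaHalf (1 - x) = 0 := by
    rw [integral_comp_sub_left, sub_self, sub_zero, integral_zetaHalf]
  have hsum := tendsto_sum_integral_mul_invSqrt_add hint hint'
  have hconv := tendsto_zetaConv_add.sub_const π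
  rw [hmean] at hsum
  rw [hzeta, show -(π / 2) = π / 2 - π by ring]
  refine tendsto_nhds_unique hsum (hconv.congr' ?_)
  filter_upwards [eventually_ge_atTop 1] with N hN
  rw [sum_integral_one_sub hN, mul_zero, sub_zero]

end Convolution

section Trapezoid

variable {f : ℝ → ℝ}

lemma integral_add_sub_mul (a A B : ℝ) : ∫ t in a..a + 1, (A + (t - a) * B) = A + B / 2 := by
  have hlin : IntervalIntegrable (fun t : ℝ => t * B) volume 0 1 :=
    Continuous.intervalIntegrable (by fun_prop) _ _
  have hshift := integral_comp_sub_right (a := a) (b := a + 1) (fun t => A + t * B) a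
  rw [sub_self, add_sub_cancel_left] at hshift
  rw [hshift, integral_add intervalIntegrable_const hlin, intervalIntegral.integral_mul_const,
    integral_id, intervalIntegral.integral_const, smul_eq_mul]
  ring

lemma intervalIntegrable_add_sub_mul (a A B : ℝ) :
    IntervalIntegrable (fun t => A + (t - a) * B) volume a (a + 1) :=
  Continuous.intervalIntegrable (by fun_prop) _ _

lemma half_add_le_integral_of_concaveOn {a : ℝ} (hf : ConcaveOn ℝ (Set.Icc a (a + 1)) f)
    (hint : IntervalIntegrable f volume a (a + 1)) :
    (f a + f (a + 1)) / 2 ≤ ∫ t in a..a + 1, f t := by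
  have hle := integral_mono_on_of_le_Ioo (le_add_of_nonneg_right zero_le_one)
    (intervalIntegrable_add_sub_mul a (f a) (f (a + 1) - f a)) hint fun t ht => by
      have hslope := hf.slope_anti_adjacent (Set.left_mem_Icc.2 (ht.1.trans ht.2).le)
        (Set.right_mem_Icc.2 (ht.1.trans ht.2).le) ht.1 ht.2
      rw [div_le_div_iff₀ (sub_pos.2 ht.2) (sub_pos.2 ht.1)] at hslope
      linarith
  rw [integral_add_sub_mul] at hle
  linarith

lemma integral_le_of_concaveOn {a : ℝ} (hf : ConcaveOn ℝ (Set.Icc (a - 1) (a + 1)) f)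
    (hint : IntervalIntegrable f volume a (a + 1)) :
    ∫ t in a..a + 1, f t ≤ f a + (f a - f (a - 1)) / 2 := by
  rw [← integral_add_sub_mul]
  refine integral_mono_on_of_le_Ioo (le_add_of_nonneg_right zero_le_one) hint
    (intervalIntegrable_add_sub_mul _ _ _) fun t ht => ?_
  have hslope := hf.slope_anti_adjacent (Set.left_mem_Icc.2 (by linarith))
    ⟨by linarith [ht.1], ht.2.le⟩ (sub_one_lt a) ht.1
  rw [sub_sub_cancel, div_one, div_le_iff₀ (sub_pos.2 ht.1)] at hslope
  linarith

lemma intervalIntegrable_of_monotoneOn_Ici (hmono : MonotoneOn f (Set.Ici 0)) {a b : ℝ}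
    (ha : 0 ≤ a) (hb : 0 ≤ b) : IntervalIntegrable f volume a b :=
  (hmono.mono fun _ ht => (le_min ha hb).trans ht.1).intervalIntegrable

lemma trapezoid_le_integral (hf : ConcaveOn ℝ (Set.Ici 0) f)
    (hmono : MonotoneOn f (Set.Ici 0)) (N : ℕ) :
    ∑ n ∈ range N, f n + (f N - f 0) / 2 ≤ ∫ t in 0..N, f t := by
  induction N with
  | zero => simp
  | succ N ih =>
    have hint {a b : ℝ} (ha : 0 ≤ a) (hb : 0 ≤ b) : IntervalIntegrable f volume a b :=
      intervalIntegrable_of_monotoneOn_Ici hmono ha hb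
    have hcell := half_add_le_integral_of_concaveOn (a := N)
      (hf.subset (fun _ ht => N.cast_nonneg.trans ht.1) (convex_Icc _ _))
      (hint (by positivity) (by positivity))
    push_cast
    rw [sum_range_succ, ← integral_add_adjacent_intervals (b := (N : ℝ))
      (hint le_rfl (by positivity)) (hint (by positivity) (by positivity))]
    linarith

lemma integral_add_one_le_trapezoid (hf : ConcaveOn ℝ (Set.Ici 0) f)
    (hmono : MonotoneOn f (Set.Ici 0)) (N : ℕ) :
    ∫ t in 0..(N + 1 : ℝ), f t ≤ ∑ n ∈ range (N + 1), f n + (f (N + 1) - f 0) / 2 +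
      (f 1 - f 0) - (f (N + 1) - f N) / 2 := by
  have hint {a b : ℝ} (ha : 0 ≤ a) (hb : 0 ≤ b) : IntervalIntegrable f volume a b :=
    intervalIntegrable_of_monotoneOn_Ici hmono ha hb
  induction N with
  | zero =>
    have hcell := integral_mono_on zero_le_one (hint le_rfl zero_le_one)
      (intervalIntegrable_const (c := f 1)) fun t ht => hmono ht.1 (Set.mem_Ici.2 zero_le_one) ht.2
    norm_num at hcell ⊢
    linarith
  | succ N ih =>
    have hsub : Set.Icc ((N : ℝ) + 1 - 1) (N + 1 + 1) ⊆ Set.Ici 0 := by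
      rw [add_sub_cancel_right]
      exact fun t ht => N.cast_nonneg.trans ht.1
    have hcell := integral_le_of_concaveOn (hf.subset hsub (convex_Icc _ _))
      (hint (by positivity) (by positivity))
    rw [add_sub_cancel_right] at hcell
    push_cast
    rw [sum_range_succ, ← integral_add_adjacent_intervals (b := (N : ℝ) + 1)
      (hint le_rfl (by positivity)) (hint (by positivity) (by positivity))]
    push_cast
    linarith

lemma integral_le_trapezoid_add (hf : ConcaveOn ℝ (Set.Ici 0) f)
    (hmono : MonotoneOn f (Set.Ici 0)) (N : ℕ) :
    ∫ t in 0..N, f t ≤ ∑ n ∈ range N, f n + (f N - f 0) / 2 + (f 1 - f 0) := by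
  have hmono' {a b : ℝ} (ha : 0 ≤ a) (hab : a ≤ b) : f a ≤ f b := hmono ha (ha.trans hab) hab
  cases N with
  | zero => simpa using hmono' le_rfl zero_le_one
  | succ N =>
    have := hmono' N.cast_nonneg (le_add_of_nonneg_right zero_le_one)
    push_cast
    linarith [integral_add_one_le_trapezoid hf hmono N]

end Trapezoid

section LogSum

/-- The sum `∑_{n < N} log (√n + √N)`. Its increments in `N` express the integral over
`[0, 1]` of `(x + N)^{-1/2} ∑_{n < N} (x + n)^{-1/2}`. -/
noncomputable def logSum (N : ℕ) : ℝ := ∑ n ∈ range N, Real.log (√n + √N)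

lemma monotoneOn_log_sqrt_add {c : ℝ} (hc : 0 < c) :
    MonotoneOn (fun t => Real.log (√t + c)) (Set.Ici 0) := fun x _ y _ hxy => by
  dsimp only
  gcongr

lemma concaveOn_log_sqrt_add {c : ℝ} (hc : 0 < c) :
    ConcaveOn ℝ (Set.Ici 0) fun t => Real.log (√t + c) := by
  refine ⟨convex_Ici 0, fun x hx y hy a b ha hb hab => ?_⟩
  have hpos (t : ℝ) : √t + c ∈ Set.Ioi 0 := Set.mem_Ioi.2 (by positivity)
  refine (strictConcaveOn_log_Ioi.concaveOn.2 (hpos x) (hpos y) ha hb hab).trans ?_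
  refine Real.log_le_log ((convex_Ioi 0) (hpos x) (hpos y) ha hb hab) ?_
  exact (Real.strictConcaveOn_sqrt.concaveOn.add_const c).2 hx hy ha hb hab

lemma continuous_log_sqrt_add {c : ℝ} (hc : 0 < c) : Continuous fun t => Real.log (√t + c) :=
  Continuous.log (by fun_prop) fun t => by positivity

lemma hasDerivAt_log_sqrt_add_primitive {c t : ℝ} (hc : 0 < c) (ht : 0 < t) :
    HasDerivAt (fun t => (t - c ^ 2) * Real.log (√t + c) + c * √t - t / 2)
      (Real.log (√t + c)) t := by
  have hsqrt := Real.hasDerivAt_sqrt ht.ne'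
  have hlog := (hsqrt.add_const c).log (by positivity)
  refine (((((hasDerivAt_id t).sub_const (c ^ 2)).mul hlog).add (hsqrt.const_mul c)).sub
    ((hasDerivAt_id t).div_const 2)).congr_deriv ?_
  have hfactor : t - c ^ 2 = (√t - c) * (√t + c) := by
    linear_combination -Real.mul_self_sqrt ht.le
  have : 0 < √t := by positivity
  rw [id_eq, hfactor]
  field_simp
  ring

lemma integral_log_sqrt_add {N : ℝ} (hN : 0 < N) :
    ∫ t in 0..N, Real.log (√t + √N) = N / 2 + N * Real.log N / 2 := by
  have hsqrt : 0 < √N := by positivity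
  have hcont := continuous_log_sqrt_add hsqrt
  rw [integral_eq_sub_of_hasDerivAt_of_le hN.le (by fun_prop)
    (fun t ht => hasDerivAt_log_sqrt_add_primitive hsqrt ht.1) (hcont.intervalIntegrable _ _),
    Real.sq_sqrt hN.le, Real.sqrt_zero, zero_add, Real.log_sqrt hN.le, Real.mul_self_sqrt hN.le]
  ring

lemma log_two_mul_sqrt {x : ℝ} (hx : 0 < x) :
    Real.log (√x + √x) = Real.log 2 + Real.log x / 2 := by
  rw [← two_mul, Real.log_mul two_ne_zero (by positivity), Real.log_sqrt hx.le]

lemma abs_logSum_sub_le {N : ℕ} (hN : 0 < N) :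
    |logSum N - (N / 2 + N * Real.log N / 2 - Real.log 2 / 2)| ≤ invSqrt N := by
  have hN' : (0 : ℝ) < N := mod_cast hN
  have hsqrt : 0 < √(N : ℝ) := by positivity
  have hlower := trapezoid_le_integral (concaveOn_log_sqrt_add hsqrt)
    (monotoneOn_log_sqrt_add hsqrt) N
  have hupper := integral_le_trapezoid_add (concaveOn_log_sqrt_add hsqrt)
    (monotoneOn_log_sqrt_add hsqrt) N
  have hfirst : Real.log (1 + √N) - Real.log √N ≤ invSqrt N := by
    rw [← Real.log_div (by positivity) hsqrt.ne']
    refine (Real.log_le_sub_one_of_pos (by positivity)).trans_eq ?_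
    unfold invSqrt
    field_simp
    ring
  rw [integral_log_sqrt_add hN', log_two_mul_sqrt hN', Real.sqrt_zero, zero_add, ← logSum,
    Real.log_sqrt hN'.le] at hlower hupper
  rw [Real.sqrt_one] at hupper
  rw [Real.log_sqrt hN'.le] at hfirst
  have := invSqrt_nonneg N
  rw [abs_le]
  constructor <;> linarith

lemma tendsto_logSum :
    Tendsto (fun N : ℕ => 4 * logSum N - 2 * Real.log N.factorial + Real.log N - 4 * N) atTop
      (𝓝 (-Real.log (8 * π))) := by
  have hsum : Tendsto (fun N : ℕ => logSum N - (N / 2 + N * Real.log N / 2 - Real.log 2 / 2))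
      atTop (𝓝 0) := by
    refine squeeze_zero_norm' ?_ tendsto_invSqrt_natCast
    filter_upwards [eventually_gt_atTop 0] with N hN using abs_logSum_sub_le hN
  have hstirling : Tendsto (fun N : ℕ => Real.log (Stirling.stirlingSeq N)) atTop
      (𝓝 (Real.log √π)) :=
    (Real.continuousAt_log (by positivity)).tendsto.comp Stirling.tendsto_stirlingSeq_sqrt_pi
  have hlim := ((hsum.const_mul 4).sub (hstirling.const_mul 2)).sub_const (3 * Real.log 2)
  have hconst : 4 * 0 - 2 * Real.log √π - 3 * Real.log 2 = -Real.log (8 * π) := by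
    rw [Real.log_sqrt Real.pi_pos.le, Real.log_mul (by norm_num) Real.pi_pos.ne',
      show (8 : ℝ) = 2 ^ 3 by norm_num, Real.log_pow]
    push_cast
    ring
  rw [hconst] at hlim
  refine hlim.congr' ?_
  filter_upwards [eventually_gt_atTop 0] with N hN
  have hN' : (N : ℝ) ≠ 0 := mod_cast hN.ne'
  rw [Stirling.log_stirlingSeq_formula, Real.log_mul two_ne_zero hN',
    Real.log_div hN' (Real.exp_pos 1).ne', Real.log_exp]
  ring

end LogSum

section SquareMean

lemma hasDerivAt_log_sqrt_add_sqrt {a b x : ℝ} (ha : 0 < x + a) (hb : 0 < x + b) :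
    HasDerivAt (fun t => 2 * Real.log (√(t + a) + √(t + b)))
      (invSqrt (x + a) * invSqrt (x + b)) x := by
  have hsqrt {c : ℝ} (hc : 0 < x + c) : HasDerivAt (fun t => √(t + c)) (1 / (2 * √(x + c))) x :=
    ((hasDerivAt_id x).add_const c).sqrt hc.ne'
  have : 0 < √(x + a) := Real.sqrt_pos.2 ha
  have : 0 < √(x + b) := Real.sqrt_pos.2 hb
  have hne : √(x + a) + √(x + b) ≠ 0 := by positivity
  refine ((((hsqrt ha).fun_add (hsqrt hb)).log hne).const_mul 2).congr_deriv ?_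
  unfold invSqrt
  field_simp
  ring

lemma continuousOn_log_sqrt_add_sqrt (a : ℝ) {b : ℝ} (hb : 0 < b) :
    ContinuousOn (fun t => 2 * Real.log (√(t + a) + √(t + b))) (Set.Icc 0 1) := by
  refine (ContinuousOn.log (by fun_prop) fun t ht => ?_).const_mul 2
  have : 0 < √(t + b) := Real.sqrt_pos.2 (add_pos_of_nonneg_of_pos ht.1 hb)
  positivity

lemma intervalIntegrable_invSqrt_add_mul {a b : ℝ} (ha : 0 ≤ a) (hb : 0 < b) :
    IntervalIntegrable (fun x => invSqrt (x + a) * invSqrt (x + b)) volume 0 1 := by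
  refine intervalIntegrable_deriv_of_nonneg
    (g := fun t => 2 * Real.log (√(t + a) + √(t + b))) ?_ ?_
    fun x _ => mul_nonneg (invSqrt_nonneg _) (invSqrt_nonneg _)
  · rw [Set.uIcc_of_le zero_le_one]
    exact continuousOn_log_sqrt_add_sqrt a hb
  · rw [min_eq_left zero_le_one, max_eq_right zero_le_one]
    exact fun x hx => hasDerivAt_log_sqrt_add_sqrt (add_pos_of_pos_of_nonneg hx.1 ha)
      (add_pos hx.1 hb)

lemma integral_invSqrt_add_mul {a b : ℝ} (ha : 0 ≤ a) (hb : 0 < b) :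
    ∫ x in 0..1, invSqrt (x + a) * invSqrt (x + b) =
      2 * Real.log (√(a + 1) + √(b + 1)) - 2 * Real.log (√a + √b) := by
  rw [integral_eq_sub_of_hasDerivAt_of_le zero_le_one (continuousOn_log_sqrt_add_sqrt a hb)
    (fun x hx => hasDerivAt_log_sqrt_add_sqrt (add_pos_of_pos_of_nonneg hx.1 ha)
      (add_pos hx.1 hb)) (intervalIntegrable_invSqrt_add_mul ha hb)]
  simp only [zero_add, add_comm (1 : ℝ)]

/-- The truncation `∑_{n < N} (x + n)^{-1/2}` of the series for `ζ(1/2, x)`. -/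
noncomputable def invSqrtSum (N : ℕ) (x : ℝ) : ℝ := ∑ n ∈ range N, invSqrt (x + n)

lemma invSqrtSum_succ_sq (N : ℕ) (x : ℝ) :
    invSqrtSum (N + 1) x ^ 2 - 1 / x = invSqrtSum N x ^ 2 - 1 / x +
      (2 * ∑ n ∈ range N, invSqrt (x + n) * invSqrt (x + N) +
        invSqrt (x + N) * invSqrt (x + N)) := by
  rw [invSqrtSum, sum_range_succ, ← invSqrtSum, ← sum_mul, ← invSqrtSum]
  ring

lemma logSum_succ (N : ℕ) :
    logSum (N + 1) = Real.log (N + 1) / 2 +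
      ∑ n ∈ range N, Real.log (√(n + 1 : ℝ) + √(N + 1 : ℝ)) := by
  have hlog : Real.log √(N + 1 : ℝ) = Real.log (N + 1) / 2 := Real.log_sqrt (by positivity)
  rw [logSum, sum_range_succ']
  push_cast
  rw [Real.sqrt_zero, zero_add, hlog, add_comm]

lemma intervalIntegrable_sum_invSqrt_mul {N : ℕ} (hN : 0 < N) :
    IntervalIntegrable (fun x => ∑ n ∈ range N, invSqrt (x + n) * invSqrt (x + N)) volume 0 1 := by
  simpa only [Finset.sum_fn] using IntervalIntegrable.sum (range N) fun n _ =>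
    intervalIntegrable_invSqrt_add_mul n.cast_nonneg (Nat.cast_pos.2 hN)

lemma integral_sum_invSqrt_mul {N : ℕ} (hN : 0 < N) :
    ∫ x in 0..1, ∑ n ∈ range N, invSqrt (x + n) * invSqrt (x + N) =
      2 * logSum (N + 1) - Real.log (N + 1) - 2 * logSum N := by
  have hN' : (0 : ℝ) < N := Nat.cast_pos.2 hN
  rw [integral_finsetSum fun n _ => intervalIntegrable_invSqrt_add_mul n.cast_nonneg hN',
    sum_congr rfl fun n _ => integral_invSqrt_add_mul n.cast_nonneg hN', sum_sub_distrib,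
    ← mul_sum, ← mul_sum, ← logSum, logSum_succ]
  ring

lemma invSqrtSum_one_sq {x : ℝ} (hx : 0 ≤ x) : invSqrtSum 1 x ^ 2 - 1 / x = 0 := by
  rw [invSqrtSum, sum_range_one, Nat.cast_zero, add_zero, invSqrt_sq hx, sub_self]

lemma intervalIntegrable_invSqrtSum_sq {N : ℕ} (hN : 1 ≤ N) :
    IntervalIntegrable (fun x => invSqrtSum N x ^ 2 - 1 / x) volume 0 1 := by
  induction N, hN using Nat.le_induction with
  | base =>
    refine intervalIntegrable_const.congr_uIoo (f := fun _ => 0) fun x hx => ?_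
    rw [Set.uIoo_of_le zero_le_one] at hx
    exact (invSqrtSum_one_sq hx.1.le).symm
  | succ N hN ih =>
    simp only [invSqrtSum_succ_sq]
    have hN' : (0 : ℝ) < N := Nat.cast_pos.2 hN
    exact ih.add (((intervalIntegrable_sum_invSqrt_mul hN).const_mul 2).add
      (intervalIntegrable_invSqrt_add_mul hN'.le hN'))

theorem integral_invSqrtSum_sq {N : ℕ} (hN : 1 ≤ N) :
    ∫ x in 0..1, (invSqrtSum N x ^ 2 - 1 / x) =
      4 * logSum N - 2 * Real.log N.factorial + Real.log N := by
  induction N, hN using Nat.le_induction with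
  | base =>
    rw [integral_congr_Ioo_of_le zero_le_one fun x hx => invSqrtSum_one_sq hx.1.le]
    simp [logSum]
  | succ N hN ih =>
    have hN' : (0 : ℝ) < N := Nat.cast_pos.2 hN
    have hself := intervalIntegrable_invSqrt_add_mul hN'.le hN'
    have hcross := (intervalIntegrable_sum_invSqrt_mul hN).const_mul 2
    have hfactorial : Real.log ((N + 1).factorial : ℝ) =
        Real.log (N + 1) + Real.log N.factorial := by
      rw [Nat.factorial_succ, Nat.cast_mul, Nat.cast_succ, Real.log_mul (by positivity)
        (by positivity)]
    simp only [invSqrtSum_succ_sq]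
    rw [integral_add (intervalIntegrable_invSqrtSum_sq hN) (hcross.add hself), ih,
      integral_add hcross hself, intervalIntegral.integral_const_mul, integral_sum_invSqrt_mul hN,
      integral_invSqrt_add_mul hN'.le hN', log_two_mul_sqrt hN', log_two_mul_sqrt (by positivity),
      hfactorial]
    push_cast
    ring

lemma tsum_trapezoidError_le_cube {y : ℝ} (hy : 0 < y) :
    ∑' m : ℕ, trapezoidError (y + m) ≤ invSqrt y ^ 3 / 2 := by
  refine (tsum_trapezoidError_le hy).trans ?_
  have hle : √y ≤ √(y + 1) := Real.sqrt_le_sqrt (by linarith)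
  have : 0 < √y := by positivity
  rw [invSqrt_sub_invSqrt_add_one hy, invSqrt, div_pow, one_pow, div_div]
  refine one_div_le_one_div_of_le (by positivity) ?_
  calc √y ^ 3 * 2 = √y * √y * (√y + √y) := by ring
    _ ≤ √y * √(y + 1) * (√y + √(y + 1)) := by gcongr

/-- With `r = y^{-1/2}` one has `ζ(1/2, y) = -2 √y + r / 2 + e`, `0 ≤ e ≤ r³ / 2`. -/
lemma abs_zetaHalf_sq_sub_le {y : ℝ} (hy : 1 ≤ y) :
    |zetaHalf y ^ 2 - (4 * y - 2)| ≤ 2 / y := by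
  have hy0 : 0 < y := by positivity
  set r := invSqrt y with hr
  set e := ∑' m : ℕ, trapezoidError (y + m) with he
  have hr0 : 0 < r := invSqrt_pos hy0
  have hr1 : r ≤ 1 := by simpa only [invSqrt_one] using invSqrt_le_invSqrt one_pos hy
  have hmul : √y * r = 1 := sqrt_mul_invSqrt hy0
  have hsq : √y * √y = y := Real.mul_self_sqrt hy0.le
  have he0 : 0 ≤ e := tsum_trapezoidError_nonneg hy0
  have he3 : e ≤ r ^ 3 / 2 := tsum_trapezoidError_le_cube hy0
  have hexpand : zetaHalf y ^ 2 - (4 * y - 2) = r ^ 2 / 4 - 4 * (√y * e) + r * e + e ^ 2 := by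
    rw [zetaHalf, ← hr, ← he]
    linear_combination 4 * hsq - 2 * hmul
  have hinv : 2 / y = 2 * r ^ 2 := by rw [invSqrt_sq hy0.le, mul_one_div]
  have hse : √y * e ≤ r ^ 2 / 2 := by
    calc √y * e ≤ √y * (r ^ 3 / 2) := by gcongr
      _ = r ^ 2 / 2 := by linear_combination r ^ 2 / 2 * hmul
  have her : e ≤ r / 2 := by nlinarith
  have hse0 : 0 ≤ √y * e := by positivity
  rw [hexpand, hinv, abs_le]
  constructor <;> nlinarith

lemma intervalIntegrable_zetaHalf_add_sq {N : ℕ} (hN : 0 < N) :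
    IntervalIntegrable (fun x => zetaHalf (x + N) ^ 2) volume 0 1 := by
  have hzeta : IntervalIntegrable (fun x => zetaHalf (x + N)) volume 0 1 := by
    simpa only [one_mul] using
      intervalIntegrable_mul_zetaHalf_add (φ := fun _ => 1) intervalIntegrable_const hN
  simpa only [sq] using intervalIntegrable_mul_zetaHalf_add hzeta hN

lemma tendsto_integral_zetaHalf_add_sq :
    Tendsto (fun N : ℕ => (∫ x in 0..1, zetaHalf (x + N) ^ 2) - 4 * N) atTop (𝓝 0) := by
  refine squeeze_zero_norm' ?_ (tendsto_const_div_atTop_nhds_zero_nat 2)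
  filter_upwards [eventually_ge_atTop 1] with N hN
  have hsq := intervalIntegrable_zetaHalf_add_sq hN
  have hlin : IntervalIntegrable (fun x : ℝ => 4 * (x + N) - 2) volume 0 1 :=
    Continuous.intervalIntegrable (by fun_prop) _ _
  have hmain : ∫ x in (0 : ℝ)..1, (4 * (x + N) - 2) = 4 * N := by
    rw [integral_comp_add_right (fun x => 4 * x - 2), integral_sub
      (Continuous.intervalIntegrable (by fun_prop) _ _) intervalIntegrable_const,
      intervalIntegral.integral_const_mul, integral_id, intervalIntegral.integral_const,
      smul_eq_mul]
    ring
  rw [← hmain, ← integral_sub hsq hlin]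
  refine (intervalIntegral.norm_integral_le_of_norm_le_const (C := 2 / N)
    fun x hx => ?_).trans_eq (by simp)
  rw [Set.uIoc_of_le zero_le_one] at hx
  have hN' : (1 : ℝ) ≤ N := mod_cast hN
  refine (abs_zetaHalf_sq_sub_le (by linarith [hx.1])).trans ?_
  gcongr
  exact le_add_of_nonneg_left hx.1.le

lemma regularizedIntegral_one_one_eq_add {N : ℕ} (hN : 1 ≤ N) :
    regularizedIntegral 1 1 = (∫ x in 0..1, (invSqrtSum N x ^ 2 - 1 / x)) +
      2 * (∫ x in 0..1, zetaHalf x * zetaHalf (x + N)) - ∫ x in 0..1, zetaHalf (x + N) ^ 2 := by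
  have hsum := intervalIntegrable_invSqrtSum_sq hN
  have hcross :=
    (intervalIntegrable_mul_zetaHalf_add intervalIntegrable_zetaHalf hN).const_mul 2
  rw [← intervalIntegral.integral_const_mul, ← integral_add hsum hcross,
    ← integral_sub (hsum.add hcross) (intervalIntegrable_zetaHalf_add_sq hN)]
  refine integral_congr_Ioo_of_le zero_le_one fun x hx => ?_
  rw [Nat.cast_one, one_mul, zetaHalfMod_eq_zetaHalf hx.1 hx.2.le,
    zeroPole_of_lt one_pos hx.1 (by simpa using hx.2) (by simpa using hx.2)]
  have hsplit : zetaHalf x = invSqrtSum N x + zetaHalf (x + N) := zetaHalf_eq_sum_add x N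
  rw [Nat.cast_one, one_mul, Real.sqrt_one, one_mul, hsplit]
  ring

theorem regularizedIntegral_one_one : regularizedIntegral 1 1 = -Real.log (8 * π) := by
  have hcross := (tendsto_integral_mul_zetaHalf_add intervalIntegrable_zetaHalf).const_mul 2
  simp only [integral_zetaHalf, mul_zero, add_zero] at hcross
  have hlim := (tendsto_logSum.add hcross).sub tendsto_integral_zetaHalf_add_sq
  rw [add_zero, sub_zero] at hlim
  refine tendsto_nhds_unique (tendsto_const_nhds.congr' ?_) hlim
  filter_upwards [eventually_ge_atTop 1] with N hN
  rw [regularizedIntegral_one_one_eq_add hN, integral_invSqrtSum_sq hN]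
  ring

end SquareMean

section MainTerm

variable {q h k : ℕ}

lemma lt_of_four_mul_mul_le (hh : 0 < h) (hk : 0 < k) (hhkq : 4 * h * k ≤ q) : h < q := by
  nlinarith

lemma one_le_log_of_four_mul_mul_le (hh : 0 < h) (hk : 0 < k) (hhkq : 4 * h * k ≤ q) :
    1 ≤ Real.log q := by
  have hq : 4 ≤ q := by nlinarith [Nat.mul_pos hh hk]
  have hq' : (4 : ℝ) ≤ q := mod_cast hq
  rw [Real.le_log_iff_exp_le (by positivity)]
  linarith [Real.exp_one_lt_d9]

lemma one_le_sqrt_add (hh : 0 < h) : 1 ≤ √((h : ℝ) + k) :=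
  Real.one_le_sqrt.2 (le_add_of_le_of_nonneg (Nat.one_le_cast.2 hh) k.cast_nonneg)

lemma riemannError_le (hh : 0 < h) (hk : 0 < k) (hhkq : 4 * h * k ≤ q) :
    15680 * (√(q * (h + k)) * (1 + Real.log q)) + 9 + 2 * √(h + k) ≤
      31371 * (√q * (√(h + k) * Real.log q)) := by
  have hlog := one_le_log_of_four_mul_mul_le hh hk hhkq
  have hsqrt : 1 ≤ √((h : ℝ) + k) := one_le_sqrt_add hh
  have hsqrtq : 1 ≤ √(q : ℝ) :=
    Real.one_le_sqrt.2 (Nat.one_le_cast.2 (hh.trans (lt_of_four_mul_mul_le hh hk hhkq)))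
  have hsL : √((h : ℝ) + k) ≤ √q * (√(h + k) * Real.log q) := by
    calc √((h : ℝ) + k) = 1 * (√(h + k) * 1) := by ring
      _ ≤ √q * (√(h + k) * Real.log q) := by gcongr
  have hrs : √(q : ℝ) * √(h + k) ≤ √q * (√(h + k) * Real.log q) := by
    gcongr
    exact le_mul_of_one_le_right (by positivity) hlog
  rw [Real.sqrt_mul q.cast_nonneg]
  linarith

theorem abs_corrSum_neg_sub_le (hq : q.Prime) (hh : 0 < h) (hk : 0 < k) (hhk : h.Coprime k)
    (hhkq : 4 * h * k ≤ q) :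
    |corrSum (-h) k q - q / √(h * k) * -(π / 2)| ≤
      31371 * (√q * (√(h + k) * Real.log q)) := by
  have hhq := lt_of_four_mul_mul_le hh hk hhkq
  have hkq := lt_of_four_mul_mul_le hk hh (by linarith)
  have herror := (hasRiemannError_opposite hh hk hhk
    (hq.coprime_iff_not_dvd.2 (Nat.not_dvd_of_pos_of_lt hh hhq))
    (hq.coprime_iff_not_dvd.2 (Nat.not_dvd_of_pos_of_lt hk hkq)) hhkq).abs_sub_le
  have hcorr : corrSum (-h) k q =
      ∑ n ∈ Ico 1 q, zetaHalfMod (k * (n / q)) * zetaHalfMod (-(h * (n / q))) := by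
    refine sum_congr rfl fun n _ => ?_
    push_cast
    rw [neg_mul, mul_comm]
  rw [integral_opposite hh hk hhk, integral_zetaHalfMod_mul_neg, ← hcorr, ← mul_assoc,
    mul_one_div] at herror
  have := Real.sqrt_nonneg ((h : ℝ) + k)
  linarith [riemannError_le hh hk hhkq]

theorem abs_corrSum_sub_le (hq : q.Prime) (hh : 0 < h) (hk : 0 < k) (hhk : h.Coprime k)
    (hhkq : 4 * h * k ≤ q) :
    |corrSum h k q - q / √(h * k) *
      (Real.log (q / (h * k)) + Real.eulerMascheroniConstant - Real.log (8 * π))| ≤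
        31371 * (√q * (√(h + k) * Real.log q)) := by
  have hhq := lt_of_four_mul_mul_le hh hk hhkq
  have hkq := lt_of_four_mul_mul_le hk hh (by linarith)
  have hlog : Real.log (q / (h * k)) = Real.log q - Real.log (h * k) :=
    Real.log_div (Nat.cast_ne_zero.2 hq.ne_zero) (by positivity)
  have hcorr : corrSum h k q =
      ∑ n ∈ Ico 1 q, zetaHalfMod (k * (n / q)) * zetaHalfMod (h * (n / q)) :=
    sum_congr rfl fun n _ => mul_comm _ _
  have herror := abs_sum_equal_sub_le hh hk hhk hhq hkq
    (hq.coprime_iff_not_dvd.2 (Nat.not_dvd_of_pos_of_lt hh hhq))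
    (hq.coprime_iff_not_dvd.2 (Nat.not_dvd_of_pos_of_lt hk hkq)) hhkq
  rw [regularizedIntegral_one_one, ← sub_eq_add_neg, ← hcorr, ← hlog] at herror
  exact herror.trans (riemannError_le hh hk hhkq)

lemma abs_twisted_sub_le {A B a b D ε : ℝ} (hq : 0 < q) (hA : |A - q / √(h * k) * a| ≤ √q * D)
    (hB : |B - q / √(h * k) * b| ≤ √q * D) (hε : |ε| = 1) :
    |1 / (2 * √q) * (A + ε * B) - 1 / 2 * √(q / (h * k)) * (a + ε * b)| ≤ D := by
  have hq0 : (0 : ℝ) < q := Nat.cast_pos.2 hq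
  have hsq : (√q : ℝ) * √q = q := Real.mul_self_sqrt hq0.le
  have hmain : 1 / (2 * √q) * (A + ε * B) - 1 / 2 * √(q / (h * k)) * (a + ε * b) =
      ((A - q / √(h * k) * a) + ε * (B - q / √(h * k) * b)) / (2 * √q) := by
    have : 0 < √(q : ℝ) := Real.sqrt_pos.2 hq0
    rw [Real.sqrt_div hq0.le]
    field_simp
    linear_combination -(a + ε * b) / √(h * k) * hsq
  have herror : |(A - q / √(h * k) * a) + ε * (B - q / √(h * k) * b)| ≤ √q * D + 1 * (√q * D) := by
    refine (abs_add_le _ _).trans (add_le_add hA ?_)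
    rw [abs_mul, hε, one_mul, one_mul]
    exact hB
  rw [hmain, abs_div, abs_of_pos (by positivity : 0 < 2 * √(q : ℝ)), div_le_iff₀ (by positivity)]
  linarith

theorem abs_corrSum_combination_sub_le (hq : q.Prime) (hh : 0 < h) (hk : 0 < k)
    (hhk : h.Coprime k) (hhkq : 4 * h * k ≤ q) {ε : ℝ} (hε : |ε| = 1) :
    |1 / (2 * √q) * (corrSum h k q + ε * corrSum (-h) k q) - 1 / 2 * √(q / (h * k)) *
      (Real.log (q / (h * k)) + Real.eulerMascheroniConstant - Real.log (8 * π) - ε * π / 2)| ≤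
        31371 * (√(h + k) * Real.log q) := by
  rw [mul_div_assoc ε, sub_eq_add_neg _ (ε * _), ← mul_neg]
  exact abs_twisted_sub_le hq.pos
    ((abs_corrSum_sub_le hq hh hk hhk hhkq).trans_eq (mul_left_comm _ _ _))
    ((abs_corrSum_neg_sub_le hq hh hk hhk hhkq).trans_eq (mul_left_comm _ _ _)) hε

lemma intCast_natCast_ne_zero (hh : 0 < h) (hhq : h < q) : ((h : ℤ) : ZMod q) ≠ 0 := by
  rw [Int.cast_natCast, Ne, ZMod.natCast_eq_zero_iff]
  exact Nat.not_dvd_of_pos_of_lt hh hhq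

end MainTerm

end TwistedMoment

open TwistedMoment

/-- Corollary (Selberg range improvement): asymptotic for the second moment with two
twists in the range `q ≥ 4hk`. -/
theorem two_twists_asymptotic :
    ∃ C : ℝ, 0 < C ∧
      ∀ (q : ℕ) (hq : q.Prime) (h k : ℕ),
        1 ≤ h → h < q → 1 ≤ k → k < q → Nat.Coprime h k → 4 * h * k ≤ q →
        ∀ (ε : ℤ), ε = 1 ∨ ε = -1 →
        haveI : NeZero q := ⟨hq.ne_zero⟩
        ‖Mpm ε h k q -
            ((1/2 * Real.sqrt ((q : ℝ)/(h*k)) *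
              (Real.log ((q : ℝ)/(h*k)) + Real.eulerMascheroniConstant
                - Real.log (8*π) - (ε : ℝ) * π/2) : ℝ) : ℂ)‖
          ≤ C * Real.sqrt ((h : ℝ) + k) * Real.log q := by
  refine ⟨31389, by norm_num, fun q hq h k hh hhq hk hkq hhk hhkq ε hε => ?_⟩
  have : Fact q.Prime := ⟨hq⟩
  have hreduce := norm_Mpm_sub_corrSum_le hε (intCast_natCast_ne_zero hh hhq)
    (intCast_natCast_ne_zero hk hkq)
  have hmain := abs_corrSum_combination_sub_le hq hh hk hhk hhkq (ε := ε)
    (by rcases hε with rfl | rfl <;> simp)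
  have hone : 1 ≤ √((h : ℝ) + k) * Real.log q :=
    one_le_mul_of_one_le_of_one_le (one_le_sqrt_add hh)
      (one_le_log_of_four_mul_mul_le hh hk hhkq)
  rw [← Real.norm_eq_abs, ← Complex.norm_real, Complex.ofReal_sub] at hmain
  refine (norm_sub_le_norm_sub_add_norm_sub _ _ _).trans ((add_le_add hreduce hmain).trans ?_)
  linarith
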